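/- Let 1 < p < ∞, 1 ≤ r ≤ 2, r ≤ t < ∞ with (r < 2 or t > r), and N > 0. There exists a constant C such that for every continuous Littlewood–Paley family (f_i)_{i∈ℤ} with band width N and every jump collection (N_k)_{k≥0}, one has ‖ (Σ_{k≥1} |Σ_{N_{k−1}(x) < i ≤ N_k(x)} f_i(x)|^t)^{1/t} ‖_{L^p(dx)} ≤ C ‖ (Σ_{i∈ℤ} |f_i|^r)^{1/r} ‖_{L^p(ℝ)}. -/

import Mathlib

open MeasureTheory ENNReal
open scoped FourierTransform NNReal

noncomputable section

/-- A jump collection: a sequence of measurable integer-valued functions on `ℝ`,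
nondecreasing in the index. -/
def IsJumpCollection (Nk : ℕ → ℝ → ℤ) : Prop :=
  (∀ k, Measurable (Nk k)) ∧ ∀ (k : ℕ) (x : ℝ), Nk k x ≤ Nk (k + 1) x

/-- A continuous Littlewood–Paley family with band width `Nb`: a sequence of Schwartz
functions whose Fourier transforms are supported in the annuli
`{ξ : 2^(i-Nb) < |ξ| < 2^(i+Nb)}`. -/
def IsContLPFamily (Nb : ℝ) (f : ℤ → SchwartzMap ℝ ℂ) : Prop :=
  ∀ i : ℤ, ∀ ξ : ℝ, 𝓕 (⇑(f i)) ξ ≠ 0 →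
    (2 : ℝ) ^ ((i : ℝ) - Nb) < |ξ| ∧ |ξ| < (2 : ℝ) ^ ((i : ℝ) + Nb)

namespace LPX

/-! ### Basic inequalities -/

lemma iSup_rpow {ι : Type*} (g : ι → ℝ≥0∞) {p : ℝ} (hp : 0 < p) :
    (⨆ i, g i) ^ p = ⨆ i, (g i) ^ p := by
  have := (ENNReal.orderIsoRpow p hp).map_iSup g
  exact this

lemma minkowski_finset {α ι : Type*} [MeasurableSpace α] {μ : Measure α} (s : Finset ι)
    {g : ι → α → ℝ≥0∞} (hg : ∀ i, Measurable (g i)) {p : ℝ} (hp : 1 ≤ p) :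
    (∫⁻ x, (∑ i ∈ s, g i x) ^ p ∂μ) ^ (1 / p) ≤ ∑ i ∈ s, (∫⁻ x, (g i x) ^ p ∂μ) ^ (1 / p) := by
  classical
  have hp0 : 0 < p := by linarith
  induction s using Finset.induction_on with
  | empty =>
    simp [ENNReal.zero_rpow_of_pos hp0, hp0]
  | insert a s ha ih =>
    simp only [Finset.sum_insert ha]
    have hm : Measurable (fun x => ∑ i ∈ s, g i x) := Finset.measurable_sum _ (fun i _ => hg i)
    have := ENNReal.lintegral_Lp_add_le (μ := μ) (hg a).aemeasurable hm.aemeasurable hp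
    refine le_trans this ?_
    gcongr

lemma minkowski_tsum {α ι : Type*} [Countable ι] [MeasurableSpace α] {μ : Measure α}
    {g : ι → α → ℝ≥0∞} (hg : ∀ i, Measurable (g i)) {p : ℝ} (hp : 1 ≤ p) :
    (∫⁻ x, (∑' i, g i x) ^ p ∂μ) ^ (1 / p) ≤ ∑' i, (∫⁻ x, (g i x) ^ p ∂μ) ^ (1 / p) := by
  have hp0 : 0 < p := by linarith
  have h1 : ∀ x, (∑' i, g i x) ^ p = ⨆ s : Finset ι, (∑ i ∈ s, g i x) ^ p := by
    intro x
    rw [ENNReal.tsum_eq_iSup_sum, iSup_rpow _ hp0]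
  simp_rw [h1]
  rw [lintegral_iSup_directed, iSup_rpow _ (by positivity)]
  · refine iSup_le fun s => (minkowski_finset s hg hp).trans ?_
    exact ENNReal.sum_le_tsum s
  · intro s
    exact ((Finset.measurable_sum _ (fun i _ => hg i)).pow_const p).aemeasurable
  · intro s t
    classical
    refine ⟨s ∪ t, fun x => ?_, fun x => ?_⟩
    · exact ENNReal.rpow_le_rpow (Finset.sum_le_sum_of_subset Finset.subset_union_left) hp0.le
    · exact ENNReal.rpow_le_rpow (Finset.sum_le_sum_of_subset Finset.subset_union_right) hp0.le

lemma minkowski_lt {ι : Type*} [Countable ι] (g : ι → ℕ → ℝ≥0∞) {p : ℝ} (hp : 1 ≤ p) :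
    (∑' k, (∑' i, g i k) ^ p) ^ (1 / p) ≤ ∑' i, (∑' k, (g i k) ^ p) ^ (1 / p) := by
  have := minkowski_tsum (μ := (Measure.count : Measure ℕ)) (g := g)
    (fun i => Measurable.of_discrete) hp
  simpa [lintegral_count] using this

lemma minkowski_lt_add (f g : ℕ → ℝ≥0∞) {p : ℝ} (hp : 1 ≤ p) :
    (∑' k, (f k + g k) ^ p) ^ (1 / p) ≤ (∑' k, (f k) ^ p) ^ (1 / p)
      + (∑' k, (g k) ^ p) ^ (1 / p) := by
  have := ENNReal.lintegral_Lp_add_le (μ := (Measure.count : Measure ℕ)) (f := f) (g := g)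
    (Measurable.of_discrete).aemeasurable (Measurable.of_discrete).aemeasurable hp
  simpa [lintegral_count] using this

/-- `ℓ^p` norms decrease in `p`. -/
lemma lp_mono {ι : Type*} (g : ι → ℝ≥0∞) {p q : ℝ} (hp : 0 < p) (hpq : p ≤ q) :
    (∑' k, (g k) ^ q) ^ (1 / q) ≤ (∑' k, (g k) ^ p) ^ (1 / p) := by
  have hq : 0 < q := by linarith
  set S := (∑' k, (g k) ^ p) ^ (1 / p) with hS
  have hle : ∀ k, g k ≤ S := by
    intro k
    have : (g k) ^ p ≤ ∑' k, (g k) ^ p := ENNReal.le_tsum k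
    have := ENNReal.rpow_le_rpow this (z := 1 / p) (by positivity)
    rwa [← ENNReal.rpow_mul, mul_one_div_cancel hp.ne', ENNReal.rpow_one] at this
  have hSp : S ^ p = ∑' k, (g k) ^ p := by
    rw [hS, ← ENNReal.rpow_mul, one_div_mul_cancel hp.ne', ENNReal.rpow_one]
  have : ∑' k, (g k) ^ q ≤ S ^ q := by
    calc ∑' k, (g k) ^ q = ∑' k, (g k) ^ p * (g k) ^ (q - p) := by
          congr 1; ext k
          rw [← ENNReal.rpow_add_of_nonneg _ _ hp.le (by linarith)]; congr 1; ring
      _ ≤ ∑' k, (g k) ^ p * S ^ (q - p) := by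
          gcongr with k
          exact hle k
      _ = S ^ q := by
          rw [ENNReal.tsum_mul_right, ← hSp, ← ENNReal.rpow_add_of_nonneg _ _ hp.le (by linarith)]
          congr 1; ring
  calc _ ≤ (S ^ q) ^ (1 / q) := by gcongr
    _ = S := by rw [← ENNReal.rpow_mul, mul_one_div_cancel hq.ne', ENNReal.rpow_one]

lemma l1_le {ι : Type*} (g : ι → ℝ≥0∞) {q : ℝ} (hq : 1 ≤ q) :
    (∑' k, (g k) ^ q) ^ (1 / q) ≤ ∑' k, g k := by
  simpa using lp_mono g one_pos hq

/-! ### The variation functional on sequences -/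

/-- Strong `t`-variation of the partial sums of a sequence. -/
def VV (t : ℝ) (a : ℕ → ℂ) : ℝ≥0∞ :=
  ⨆ (N : ℕ → ℕ) (_ : Monotone N),
    (∑' k, ‖∑ i ∈ Finset.Ico (N k) (N (k + 1)), a i‖ₑ ^ t) ^ (1 / t)

lemma le_VV (t : ℝ) (a : ℕ → ℂ) (N : ℕ → ℕ) (hN : Monotone N) :
    (∑' k, ‖∑ i ∈ Finset.Ico (N k) (N (k + 1)), a i‖ₑ ^ t) ^ (1 / t) ≤ VV t a :=
  le_iSup₂ (f := fun (N : ℕ → ℕ) (_ : Monotone N) =>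
    (∑' k, ‖∑ i ∈ Finset.Ico (N k) (N (k + 1)), a i‖ₑ ^ t) ^ (1 / t)) N hN

lemma VV_add_le {t : ℝ} (ht : 1 ≤ t) (a b : ℕ → ℂ) : VV t (a + b) ≤ VV t a + VV t b := by
  refine iSup₂_le fun N hN => ?_
  refine le_trans ?_ (add_le_add (le_VV t a N hN) (le_VV t b N hN))
  refine le_trans ?_ (minkowski_lt_add _ _ ht)
  gcongr with k
  simp only [Pi.add_apply, Finset.sum_add_distrib]
  exact enorm_add_le _ _

lemma sum_Ico_mono (N : ℕ → ℕ) (hN : Monotone N) (g : ℕ → ℝ≥0∞) (K : ℕ) :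
    ∑ k ∈ Finset.range K, ∑ i ∈ Finset.Ico (N k) (N (k + 1)), g i
      = ∑ i ∈ Finset.Ico (N 0) (N K), g i := by
  induction K with
  | zero => simp
  | succ K ih =>
    rw [Finset.sum_range_succ, ih, Finset.sum_Ico_consecutive _ (hN (Nat.zero_le _))
      (hN (Nat.le_succ _))]

lemma VV_le_sum {t : ℝ} (ht : 1 ≤ t) (a : ℕ → ℂ) : VV t a ≤ ∑' i, ‖a i‖ₑ := by
  refine iSup₂_le fun N hN => ?_
  refine (l1_le _ ht).trans ?_
  refine ENNReal.tsum_le_of_sum_range_le fun K => ?_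
  calc _ ≤ ∑ k ∈ Finset.range K, ∑ i ∈ Finset.Ico (N k) (N (k + 1)), ‖a i‖ₑ := by
        gcongr with k; exact enorm_sum_le _ _
    _ = _ := sum_Ico_mono N hN _ K
    _ ≤ _ := ENNReal.sum_le_tsum _

lemma VV_smul {t : ℝ} (ht : 1 ≤ t) (c : ℂ) (a : ℕ → ℂ) :
    VV t (fun i => c * a i) = ‖c‖ₑ * VV t a := by
  have ht0 : 0 < t := by linarith
  unfold VV
  simp_rw [ENNReal.mul_iSup]
  congr 1; ext N; congr 1; ext hN
  simp_rw [← Finset.mul_sum, enorm_mul, ENNReal.mul_rpow_of_nonneg _ _ ht0.le,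
    ENNReal.tsum_mul_left]
  rw [ENNReal.mul_rpow_of_nonneg _ _ (by positivity), ← ENNReal.rpow_mul,
    mul_one_div_cancel ht0.ne', ENNReal.rpow_one]

/-- Truncation of a sequence to indices `< m`. -/
def trunc (m : ℕ) (a : ℕ → ℂ) : ℕ → ℂ := fun i => if i < m then a i else 0

lemma VV_trunc_mono (t : ℝ) (a : ℕ → ℂ) {m m' : ℕ} (h : m ≤ m') :
    VV t (trunc m a) ≤ VV t (trunc m' a) := by
  refine iSup₂_le fun N hN => ?_
  refine le_trans (le_of_eq ?_) (le_VV t _ (fun k => min (N k) m)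
    (fun i j hij => min_le_min (hN hij) le_rfl))
  congr 1
  congr 1; ext k; congr 2
  have h1 : ∀ A B : ℕ, ∑ i ∈ Finset.Ico A B, trunc m a i
      = ∑ i ∈ Finset.Ico (min A m) (min B m), trunc m' a i := by
    intro A B
    unfold trunc
    rw [← Finset.sum_filter, ← Finset.sum_filter]
    apply Finset.sum_congr _ (fun _ _ => rfl)
    ext i
    simp only [Finset.mem_filter, Finset.mem_Ico]
    omega
  exact h1 _ _

end LPX

namespace LPX

/-! ### Greedy jump counting -/

/-- Greedy jump counting: current deviation from the anchor and number of jumps so far. -/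
def greedy (lam : ℝ) (g : ℕ → ℂ) : ℕ → ℂ × ℕ
  | 0 => (0, 0)
  | n + 1 =>
    if lam ≤ ‖(greedy lam g n).1 + g n‖ then (0, (greedy lam g n).2 + 1)
    else ((greedy lam g n).1 + g n, (greedy lam g n).2)

lemma greedy_congr {lam : ℝ} {g g' : ℕ → ℂ} {n : ℕ} (h : ∀ i < n, g i = g' i) :
    greedy lam g n = greedy lam g' n := by
  induction n with
  | zero => rfl
  | succ n ih =>
    have := ih (fun i hi => h i (by omega))
    simp only [greedy, this, h n (by omega)]

lemma greedy_mono_succ (lam : ℝ) (g : ℕ → ℂ) (n : ℕ) :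
    (greedy lam g n).2 ≤ (greedy lam g (n + 1)).2 := by
  simp only [greedy]; split_ifs <;> simp

lemma greedy_mono (lam : ℝ) (g : ℕ → ℂ) : Monotone (fun n => (greedy lam g n).2) :=
  monotone_nat_of_le_succ (greedy_mono_succ lam g)

lemma greedy_dev_lt {lam : ℝ} (hl : 0 < lam) (g : ℕ → ℂ) (n : ℕ) :
    ‖(greedy lam g n).1‖ < lam := by
  induction n with
  | zero => simpa [greedy] using hl
  | succ n ih =>
    simp only [greedy]; split_ifs with h
    · simpa using hl
    · simpa using h

lemma greedy_dev_eq (lam : ℝ) (g : ℕ → ℂ) {a b : ℕ} (hab : a ≤ b)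
    (h : (greedy lam g b).2 = (greedy lam g a).2) :
    (greedy lam g b).1 = (greedy lam g a).1 + ∑ i ∈ Finset.Ico a b, g i := by
  induction b, hab using Nat.le_induction with
  | base => simp
  | succ b hb ih =>
    have h1 := greedy_mono lam g hb
    have h2 := greedy_mono_succ lam g b
    have h3 : (greedy lam g b).2 = (greedy lam g a).2 := by simp only at h1; omega
    have h4 := ih h3
    rw [Finset.sum_Ico_succ_top hb, ← add_assoc, ← h4]
    have h5 : (greedy lam g (b + 1)).2 = (greedy lam g b).2 := by omega
    simp only [greedy] at h5 ⊢
    split_ifs at h5 ⊢ with h6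
    · simp at h5
    · rfl

lemma greedy_jump {lam : ℝ} (hl : 0 < lam) (g : ℕ → ℂ) {a b : ℕ} (hab : a ≤ b)
    (h : 2 * lam ≤ ‖∑ i ∈ Finset.Ico a b, g i‖) :
    (greedy lam g a).2 + 1 ≤ (greedy lam g b).2 := by
  by_contra hc
  have h1 : (greedy lam g a).2 ≤ (greedy lam g b).2 := greedy_mono lam g hab
  have h2 := greedy_dev_eq lam g hab (by omega)
  have h3 : ∑ i ∈ Finset.Ico a b, g i = (greedy lam g b).1 - (greedy lam g a).1 := by
    rw [h2]; ring
  rw [h3] at h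
  have := norm_sub_le (greedy lam g b).1 (greedy lam g a).1
  have := greedy_dev_lt hl g a
  have := greedy_dev_lt hl g b
  linarith

lemma greedy_step (lam : ℝ≥0) (g : ℕ → ℂ) (n : ℕ) :
    ‖(greedy lam g (n + 1)).1‖ₑ ^ 2 + (lam : ℝ≥0∞) ^ 2 * (greedy lam g (n + 1)).2
      ≤ ‖(greedy lam g n).1 + g n‖ₑ ^ 2 + (lam : ℝ≥0∞) ^ 2 * (greedy lam g n).2 := by
  simp only [greedy]
  split_ifs with h
  · have h1 : (lam : ℝ≥0∞) ≤ ‖(greedy lam g n).1 + g n‖ₑ := by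
      rw [enorm_eq_nnnorm]
      exact_mod_cast h
    have h2 : (lam : ℝ≥0∞) ^ 2 ≤ ‖(greedy lam g n).1 + g n‖ₑ ^ 2 := by gcongr
    simp only [enorm_zero]
    push_cast
    rw [mul_add, mul_one, add_comm (_ * _)]
    simpa using by gcongr
  · exact le_rfl

/-! ### Abstract dyadic martingale structure on the line -/

/-- A nested family of countable partitions with child-swapping involutions. -/
structure Dy (q : ℕ → ℝ → ℤ) (σ : ℕ → ℝ → ℝ) : Prop where
  meas : ∀ n, Measurable (q n)
  nest : ∀ n x y, q (n + 1) x = q (n + 1) y → q n x = q n y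
  inv : ∀ n (h : ℝ → ℝ≥0∞), Measurable h → ∫⁻ x, h (σ n x) = ∫⁻ x, h x
  q_σ : ∀ n x, q n (σ n x) = q n x

/-- A difference sequence adapted to the structure. -/
structure Df (q : ℕ → ℝ → ℤ) (σ : ℕ → ℝ → ℝ) (d : ℕ → ℝ → ℂ) : Prop where
  adapted : ∀ n x y, q (n + 1) x = q (n + 1) y → d n x = d n y
  anti : ∀ n x, d n (σ n x) = - d n x
  pred : ∀ n x y, q n x = q n y → ‖d n x‖ = ‖d n y‖

variable {q : ℕ → ℝ → ℤ} {σ : ℕ → ℝ → ℝ} {d : ℕ → ℝ → ℂ}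

lemma Dy.nest_le (H : Dy q σ) {m n : ℕ} (h : m ≤ n) {x y : ℝ} (hxy : q n x = q n y) :
    q m x = q m y := by
  induction n, h using Nat.le_induction with
  | base => exact hxy
  | succ n hn ih => exact ih (H.nest _ _ _ hxy)

lemma Df.adapted_lt (H : Dy q σ) (D : Df q σ d) {i n : ℕ} (h : i < n) {x y : ℝ}
    (hxy : q n x = q n y) : d i x = d i y :=
  D.adapted _ _ _ (H.nest_le h hxy)

/-- functions constant on fibers are measurable -/
lemma Dy.measurable_of_fiber (H : Dy q σ) {β : Type*} [MeasurableSpace β] [Nonempty β] (n : ℕ)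
    (h : ℝ → β) (hh : ∀ x y, q n x = q n y → h x = h y) : Measurable h := by
  have : h = (Function.extend (q n) h (fun _ => Classical.arbitrary β)) ∘ (q n) := by
    ext x
    have hf : Function.FactorsThrough h (q n) := fun x y hxy => hh x y hxy
    exact (hf.extend_apply _ x).symm
  rw [this]
  exact Measurable.of_discrete.comp (H.meas n)

lemma Df.measurable (H : Dy q σ) (D : Df q σ d) (n : ℕ) : Measurable (d n) :=
  H.measurable_of_fiber (n + 1) _ (D.adapted n)

/-- Multiplication by a predictable indicator. -/
lemma Df.mul_pred (D : Df q σ d) (H : Dy q σ) (c : ℕ → ℝ → ℂ)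
    (hc : ∀ n x y, q n x = q n y → c n x = c n y) : Df q σ (fun n x => c n x * d n x) where
  adapted n x y h := by rw [hc n x y (H.nest _ _ _ h), D.adapted n x y h]
  anti n x := by rw [D.anti, hc n _ x (H.q_σ n x)]; ring
  pred n x y h := by rw [norm_mul, norm_mul, hc n x y h, D.pred n x y h]

lemma parallelogram_enorm (u v : ℂ) :
    ‖u + v‖ₑ ^ 2 + ‖u - v‖ₑ ^ 2 = 2 * (‖u‖ₑ ^ 2 + ‖v‖ₑ ^ 2) := by
  have h := parallelogram_law_with_norm ℝ u v
  have e : ∀ z : ℂ, ‖z‖ₑ ^ 2 = ENNReal.ofReal (‖z‖ ^ 2) := by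
    intro z
    rw [← ofReal_norm, ENNReal.ofReal_pow (norm_nonneg _)]
  rw [e, e, e, e, ← ENNReal.ofReal_add (by positivity) (by positivity),
    ← ENNReal.ofReal_add (by positivity) (by positivity)]
  have : (2 : ℝ≥0∞) = ENNReal.ofReal 2 := by simp
  rw [this, ← ENNReal.ofReal_mul (by norm_num)]
  congr 1

lemma greedy_lintegral (H : Dy q σ) (D : Df q σ d) (lam : ℝ≥0) (n : ℕ) :
    ∫⁻ x, (‖(greedy lam (fun i => d i x) n).1‖ₑ ^ 2
        + (lam : ℝ≥0∞) ^ 2 * (greedy lam (fun i => d i x) n).2)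
      ≤ ∑ i ∈ Finset.range n, ∫⁻ x, ‖d i x‖ₑ ^ 2 := by
  induction n with
  | zero => simp [greedy]
  | succ n ih =>
    have hfib : ∀ x y, q n x = q n y →
        greedy lam (fun i => d i x) n = greedy lam (fun i => d i y) n := fun x y h =>
      greedy_congr (fun i hi => D.adapted_lt H hi h)
    set u : ℝ → ℂ := fun x => (greedy lam (fun i => d i x) n).1 with hu
    set c : ℝ → ℝ≥0∞ := fun x => (lam : ℝ≥0∞) ^ 2 * (greedy lam (fun i => d i x) n).2 with hc
    have hum : Measurable u := H.measurable_of_fiber n _ (fun x y h => by simp only [hu, hfib x y h])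
    have hcm : Measurable c := H.measurable_of_fiber n _ (fun x y h => by simp only [hc, hfib x y h])
    have hdm := D.measurable H n
    have huσ : ∀ x, u (σ n x) = u x := fun x => by simp only [hu, hfib _ _ (H.q_σ n x)]
    have hcσ : ∀ x, c (σ n x) = c x := fun x => by simp only [hc, hfib _ _ (H.q_σ n x)]
    set F : ℝ → ℝ≥0∞ := fun x => ‖u x + d n x‖ₑ ^ 2 + c x with hF
    have hFm : Measurable F := ((hum.add hdm).enorm.pow_const 2).add hcm
    have h1 : ∫⁻ x, F x = ∫⁻ x, ((‖u x‖ₑ ^ 2 + c x) + ‖d n x‖ₑ ^ 2) := by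
      have e1 := H.inv n F hFm
      have e2 : 2 * ∫⁻ x, F x = 2 * ∫⁻ x, ((‖u x‖ₑ ^ 2 + c x) + ‖d n x‖ₑ ^ 2) := by
        rw [two_mul]
        nth_rewrite 2 [← e1]
        rw [← lintegral_add_left hFm, ← lintegral_const_mul _ (by fun_prop)]
        congr 1; ext x
        simp only [hF, huσ, hcσ, D.anti, ← sub_eq_add_neg]
        have := parallelogram_enorm (u x) (d n x)
        calc _ = (‖u x + d n x‖ₑ ^ 2 + ‖u x - d n x‖ₑ ^ 2) + 2 * c x := by ring
          _ = _ := by rw [this]; ring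
      exact (ENNReal.mul_right_inj (by norm_num) (by norm_num)).1 e2
    rw [Finset.sum_range_succ]
    calc _ ≤ ∫⁻ x, F x := lintegral_mono (fun x => greedy_step lam _ n)
      _ = _ := h1
      _ = _ := lintegral_add_right _ (hdm.enorm.pow_const 2)
      _ ≤ _ := by gcongr

lemma greedy_count (H : Dy q σ) (D : Df q σ d) (lam : ℝ≥0) (n : ℕ) :
    (lam : ℝ≥0∞) ^ 2 * ∫⁻ x, ((greedy lam (fun i => d i x) n).2 : ℝ≥0∞)
      ≤ ∑ i ∈ Finset.range n, ∫⁻ x, ‖d i x‖ₑ ^ 2 := by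
  refine le_trans ?_ (greedy_lintegral H D lam n)
  rw [← lintegral_const_mul' _ _ (by simp)]
  exact lintegral_mono (fun x => le_add_self)

lemma greedy_measurable (H : Dy q σ) (D : Df q σ d) (lam : ℝ) (n : ℕ) :
    Measurable (fun x => ((greedy lam (fun i => d i x) n).2 : ℝ≥0∞)) :=
  H.measurable_of_fiber n _ (fun x y h => by
    rw [greedy_congr (fun i hi => D.adapted_lt H hi h)])

end LPX

namespace LPX

/-! ### Numerical lemma -/

/-- The weight appearing in the jump counting sum. -/
def tau (t : ℝ) (l : ℕ) (a : ℝ) : ℝ :=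
  (((1 / 2 : ℝ) ^ l) ^ t) * (if a ≤ (1 / 2 : ℝ) ^ l then 64 * 4 ^ l * a ^ 2 else 4 * 2 ^ l * a)

lemma half_pow_rpow (l : ℕ) (t : ℝ) : ((1 / 2 : ℝ) ^ l) ^ t = (2 : ℝ) ^ (-(l : ℝ) * t) := by
  rw [Real.rpow_mul (by norm_num), Real.rpow_neg (by norm_num), Real.rpow_natCast]
  simp

lemma tsum_geom_lt (ρ : ℝ) (h0 : 0 ≤ ρ) (h1 : ρ < 1) :
    ∑' l : ℕ, ENNReal.ofReal (ρ ^ l) < ⊤ := by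
  have : ∑' l : ℕ, ENNReal.ofReal (ρ ^ l) = ENNReal.ofReal (∑' l : ℕ, ρ ^ l) :=
    (ENNReal.ofReal_tsum_of_nonneg (fun l => by positivity)
      (summable_geometric_of_lt_one h0 h1)).symm
  rw [this]; exact ENNReal.ofReal_lt_top

lemma tsum_tau_two (t : ℝ) (ht : 2 < t) :
    ∃ C : ℝ≥0, ∀ a : ℝ, 0 ≤ a → a ≤ 1 →
      ∑' l, ENNReal.ofReal (tau t l a) ≤ C * ENNReal.ofReal (a ^ (2 : ℝ)) := by
  set ρ : ℝ := 2 ^ (2 - t) with hρ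
  have hρ0 : 0 ≤ ρ := by positivity
  have hρ1 : ρ < 1 := Real.rpow_lt_one_of_one_lt_of_neg (by norm_num) (by linarith)
  refine ⟨64 * (∑' l : ℕ, ENNReal.ofReal (ρ ^ l)).toNNReal, fun a ha0 ha1 => ?_⟩
  have hfin := (tsum_geom_lt ρ hρ0 hρ1).ne
  push_cast
  rw [ENNReal.coe_toNNReal hfin, mul_assoc, mul_comm _ (ENNReal.ofReal (a ^ (2 : ℝ))), ← mul_assoc,
    ← ENNReal.tsum_mul_left]
  refine ENNReal.tsum_le_tsum fun l => ?_
  rw [show (64 : ℝ≥0∞) = ENNReal.ofReal 64 by simp, ← ENNReal.ofReal_mul (by norm_num),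
    ← ENNReal.ofReal_mul (by positivity)]
  apply ENNReal.ofReal_le_ofReal
  have e1 : ((1 / 2 : ℝ) ^ l) ^ t * 4 ^ l = ρ ^ l := by
    rw [half_pow_rpow, hρ, ← Real.rpow_natCast (2 ^ (2 - t)) l, ← Real.rpow_mul (by norm_num),
      show (4 : ℝ) = 2 ^ (2 : ℝ) by norm_num, ← Real.rpow_natCast _ l,
      ← Real.rpow_mul (by norm_num), ← Real.rpow_add (by norm_num)]
    congr 1; ring
  have e2 : a ^ (2 : ℝ) = a ^ 2 := by norm_cast
  rw [e2]
  unfold tau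
  split_ifs with h
  · calc _ = 64 * a ^ 2 * (((1 / 2 : ℝ) ^ l) ^ t * 4 ^ l) := by ring
      _ ≤ _ := by rw [e1]
  · push Not at h
    have h3 : 1 ≤ 2 ^ l * a := by
      have := mul_le_mul_of_nonneg_left h.le (show (0 : ℝ) ≤ 2 ^ l by positivity)
      rwa [← mul_pow, show (2 : ℝ) * (1 / 2) = 1 by norm_num, one_pow] at this
    have h4 : (4 : ℝ) ^ l = 2 ^ l * 2 ^ l := by rw [← mul_pow]; norm_num
    rw [← e1, h4]
    have hw : 0 ≤ ((1 / 2 : ℝ) ^ l) ^ t := by positivity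
    calc ((1 / 2 : ℝ) ^ l) ^ t * (4 * 2 ^ l * a)
        = 4 * ((((1 / 2 : ℝ) ^ l) ^ t) * (2 ^ l * a)) * 1 := by ring
      _ ≤ 64 * ((((1 / 2 : ℝ) ^ l) ^ t) * (2 ^ l * a)) * (2 ^ l * a) := by
          gcongr
          norm_num
      _ = _ := by ring

lemma tau_key1 {r a : ℝ} (hr2 : r < 2) (ha : 0 < a) {l L : ℕ} (hl : l ≤ L)
    (hL2 : a ≤ (1 / 2 : ℝ) ^ L) : tau r l a ≤ 64 * a ^ r * ((2 : ℝ) ^ (r - 2)) ^ (L - l) := by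
  have hle : a ≤ (1 / 2 : ℝ) ^ l :=
    hL2.trans (pow_le_pow_of_le_one (by norm_num) (by norm_num) hl)
  unfold tau
  rw [if_pos hle, half_pow_rpow]
  have e1 : a ^ 2 = a ^ r * a ^ (2 - r) := by
    rw [← Real.rpow_add ha]; norm_num
  have e2 : a ^ (2 - r) ≤ (2 : ℝ) ^ (-(L : ℝ) * (2 - r)) := by
    rw [← half_pow_rpow]
    exact Real.rpow_le_rpow ha.le hL2 (by linarith)
  have e3 : (4 : ℝ) ^ l = 2 ^ (2 * (l : ℝ)) := by
    rw [Real.rpow_mul (by norm_num), Real.rpow_natCast]; norm_num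
  have e4 : ((2 : ℝ) ^ (r - 2)) ^ (L - l) = 2 ^ ((r - 2) * ((L : ℝ) - l)) := by
    rw [← Real.rpow_natCast, ← Real.rpow_mul (by norm_num), Nat.cast_sub hl]
  rw [e1, e3, e4]
  have harp : 0 < a ^ r := Real.rpow_pos_of_pos ha r
  calc _ = 64 * a ^ r * ((2 : ℝ) ^ (-(l : ℝ) * r) * 2 ^ (2 * (l : ℝ)) * a ^ (2 - r)) := by ring
    _ ≤ 64 * a ^ r * ((2 : ℝ) ^ (-(l : ℝ) * r) * 2 ^ (2 * (l : ℝ))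
          * (2 : ℝ) ^ (-(L : ℝ) * (2 - r))) := by
        gcongr
    _ = _ := by
        rw [← Real.rpow_add (by norm_num), ← Real.rpow_add (by norm_num)]
        congr 2; ring

lemma tau_key2 {r a : ℝ} (hr1 : 1 < r) (ha : 0 < a) (l L : ℕ)
    (hL1 : (1 / 2 : ℝ) ^ (L + 1) < a) :
    tau r (l + (L + 1)) a ≤ 64 * a ^ r * ((2 : ℝ) ^ (1 - r)) ^ l := by
  have hlt : (1 / 2 : ℝ) ^ (l + (L + 1)) < a := by
    refine lt_of_le_of_lt ?_ hL1
    exact pow_le_pow_of_le_one (by norm_num) (by norm_num) (by omega)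
  unfold tau
  rw [if_neg (not_le.2 hlt), half_pow_rpow]
  have e1 : a ^ r * a ^ (1 - r) = a := by
    rw [← Real.rpow_add ha]; norm_num
  have e2 : a ^ (1 - r) ≤ (2 : ℝ) ^ (-((L + 1 : ℕ) : ℝ) * (1 - r)) := by
    rw [← half_pow_rpow]
    exact Real.rpow_le_rpow_of_nonpos (by positivity) hL1.le (by linarith)
  have e3 : (2 : ℝ) ^ (l + (L + 1)) = 2 ^ (((l + (L + 1) : ℕ) : ℝ)) := by
    rw [Real.rpow_natCast]
  have e4 : ((2 : ℝ) ^ (1 - r)) ^ l = 2 ^ ((1 - r) * (l : ℝ)) := by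
    rw [← Real.rpow_natCast, ← Real.rpow_mul (by norm_num)]
  rw [e3, e4]
  generalize hM : ((l + (L + 1) : ℕ) : ℝ) = M
  have hM' : M = l + (L + 1) := by rw [← hM]; push_cast; ring
  have harp : 0 < a ^ r := Real.rpow_pos_of_pos ha r
  have hc : (2 : ℝ) ^ (-M * r) * (4 * 2 ^ M * a)
      = 4 * (a ^ r) * ((2 : ℝ) ^ (-M * r) * 2 ^ M * a ^ (1 - r)) := by
    nth_rewrite 1 [← e1]; ring
  rw [hc]
  calc _ ≤ 64 * a ^ r * ((2 : ℝ) ^ (-M * r) * 2 ^ M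
            * (2 : ℝ) ^ (-((L + 1 : ℕ) : ℝ) * (1 - r))) := by
        gcongr
        norm_num
    _ = _ := by
        rw [← Real.rpow_add (by norm_num), ← Real.rpow_add (by norm_num)]
        congr 2; rw [hM']; push_cast; ring

lemma tsum_tau_lt (r : ℝ) (hr1 : 1 < r) (hr2 : r < 2) :
    ∃ C : ℝ≥0, ∀ a : ℝ, 0 ≤ a → a ≤ 1 →
      ∑' l, ENNReal.ofReal (tau r l a) ≤ C * ENNReal.ofReal (a ^ r) := by
  have hρ1 : (2 : ℝ) ^ (r - 2) < 1 :=
    Real.rpow_lt_one_of_one_lt_of_neg (by norm_num) (by linarith)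
  have hη1 : (2 : ℝ) ^ (1 - r) < 1 :=
    Real.rpow_lt_one_of_one_lt_of_neg (by norm_num) (by linarith)
  have hρ0 : 0 ≤ (2 : ℝ) ^ (r - 2) := by positivity
  have hη0 : 0 ≤ (2 : ℝ) ^ (1 - r) := by positivity
  have key1 := fun a (ha : 0 < a) l L hl hL => tau_key1 hr2 ha (l := l) (L := L) hl hL
  have key2 := fun a (ha : 0 < a) l L hL => tau_key2 hr1 ha l L hL
  generalize (2 : ℝ) ^ (r - 2) = ρ at *
  generalize (2 : ℝ) ^ (1 - r) = η at *
  have hfin := (tsum_geom_lt ρ hρ0 hρ1).ne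
  have hfin2 := (tsum_geom_lt η hη0 hη1).ne
  refine ⟨64 * ((∑' l : ℕ, ENNReal.ofReal (ρ ^ l)).toNNReal
    + (∑' l : ℕ, ENNReal.ofReal (η ^ l)).toNNReal), fun a ha0 ha1 => ?_⟩
  push_cast
  rw [ENNReal.coe_toNNReal hfin, ENNReal.coe_toNNReal hfin2]
  rcases ha0.eq_or_lt with h | ha
  · subst h
    have : ∀ l, tau r l 0 = 0 := fun l => by simp [tau]
    simp [this]
  obtain ⟨L, hL1, hL2⟩ := exists_nat_pow_near_of_lt_one ha ha1 (y := (1 / 2 : ℝ)) (by norm_num)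
    (by norm_num)
  have harp : 0 < a ^ r := Real.rpow_pos_of_pos ha r
  have split := Summable.sum_add_tsum_nat_add' (f := fun l => ENNReal.ofReal (tau r l a))
    (k := L + 1) ENNReal.summable
  rw [← split]
  have c1 : ∑ l ∈ Finset.range (L + 1), ENNReal.ofReal (tau r l a)
      ≤ ENNReal.ofReal (64 * a ^ r) * ∑' l : ℕ, ENNReal.ofReal (ρ ^ l) := by
    calc _ ≤ ∑ l ∈ Finset.range (L + 1),
            ENNReal.ofReal (64 * a ^ r) * ENNReal.ofReal (ρ ^ (L + 1 - 1 - l)) := by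
          refine Finset.sum_le_sum fun l hl => ?_
          rw [← ENNReal.ofReal_mul (by positivity)]
          exact ENNReal.ofReal_le_ofReal
            (key1 a ha l L (Nat.lt_succ_iff.1 (Finset.mem_range.1 hl)) hL2)
      _ = ∑ l ∈ Finset.range (L + 1), ENNReal.ofReal (64 * a ^ r) * ENNReal.ofReal (ρ ^ l) :=
          Finset.sum_range_reflect
            (fun l => ENNReal.ofReal (64 * a ^ r) * ENNReal.ofReal (ρ ^ l)) (L + 1)
      _ ≤ _ := by
          rw [← Finset.mul_sum]
          gcongr
          exact ENNReal.sum_le_tsum _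
  have c2 : ∑' l, ENNReal.ofReal (tau r (l + (L + 1)) a)
      ≤ ENNReal.ofReal (64 * a ^ r) * ∑' l : ℕ, ENNReal.ofReal (η ^ l) := by
    rw [← ENNReal.tsum_mul_left]
    refine ENNReal.tsum_le_tsum fun l => ?_
    rw [← ENNReal.ofReal_mul (by positivity)]
    exact ENNReal.ofReal_le_ofReal (key2 a ha l L hL1)
  refine (add_le_add c1 c2).trans (le_of_eq ?_)
  rw [ENNReal.ofReal_mul (by norm_num)]
  simp only [ENNReal.ofReal_ofNat]
  ring

/-- Admissible exponents after the reductions. -/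
def Adm (r t : ℝ) : Prop := 1 < r ∧ ((r < 2 ∧ t = r) ∨ (r = 2 ∧ 2 < t))

lemma tsum_tau {r t : ℝ} (h : Adm r t) :
    ∃ C : ℝ≥0, ∀ a : ℝ, 0 ≤ a → a ≤ 1 →
      ∑' l, ENNReal.ofReal (tau t l a) ≤ C * ENNReal.ofReal (a ^ r) := by
  obtain ⟨h1, (⟨h2, rfl⟩ | ⟨rfl, h2⟩)⟩ := h
  · exact tsum_tau_lt t h1 h2
  · exact tsum_tau_two t h2

end LPX

namespace LPX

/-! ### Weak type estimate -/

/-- small part at level `l` -/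
def small (l : ℕ) (a : ℕ → ℂ) : ℕ → ℂ := fun i => if ‖a i‖ ≤ (1 / 2 : ℝ) ^ l then a i else 0
/-- large part at level `l` -/
def big (l : ℕ) (a : ℕ → ℂ) : ℕ → ℂ := fun i => if ‖a i‖ ≤ (1 / 2 : ℝ) ^ l then 0 else a i

lemma small_add_big (l : ℕ) (a : ℕ → ℂ) (i : ℕ) : a i = small l a i + big l a i := by
  unfold small big; split_ifs <;> simp

lemma greedy_stable {lam : ℝ} (hl : 0 < lam) {g : ℕ → ℂ} {n : ℕ} (hg : ∀ i, n ≤ i → g i = 0)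
    (m : ℕ) : (greedy lam g m).2 ≤ (greedy lam g n).2 := by
  rcases le_total m n with h | h
  · exact greedy_mono lam g h
  · induction m, h using Nat.le_induction with
    | base => exact le_rfl
    | succ m hm ih =>
      refine le_trans (le_of_eq ?_) ih
      simp only [greedy, hg m hm, add_zero]
      rw [if_neg (not_le.2 (greedy_dev_lt hl g m))]

lemma telescoping_le (T : ℕ → ℝ≥0∞) (N : ℕ → ℕ) (u : ℕ → ℝ≥0∞) (B : ℝ≥0∞)
    (hB : ∀ m, T m ≤ B) (h : ∀ k, T (N k) + u k ≤ T (N (k + 1))) : ∑' k, u k ≤ B := by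
  refine ENNReal.tsum_le_of_sum_range_le fun K => ?_
  have : T (N 0) + ∑ k ∈ Finset.range K, u k ≤ T (N K) := by
    induction K with
    | zero => simp
    | succ K ih =>
      rw [Finset.sum_range_succ, ← add_assoc]
      exact (add_le_add ih le_rfl).trans (h K)
  exact (le_add_self.trans this).trans (hB _)

lemma count_level (l : ℕ) (a : ℕ → ℂ) (n : ℕ) (ha : ∀ i, n ≤ i → a i = 0) (N : ℕ → ℕ)
    (hN : Monotone N) :
    ∑' k, (if (1 / 2 : ℝ) ^ (l + 1) ≤ ‖∑ i ∈ Finset.Ico (N k) (N (k + 1)), a i‖ then (1 : ℝ≥0∞) else 0)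
      ≤ ((greedy ((1 / 2 : ℝ) ^ l / 8) (small l a) n).2 : ℝ≥0∞)
        + ENNReal.ofReal (4 * 2 ^ l) * ∑ i ∈ Finset.range n, ‖big l a i‖ₑ := by
  have hlam : 0 < (1 / 2 : ℝ) ^ l / 8 := by positivity
  refine telescoping_le (fun m => ((greedy ((1 / 2 : ℝ) ^ l / 8) (small l a) m).2 : ℝ≥0∞)
        + ENNReal.ofReal (4 * 2 ^ l) * ∑ i ∈ Finset.range m, ‖big l a i‖ₑ) N _ _ ?_ ?_
  · intro m
    gcongr ?_ + _ * ?_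
    · exact_mod_cast greedy_stable hlam (fun i hi => by simp [small, ha i hi]) m
    · rcases le_total m n with h | h
      · exact Finset.sum_le_sum_of_subset (Finset.range_mono h)
      · refine le_of_eq (Finset.sum_subset (Finset.range_mono h) ?_).symm
        intro i _ hi
        simp [big, ha i (by simpa using hi)]
  · intro k
    have hk := hN (Nat.le_succ k)
    have hs : ∑ i ∈ Finset.range (N (k + 1)), ‖big l a i‖ₑ
        = ∑ i ∈ Finset.range (N k), ‖big l a i‖ₑ
          + ∑ i ∈ Finset.Ico (N k) (N (k + 1)), ‖big l a i‖ₑ :=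
      (Finset.sum_range_add_sum_Ico _ hk).symm
    have hmono : (greedy ((1 / 2 : ℝ) ^ l / 8) (small l a) (N k)).2
        ≤ (greedy ((1 / 2 : ℝ) ^ l / 8) (small l a) (N (k + 1))).2 := greedy_mono _ _ hk
    rw [hs, mul_add]
    split_ifs with h
    · have hsum : ∑ i ∈ Finset.Ico (N k) (N (k + 1)), a i
          = ∑ i ∈ Finset.Ico (N k) (N (k + 1)), small l a i
            + ∑ i ∈ Finset.Ico (N k) (N (k + 1)), big l a i := by
        rw [← Finset.sum_add_distrib]
        exact Finset.sum_congr rfl (fun i _ => small_add_big l a i)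
      by_cases hc : 2 * ((1 / 2 : ℝ) ^ l / 8) ≤ ‖∑ i ∈ Finset.Ico (N k) (N (k + 1)), small l a i‖
      · have := greedy_jump hlam (small l a) hk hc
        have h2 : ((greedy ((1 / 2 : ℝ) ^ l / 8) (small l a) (N k)).2 : ℝ≥0∞) + 1
          ≤ (greedy ((1 / 2 : ℝ) ^ l / 8) (small l a) (N (k + 1))).2 := by exact_mod_cast this
        calc _ = (((greedy ((1 / 2 : ℝ) ^ l / 8) (small l a) (N k)).2 : ℝ≥0∞) + 1)
              + ENNReal.ofReal (4 * 2 ^ l) * ∑ i ∈ Finset.range (N k), ‖big l a i‖ₑ := by ring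
          _ ≤ _ := by
            gcongr
            exact le_self_add
      · have h3 : (1 / 2 : ℝ) ^ l / 4 ≤ ‖∑ i ∈ Finset.Ico (N k) (N (k + 1)), big l a i‖ := by
          rw [hsum] at h
          have := norm_add_le (∑ i ∈ Finset.Ico (N k) (N (k + 1)), small l a i)
            (∑ i ∈ Finset.Ico (N k) (N (k + 1)), big l a i)
          push Not at hc
          rw [pow_succ] at h
          linarith
        have h4 : 1 ≤ ENNReal.ofReal (4 * 2 ^ l) * ∑ i ∈ Finset.Ico (N k) (N (k + 1)), ‖big l a i‖ₑ := by
          calc (1 : ℝ≥0∞) = ENNReal.ofReal (4 * 2 ^ l) * ENNReal.ofReal ((1 / 2 : ℝ) ^ l / 4) := by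
                rw [← ENNReal.ofReal_mul (by positivity)]
                rw [show (4 * 2 ^ l : ℝ) * ((1 / 2 : ℝ) ^ l / 4) = (2 * (1 / 2 : ℝ)) ^ l by
                  rw [mul_pow]; ring]
                norm_num
            _ ≤ ENNReal.ofReal (4 * 2 ^ l) * ‖∑ i ∈ Finset.Ico (N k) (N (k + 1)), big l a i‖ₑ := by
                gcongr
                rw [← ofReal_norm]
                exact ENNReal.ofReal_le_ofReal h3
            _ ≤ _ := by gcongr; exact enorm_sum_le _ _
        rw [add_assoc]
        gcongr
    · rw [add_zero]
      gcongr
      exact le_self_add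

/-- The majorant of the variation. -/
def WW (t : ℝ) (a : ℕ → ℂ) (n : ℕ) : ℝ≥0∞ :=
  ((greedy (1 / 2 : ℝ) a n).2 : ℝ≥0∞) + ∑' l : ℕ, ENNReal.ofReal (((1 / 2 : ℝ) ^ l) ^ t) *
    (((greedy ((1 / 2 : ℝ) ^ l / 8) (small l a) n).2 : ℝ≥0∞)
        + ENNReal.ofReal (4 * 2 ^ l) * ∑ i ∈ Finset.range n, ‖big l a i‖ₑ)

lemma one_le_WW {t : ℝ} (ht : 1 ≤ t) (a : ℕ → ℂ) (n : ℕ) (ha : ∀ i, n ≤ i → a i = 0)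
    (hV : 1 < VV t a) : 1 ≤ WW t a n := by
  have ht0 : 0 < t := by linarith
  by_contra hW
  push Not at hW
  refine absurd hV (not_lt.2 (iSup₂_le fun N hN => ?_))
  have hcnt : (greedy (1 / 2 : ℝ) a n).2 = 0 := by
    by_contra hne
    have h1 : 1 ≤ (greedy (1 / 2 : ℝ) a n).2 := Nat.one_le_iff_ne_zero.2 hne
    have h2 : (1 : ℝ≥0∞) ≤ (greedy (1 / 2 : ℝ) a n).2 := by exact_mod_cast h1
    exact absurd hW (not_lt.2 (h2.trans le_self_add))
  have hJ : ∀ k, ‖∑ i ∈ Finset.Ico (N k) (N (k + 1)), a i‖ < 1 := by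
    intro k
    by_contra hge
    push Not at hge
    have h1 := greedy_jump (lam := 1 / 2) (b := N (k + 1)) (by norm_num) a (hN (Nat.le_succ k)) (by linarith)
    have h2 := greedy_stable (lam := 1 / 2) (by norm_num) ha (N (k + 1))
    omega
  have hterm : ∀ k, ‖∑ i ∈ Finset.Ico (N k) (N (k + 1)), a i‖ₑ ^ t ≤
      ∑' l : ℕ, ENNReal.ofReal (((1 / 2 : ℝ) ^ l) ^ t) *
        (if (1 / 2 : ℝ) ^ (l + 1) ≤ ‖∑ i ∈ Finset.Ico (N k) (N (k + 1)), a i‖ then (1 : ℝ≥0∞) else 0) := by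
    intro k
    specialize hJ k
    set z := ∑ i ∈ Finset.Ico (N k) (N (k + 1)), a i with hz
    rcases (norm_nonneg z).eq_or_lt with h0 | h0
    · have : z = 0 := norm_eq_zero.1 h0.symm
      simp [this, ht0]
    obtain ⟨L, hL1, hL2⟩ := exists_nat_pow_near_of_lt_one h0 hJ.le (y := (1 / 2 : ℝ)) (by norm_num)
      (by norm_num)
    refine le_trans ?_ (ENNReal.le_tsum L)
    rw [if_pos hL1.le, mul_one, ← ofReal_norm, ENNReal.ofReal_rpow_of_nonneg (norm_nonneg _) ht0.le]
    exact ENNReal.ofReal_le_ofReal (Real.rpow_le_rpow (norm_nonneg _) hL2 ht0.le)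
  have hsum : ∑' k, ‖∑ i ∈ Finset.Ico (N k) (N (k + 1)), a i‖ₑ ^ t ≤ 1 := by
    refine le_trans (ENNReal.tsum_le_tsum hterm) ?_
    rw [ENNReal.tsum_comm]
    simp_rw [ENNReal.tsum_mul_left]
    refine le_trans ?_ hW.le
    unfold WW
    refine le_trans ?_ le_add_self
    gcongr with l
    exact count_level l a n ha N hN
  calc _ ≤ (1 : ℝ≥0∞) ^ (1 / t) := by gcongr
    _ = 1 := ENNReal.one_rpow _

variable {q : ℕ → ℝ → ℤ} {σ : ℕ → ℝ → ℝ} {d : ℕ → ℝ → ℂ}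

lemma Df.small (H : Dy q σ) (D : Df q σ d) (l : ℕ) :
    Df q σ (fun i x => LPX.small l (fun i => d i x) i) := by
  have h := D.mul_pred H (fun n x => if ‖d n x‖ ≤ (1 / 2 : ℝ) ^ l then 1 else 0)
    (fun n x y h => by simp only [D.pred n x y h])
  convert h using 3
  unfold LPX.small
  split_ifs <;> simp

lemma ofReal_norm_sq (z : ℂ) : ‖z‖ₑ ^ 2 = ENNReal.ofReal (‖z‖ ^ 2) := by
  rw [← ofReal_norm, ENNReal.ofReal_pow (norm_nonneg _)]

lemma lintegral_WW_le {t r : ℝ} (hr2 : r ≤ 2) (H : Dy q σ) (D : Df q σ d) (n : ℕ)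
    (hd1 : ∀ i x, ‖d i x‖ ≤ 1) (C : ℝ≥0)
    (hC : ∀ a : ℝ, 0 ≤ a → a ≤ 1 →
      ∑' l, ENNReal.ofReal (tau t l a) ≤ C * ENNReal.ofReal (a ^ r)) (hr : 0 < r) :
    ∫⁻ x, WW t (fun i => d i x) n ≤ (4 + C) * ∑ i ∈ Finset.range n, ∫⁻ x, ‖d i x‖ₑ ^ r := by
  have hdm := fun i => D.measurable H i
  have hbigm : ∀ l i, Measurable (fun x => big l (fun i => d i x) i) := by
    intro l i
    unfold big
    exact Measurable.ite (measurableSet_le (hdm i).norm measurable_const) measurable_const (hdm i)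
  have hg1 := greedy_measurable H D (1 / 2 : ℝ) n
  have hg2 : ∀ l : ℕ, Measurable (fun x => ((greedy ((1 / 2 : ℝ) ^ l / 8)
      (LPX.small l (fun i => d i x)) n).2 : ℝ≥0∞)) := fun l =>
    greedy_measurable H (D.small H l) ((1 / 2 : ℝ) ^ l / 8) n
  have hsm : ∀ l : ℕ, Measurable (fun x => ∑ i ∈ Finset.range n, ‖big l (fun i => d i x) i‖ₑ) :=
    fun l => Finset.measurable_sum _ (fun i _ => (hbigm l i).enorm)
  unfold WW
  rw [lintegral_add_left hg1, lintegral_tsum (fun l => by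
    exact (((hg2 l).add ((hsm l).const_mul _)).const_mul _).aemeasurable)]
  have hpt : ∀ i x, ‖d i x‖ₑ ^ r = ENNReal.ofReal (‖d i x‖ ^ r) := fun i x => by
    rw [← ofReal_norm, ENNReal.ofReal_rpow_of_nonneg (norm_nonneg _) hr.le]
  have part1 : ∫⁻ x, ((greedy (1 / 2 : ℝ) (fun i => d i x) n).2 : ℝ≥0∞)
      ≤ 4 * ∑ i ∈ Finset.range n, ∫⁻ x, ‖d i x‖ₑ ^ r := by
    have h1 := greedy_count H D (1 / 2) n
    have h2 : ((1 / 2 : ℝ≥0) : ℝ) = 1 / 2 := by norm_num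
    rw [h2] at h1
    have h3 : (4 : ℝ≥0∞) * (((1 / 2 : ℝ≥0) : ℝ≥0∞)) ^ 2 = 1 := by
      have : (4 : ℝ≥0) * (1 / 2) ^ 2 = 1 := by norm_num
      exact_mod_cast congrArg (fun z : ℝ≥0 => (z : ℝ≥0∞)) this
    calc _ = 4 * ((((1 / 2 : ℝ≥0) : ℝ≥0∞)) ^ 2 * ∫⁻ x, ((greedy (1 / 2 : ℝ) (fun i => d i x) n).2 : ℝ≥0∞)) := by
          rw [← mul_assoc, h3, one_mul]
      _ ≤ 4 * ∑ i ∈ Finset.range n, ∫⁻ x, ‖d i x‖ₑ ^ 2 := by gcongr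
      _ ≤ _ := by
          gcongr with i hi x
          rw [hpt, ofReal_norm_sq]
          apply ENNReal.ofReal_le_ofReal
          rw [← Real.rpow_natCast]
          exact Real.rpow_le_rpow_of_exponent_ge_of_imp (norm_nonneg _) (hd1 i x) (by exact_mod_cast hr2)
            (fun _ h => absurd h (by norm_num))
  have part2 : ∑' l : ℕ, ∫⁻ x, ENNReal.ofReal (((1 / 2 : ℝ) ^ l) ^ t) *
    (((greedy ((1 / 2 : ℝ) ^ l / 8) (LPX.small l (fun i => d i x)) n).2 : ℝ≥0∞)
        + ENNReal.ofReal (4 * 2 ^ l) * ∑ i ∈ Finset.range n, ‖big l (fun i => d i x) i‖ₑ)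
      ≤ C * ∑ i ∈ Finset.range n, ∫⁻ x, ‖d i x‖ₑ ^ r := by
    have hl : ∀ l : ℕ, ∫⁻ x, ENNReal.ofReal (((1 / 2 : ℝ) ^ l) ^ t) *
      (((greedy ((1 / 2 : ℝ) ^ l / 8) (LPX.small l (fun i => d i x)) n).2 : ℝ≥0∞)
        + ENNReal.ofReal (4 * 2 ^ l) * ∑ i ∈ Finset.range n, ‖big l (fun i => d i x) i‖ₑ)
      ≤ ∑ i ∈ Finset.range n, ∫⁻ x, ENNReal.ofReal (tau t l ‖d i x‖) := by
      intro l
      have hw : 0 ≤ ((1 / 2 : ℝ) ^ l) ^ t := by positivity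
      rw [lintegral_const_mul' _ _ ENNReal.ofReal_ne_top, lintegral_add_left (hg2 l),
        lintegral_const_mul _ (hsm l), lintegral_finsetSum _ (fun i _ => (hbigm l i).enorm)]
      have h1 := greedy_count H (D.small H l) ((1 / 2) ^ l / 8) n
      have h2 : (((1 / 2 : ℝ≥0) ^ l / 8 : ℝ≥0) : ℝ) = (1 / 2 : ℝ) ^ l / 8 := by push_cast; rfl
      rw [h2] at h1
      have h3 : ENNReal.ofReal (64 * 4 ^ l) * ((((1 / 2 : ℝ≥0) ^ l / 8 : ℝ≥0) : ℝ≥0∞)) ^ 2 = 1 := by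
        have e : ((((1 / 2 : ℝ≥0) ^ l / 8 : ℝ≥0) : ℝ≥0∞)) = ENNReal.ofReal ((1 / 2 : ℝ) ^ l / 8) := by
          rw [← h2, ENNReal.ofReal_coe_nnreal]
        rw [e, ← ENNReal.ofReal_pow (by positivity), ← ENNReal.ofReal_mul (by positivity)]
        rw [show (64 * 4 ^ l : ℝ) * ((1 / 2 : ℝ) ^ l / 8) ^ 2 = (4 * (1 / 2) ^ 2) ^ l by
          rw [mul_pow, ← pow_mul, mul_comm 2 l, pow_mul]; ring]
        norm_num
      have h4 : ∫⁻ x, ((greedy ((1 / 2 : ℝ) ^ l / 8) (LPX.small l (fun i => d i x)) n).2 : ℝ≥0∞)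
          ≤ ENNReal.ofReal (64 * 4 ^ l) * ∑ i ∈ Finset.range n, ∫⁻ x, ‖LPX.small l (fun i => d i x) i‖ₑ ^ 2 := by
        calc _ = ENNReal.ofReal (64 * 4 ^ l) * (((((1 / 2 : ℝ≥0) ^ l / 8 : ℝ≥0) : ℝ≥0∞)) ^ 2 *
              ∫⁻ x, ((greedy ((1 / 2 : ℝ) ^ l / 8) (LPX.small l (fun i => d i x)) n).2 : ℝ≥0∞)) := by
              rw [← mul_assoc, h3, one_mul]
          _ ≤ _ := by gcongr
      have hsmm : ∀ i, Measurable (fun x => ‖LPX.small l (fun i => d i x) i‖ₑ ^ 2) := fun i =>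
        ((D.small H l).measurable H i).enorm.pow_const 2
      calc _ ≤ ENNReal.ofReal (((1 / 2 : ℝ) ^ l) ^ t) * (ENNReal.ofReal (64 * 4 ^ l) *
              (∑ i ∈ Finset.range n, ∫⁻ x, ‖LPX.small l (fun i => d i x) i‖ₑ ^ 2)
              + ENNReal.ofReal (4 * 2 ^ l) * ∑ i ∈ Finset.range n, ∫⁻ x, ‖big l (fun i => d i x) i‖ₑ) := by
            gcongr
        _ = ∑ i ∈ Finset.range n, ENNReal.ofReal (((1 / 2 : ℝ) ^ l) ^ t) * (ENNReal.ofReal (64 * 4 ^ l) *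
              (∫⁻ x, ‖LPX.small l (fun i => d i x) i‖ₑ ^ 2)
              + ENNReal.ofReal (4 * 2 ^ l) * ∫⁻ x, ‖big l (fun i => d i x) i‖ₑ) := by
            rw [← Finset.mul_sum, Finset.sum_add_distrib, Finset.mul_sum, Finset.mul_sum]
        _ = _ := by
            refine Finset.sum_congr rfl fun i _ => ?_
            rw [← lintegral_const_mul _ (hsmm i), ← lintegral_const_mul _ (hbigm l i).enorm,
              ← lintegral_add_left ((hsmm i).const_mul _),
              ← lintegral_const_mul' _ _ ENNReal.ofReal_ne_top]
            congr 1; ext x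
            unfold tau LPX.small big
            split_ifs with h
            · simp only [enorm_zero, mul_zero, add_zero]
              rw [ofReal_norm_sq, ← ENNReal.ofReal_mul (by positivity),
                ← ENNReal.ofReal_mul (by positivity)]
            · simp only [enorm_zero]
              rw [← ofReal_norm, ENNReal.ofReal_mul hw, ENNReal.ofReal_mul (by positivity)]
              simp
    calc _ ≤ ∑' l : ℕ, ∑ i ∈ Finset.range n, ∫⁻ x, ENNReal.ofReal (tau t l ‖d i x‖) :=
          ENNReal.tsum_le_tsum hl
      _ = ∑ i ∈ Finset.range n, ∫⁻ x, ∑' l : ℕ, ENNReal.ofReal (tau t l ‖d i x‖) := by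
          rw [Summable.tsum_finsetSum (fun _ _ => ENNReal.summable)]
          refine Finset.sum_congr rfl fun i _ => ?_
          rw [lintegral_tsum]
          intro l
          refine (Measurable.ennreal_ofReal ?_).aemeasurable
          unfold tau
          refine Measurable.const_mul ?_ _
          exact Measurable.ite (measurableSet_le (hdm i).norm measurable_const)
            (((hdm i).norm.pow_const 2).const_mul _) ((hdm i).norm.const_mul _)
      _ ≤ ∑ i ∈ Finset.range n, ∫⁻ x, C * ‖d i x‖ₑ ^ r := by
          gcongr with i hi x
          rw [hpt]
          exact hC _ (norm_nonneg _) (hd1 i x)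
      _ = _ := by
          rw [Finset.mul_sum]
          refine Finset.sum_congr rfl fun i _ => ?_
          rw [lintegral_const_mul _ ((hdm i).enorm.pow_const r)]
  rw [add_mul]
  exact add_le_add part1 part2

lemma weak_type {r t : ℝ} (h : Adm r t) : ∃ C : ℝ≥0, ∀ (q : ℕ → ℝ → ℤ) (σ : ℕ → ℝ → ℝ)
    (d : ℕ → ℝ → ℂ), Dy q σ → Df q σ d → ∀ n, (∀ i, n ≤ i → ∀ x, d i x = 0) →
    (∀ i x, ‖d i x‖ ≤ 1) →
    volume {x | 1 < VV t (fun i => d i x)} ≤ C * ∫⁻ x, ∑ i ∈ Finset.range n, ‖d i x‖ₑ ^ r := by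
  obtain ⟨C, hC⟩ := tsum_tau h
  have hr2 : r ≤ 2 := by rcases h with ⟨_, (⟨h, _⟩ | ⟨h, _⟩)⟩ <;> linarith
  have ht : 1 ≤ t := by rcases h with ⟨_, (⟨h, _⟩ | ⟨h, _⟩)⟩ <;> linarith
  have hr0 : 0 < r := by linarith [h.1]
  refine ⟨4 + C, fun q σ d H D n hn hd1 => ?_⟩
  have h1 : {x | 1 < VV t (fun i => d i x)} ⊆ {x | 1 ≤ WW t (fun i => d i x) n} := fun x hx =>
    one_le_WW ht _ n (fun i hi => hn i hi x) hx
  have hWm : Measurable (fun x => WW t (fun i => d i x) n) :=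
    H.measurable_of_fiber n _ (fun x y hxy => by
      unfold WW
      have e : ∀ i, i < n → d i x = d i y := fun i hi => D.adapted_lt H hi hxy
      have e1 : (fun i => d i x) = (fun i => d i y) := by
        ext i
        by_cases hi : i < n
        · exact e i hi
        · rw [hn i (by omega), hn i (by omega)]
      rw [e1])
  calc _ ≤ volume {x | 1 ≤ WW t (fun i => d i x) n} := measure_mono h1
    _ ≤ ∫⁻ x, WW t (fun i => d i x) n := by
        simpa using mul_meas_ge_le_lintegral hWm 1
    _ ≤ _ := lintegral_WW_le hr2 H D n hd1 C hC hr0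
    _ = _ := by
        rw [lintegral_finsetSum _ (fun i _ => (D.measurable H i).enorm.pow_const r)]
        push_cast
        rfl

end LPX

namespace LPX

/-! ### Good lambda inequality -/

lemma good_lambda_int {V S : ℝ → ℝ} (hV0 : ∀ x, 0 ≤ V x) (hS0 : ∀ x, 0 ≤ S x)
    (hV : Measurable V) (hS : Measurable S) {p ε : ℝ} (hp : 0 < p) (hε : 0 < ε) (K : ℝ≥0∞)
    (hK : K * ENNReal.ofReal (3 ^ p) ≤ 1 / 2)
    (h : ∀ lam : ℝ, 0 < lam → volume {x | 3 * lam < V x}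
      ≤ volume {x | ε * lam < S x} + K * volume {x | lam < V x})
    (hfin : ∫⁻ x, ENNReal.ofReal (V x ^ p) ≠ ∞) :
    ∫⁻ x, ENNReal.ofReal (V x ^ p)
      ≤ 2 * ENNReal.ofReal ((3 / ε) ^ p) * ∫⁻ x, ENNReal.ofReal (S x ^ p) := by
  have e1 := lintegral_rpow_eq_lintegral_meas_lt_mul volume (f := fun x => V x / 3)
    (Filter.Eventually.of_forall fun x => div_nonneg (hV0 x) (by norm_num))
    (hV.div_const 3).aemeasurable hp
  have e2 := lintegral_rpow_eq_lintegral_meas_lt_mul volume (f := fun x => S x / ε)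
    (Filter.Eventually.of_forall fun x => div_nonneg (hS0 x) hε.le)
    (hS.div_const ε).aemeasurable hp
  have e3 := lintegral_rpow_eq_lintegral_meas_lt_mul volume (f := V)
    (Filter.Eventually.of_forall fun x => hV0 x) hV.aemeasurable hp
  have mm : ∀ f : ℝ → ℝ, Measurable (fun t : ℝ => volume {x | t < f x}) := by
    intro f
    refine Antitone.measurable ?_
    intro a b hab
    exact measure_mono (fun x (hx : b < f x) => lt_of_le_of_lt hab hx)
  have key : ∫⁻ x, ENNReal.ofReal ((V x / 3) ^ p) ≤ (∫⁻ x, ENNReal.ofReal ((S x / ε) ^ p))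
      + K * ∫⁻ x, ENNReal.ofReal (V x ^ p) := by
    rw [e1, e2, e3, mul_left_comm, ← mul_add]
    gcongr
    have hpm : Measurable (fun t : ℝ => ENNReal.ofReal (t ^ (p - 1))) :=
      (measurable_id.pow_const _).ennreal_ofReal
    have m1 : Measurable (fun t : ℝ => volume {a | t < V a} * ENNReal.ofReal (t ^ (p - 1))) :=
      (mm V).mul hpm
    have m2 : Measurable (fun t : ℝ => volume {a | t < S a / ε} * ENNReal.ofReal (t ^ (p - 1))) :=
      (mm (fun a => S a / ε)).mul hpm
    rw [← lintegral_const_mul _ m1, ← lintegral_add_left m2]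
    refine setLIntegral_mono' measurableSet_Ioi fun t ht => ?_
    rw [← mul_assoc, ← add_mul]
    gcongr
    have h1 : {a | t < V a / 3} = {a | 3 * t < V a} := by
      ext a; simp only [Set.mem_setOf_eq]; rw [lt_div_iff₀ (by norm_num), mul_comm]
    have h2 : {a | t < S a / ε} = {a | ε * t < S a} := by
      ext a; simp only [Set.mem_setOf_eq]; rw [lt_div_iff₀ hε, mul_comm]
    rw [h1, h2]
    exact h t ht
  have hsc : ∀ x, ENNReal.ofReal (V x ^ p) = ENNReal.ofReal (3 ^ p) * ENNReal.ofReal ((V x / 3) ^ p) := by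
    intro x
    rw [← ENNReal.ofReal_mul (by positivity), ← Real.mul_rpow (by norm_num) (div_nonneg (hV0 x) (by norm_num))]
    congr 2; ring
  have hsc2 : ∀ x, ENNReal.ofReal (3 ^ p) * ENNReal.ofReal ((S x / ε) ^ p)
      = ENNReal.ofReal ((3 / ε) ^ p) * ENNReal.ofReal (S x ^ p) := by
    intro x
    rw [← ENNReal.ofReal_mul (by positivity), ← ENNReal.ofReal_mul (by positivity),
      ← Real.mul_rpow (by norm_num) (div_nonneg (hS0 x) hε.le), ← Real.mul_rpow (by positivity) (hS0 x)]
    congr 2; ring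
  set I := ∫⁻ x, ENNReal.ofReal (V x ^ p) with hI
  have h1 : I ≤ ENNReal.ofReal ((3 / ε) ^ p) * (∫⁻ x, ENNReal.ofReal (S x ^ p)) + 1 / 2 * I := by
    calc I = ENNReal.ofReal (3 ^ p) * ∫⁻ x, ENNReal.ofReal ((V x / 3) ^ p) := by
          rw [hI, ← lintegral_const_mul' _ _ ENNReal.ofReal_ne_top]
          simp_rw [← hsc]
      _ ≤ ENNReal.ofReal (3 ^ p) * ((∫⁻ x, ENNReal.ofReal ((S x / ε) ^ p)) + K * I) := by gcongr
      _ = ENNReal.ofReal ((3 / ε) ^ p) * (∫⁻ x, ENNReal.ofReal (S x ^ p))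
            + (K * ENNReal.ofReal (3 ^ p)) * I := by
          rw [mul_add]
          congr 1
          · rw [← lintegral_const_mul' _ _ ENNReal.ofReal_ne_top,
              ← lintegral_const_mul' _ _ ENNReal.ofReal_ne_top]
            simp_rw [hsc2]
          · ring
      _ ≤ _ := by gcongr
  have h2 : (1 / 2 : ℝ≥0∞) * I ≠ ∞ := ENNReal.mul_ne_top (by simp) hfin
  have h3 : I = 1 / 2 * I + 1 / 2 * I := by
    rw [← add_mul, ENNReal.add_halves, one_mul]
  have h4 : 1 / 2 * I ≤ ENNReal.ofReal ((3 / ε) ^ p) * ∫⁻ x, ENNReal.ofReal (S x ^ p) := by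
    have h5 : 1 / 2 * I + 1 / 2 * I ≤ ENNReal.ofReal ((3 / ε) ^ p) * (∫⁻ x, ENNReal.ofReal (S x ^ p))
      + 1 / 2 * I := by rw [← h3]; exact h1
    exact (ENNReal.add_le_add_iff_right h2).1 h5
  calc I = 2 * (1 / 2 * I) := by rw [two_mul]; exact h3
    _ ≤ _ := by rw [mul_assoc]; gcongr

variable {q : ℕ → ℝ → ℤ} {σ : ℕ → ℝ → ℝ} {d : ℕ → ℝ → ℂ}

lemma trunc_eq_self {a : ℕ → ℂ} {n : ℕ} (ha : ∀ i, n ≤ i → a i = 0) : trunc n a = a := by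
  ext i; unfold trunc; split_ifs with h
  · rfl
  · exact (ha i (by omega)).symm

/-- the pointwise part -/
lemma good_point {r t : ℝ} (hr : 0 < r) (ht : 1 ≤ t) {lam : ℝ≥0} (hlam : 0 < lam) (a : ℕ → ℂ) (n : ℕ)
    (ha : ∀ i, n ≤ i → a i = 0) (e : ℝ≥0∞) (he : e ≤ lam)
    (hS : ∑ i ∈ Finset.range n, ‖a i‖ₑ ^ r ≤ e ^ r) (hV : 3 * (lam : ℝ≥0∞) < VV t a) (b : ℕ → ℂ)
    (hb : ∀ i, (lam : ℝ≥0∞) < VV t (trunc i a) → ∑ j ∈ Finset.range (i + 1), ‖a j‖ₑ ^ r ≤ e ^ r →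
      b i = ((lam⁻¹ : ℝ≥0) : ℂ) * a i)
    (hb' : ∀ i, ¬ (lam : ℝ≥0∞) < VV t (trunc i a) → b i = 0) :
    1 < VV t b := by
  have hP : ∃ m, (lam : ℝ≥0∞) < VV t (trunc m a) := by
    refine ⟨n, ?_⟩
    rw [trunc_eq_self ha]
    refine lt_of_le_of_lt ?_ hV
    calc (lam : ℝ≥0∞) = 1 * lam := (one_mul _).symm
      _ ≤ _ := by gcongr; norm_num
  classical
  have hm := Nat.find_spec hP
  have hmin := fun k => Nat.find_min hP (m := k)
  set M := Nat.find hP with hM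
  rcases hM' : M with _ | m
  · exfalso
    rw [hM'] at hm
    have : VV t (trunc 0 a) ≤ 0 := (VV_le_sum ht _).trans (by simp [trunc])
    exact absurd hm (not_lt.2 (this.trans (zero_le)))
  rw [hM'] at hm hmin
  have h1 : VV t (trunc m a) ≤ lam := not_lt.1 (hmin m (by omega))
  have ham : ‖a m‖ₑ ≤ lam := by
    by_cases hmn : m < n
    · refine le_trans ?_ he
      have : ‖a m‖ₑ ^ r ≤ e ^ r := le_trans (Finset.single_le_sum (f := fun i => ‖a i‖ₑ ^ r)
        (fun _ _ => zero_le) (Finset.mem_range.2 hmn)) hS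
      exact (ENNReal.rpow_le_rpow_iff hr).1 this
    · rw [ha m (by omega)]; simp
  set s : ℕ → ℂ := fun i => if i = m then a m else 0 with hs
  set w : ℕ → ℂ := fun i => if m + 1 ≤ i then a i else 0 with hw
  have hdec : a = (trunc m a + s) + w := by
    ext i
    simp only [Pi.add_apply, trunc, hs, hw]
    rcases lt_trichotomy i m with h | h | h
    · rw [if_pos h, if_neg (by omega), if_neg (by omega)]; simp
    · subst h; simp
    · rw [if_neg (by omega), if_neg (by omega), if_pos (by omega)]; simp
  have hsV : VV t s ≤ lam := by
    refine (VV_le_sum ht s).trans ?_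
    rw [tsum_eq_single m]
    · simpa [hs] using ham
    · intro i hi; simp [hs, hi]
  have hbw : b = fun i => ((lam⁻¹ : ℝ≥0) : ℂ) * w i := by
    ext i
    simp only [hw]
    split_ifs with h
    · by_cases hin : i < n
      · refine hb i (lt_of_lt_of_le hm (VV_trunc_mono t a h)) (le_trans ?_ hS)
        exact Finset.sum_le_sum_of_subset (Finset.range_mono hin)
      · by_cases hc : (lam : ℝ≥0∞) < VV t (trunc i a)
        · refine hb i hc (le_trans (le_of_eq ?_) hS)
          refine (Finset.sum_subset (Finset.range_mono (by omega)) ?_).symm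
          intro j _ hj
          rw [ha j (by simpa using hj)]; simp [hr]
        · rw [hb' i hc, ha i (by omega), mul_zero]
    · rw [hb' i (hmin i (by omega)), mul_zero]
  have hwV : (lam : ℝ≥0∞) < VV t w := by
    by_contra hcon
    push Not at hcon
    refine absurd hV (not_lt.2 ?_)
    calc VV t a = VV t ((trunc m a + s) + w) := by rw [← hdec]
      _ ≤ VV t (trunc m a) + VV t s + VV t w :=
          (VV_add_le ht _ _).trans (add_le_add (VV_add_le ht _ _) le_rfl)
      _ ≤ lam + lam + lam := by gcongr
      _ = 3 * lam := by ring
  rw [hbw, VV_smul ht]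
  have hn : ‖((lam⁻¹ : ℝ≥0) : ℂ)‖ₑ = ((lam⁻¹ : ℝ≥0) : ℝ≥0∞) := by
    rw [enorm_eq_nnnorm]
    congr 1
    ext
    simp
  rw [hn]
  calc (1 : ℝ≥0∞) = ((lam⁻¹ : ℝ≥0) : ℝ≥0∞) * lam := by
        rw [← ENNReal.coe_mul, inv_mul_cancel₀ hlam.ne']; simp
    _ < _ := by
        refine (ENNReal.mul_lt_mul_iff_right ?_ ENNReal.coe_ne_top).2 hwV
        simpa using hlam.ne'

lemma good_sets {r t : ℝ} (h : Adm r t) : ∃ C : ℝ≥0, ∀ (q : ℕ → ℝ → ℤ) (σ : ℕ → ℝ → ℝ)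
    (d : ℕ → ℝ → ℂ), Dy q σ → Df q σ d → ∀ n, (∀ i, n ≤ i → ∀ x, d i x = 0) →
    ∀ ε lam : ℝ≥0, ε ≤ 1 → 0 < lam →
    volume {x | 3 * (lam : ℝ≥0∞) < VV t (fun i => d i x)} ≤
      volume {x | ((ε * lam : ℝ≥0) : ℝ≥0∞) < (∑ i ∈ Finset.range n, ‖d i x‖ₑ ^ r) ^ (1 / r)}
      + (C * (ε : ℝ≥0∞) ^ r) * volume {x | (lam : ℝ≥0∞) < VV t (fun i => d i x)} := by
  obtain ⟨C, hC⟩ := weak_type h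
  have ht : 1 ≤ t := by rcases h with ⟨_, (⟨h, _⟩ | ⟨h, _⟩)⟩ <;> linarith
  have hr : 0 < r := by linarith [h.1]
  refine ⟨C, fun q σ d H D n hn ε lam hε hlam => ?_⟩
  classical
  set e : ℝ≥0∞ := ((ε * lam : ℝ≥0) : ℝ≥0∞) with he
  have hel : e ≤ lam := by
    rw [he]; exact_mod_cast (mul_le_of_le_one_left (zero_le) hε)
  set c : ℕ → ℝ → ℂ := fun i x => if (lam : ℝ≥0∞) < VV t (trunc i (fun j => d j x)) ∧
    ∑ j ∈ Finset.range (i + 1), ‖d j x‖ₑ ^ r ≤ e ^ r then ((lam⁻¹ : ℝ≥0) : ℂ) else 0 with hc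
  have hnc : ‖((lam⁻¹ : ℝ≥0) : ℂ)‖ₑ = ((lam⁻¹ : ℝ≥0) : ℝ≥0∞) := by
    rw [enorm_eq_nnnorm]
    congr 1
    ext
    simp
  have hli : ((lam⁻¹ : ℝ≥0) : ℝ≥0∞) * lam = 1 := by
    rw [← ENNReal.coe_mul, inv_mul_cancel₀ hlam.ne']; simp
  have D' : Df q σ (fun i x => c i x * d i x) := by
    refine D.mul_pred H c fun i x y hxy => ?_
    have h1 : trunc i (fun j => d j x) = trunc i (fun j => d j y) := by
      ext j; unfold trunc; split_ifs with hj
      · exact D.adapted_lt H hj hxy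
      · rfl
    have h2 : ∑ j ∈ Finset.range (i + 1), ‖d j x‖ₑ ^ r = ∑ j ∈ Finset.range (i + 1), ‖d j y‖ₑ ^ r := by
      refine Finset.sum_congr rfl fun j hj => ?_
      rcases (Nat.lt_succ_iff.1 (Finset.mem_range.1 hj)).eq_or_lt with hh | hh
      · subst hh; rw [← ofReal_norm, D.pred _ x y hxy, ofReal_norm]
      · rw [D.adapted_lt H hh hxy]
    simp only [hc, h1, h2]
  have hd1 : ∀ i x, ‖c i x * d i x‖ ≤ 1 := by
    intro i x
    simp only [hc]
    split_ifs with hh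
    · have h1 : ‖d i x‖ₑ ≤ e := by
        refine (ENNReal.rpow_le_rpow_iff hr).1 (le_trans ?_ hh.2)
        exact Finset.single_le_sum (f := fun i => ‖d i x‖ₑ ^ r) (fun _ _ => zero_le) (by simp)
      have h2 : ‖((lam⁻¹ : ℝ≥0) : ℂ) * d i x‖ₑ ≤ 1 := by
        rw [enorm_mul, hnc]
        calc _ ≤ ((lam⁻¹ : ℝ≥0) : ℝ≥0∞) * lam := by gcongr; exact h1.trans hel
          _ = 1 := hli
      rw [← ofReal_norm] at h2
      exact ENNReal.ofReal_le_one.1 h2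
    · simp
  have hw := hC q σ _ H D' n (fun i hi x => by rw [hn i hi x, mul_zero]) hd1
  have hsub : {x | 3 * (lam : ℝ≥0∞) < VV t (fun i => d i x)} ⊆
      {x | e < (∑ i ∈ Finset.range n, ‖d i x‖ₑ ^ r) ^ (1 / r)} ∪
      {x | 1 < VV t (fun i => c i x * d i x)} := by
    intro x hx
    by_cases hs : e < (∑ i ∈ Finset.range n, ‖d i x‖ₑ ^ r) ^ (1 / r)
    · exact Or.inl hs
    · right
      have hs' : ∑ i ∈ Finset.range n, ‖d i x‖ₑ ^ r ≤ e ^ r := by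
        have := ENNReal.rpow_le_rpow (not_lt.1 hs) hr.le
        rwa [← ENNReal.rpow_mul, one_div, inv_mul_cancel₀ hr.ne', ENNReal.rpow_one] at this
      refine good_point hr ht hlam (fun i => d i x) n (fun i hi => hn i hi x) e hel hs' hx _ ?_ ?_
      · intro i h1 h2; simp only [hc]; rw [if_pos ⟨h1, h2⟩]
      · intro i h1; simp only [hc]; rw [if_neg (fun hh => h1 hh.1), zero_mul]
  refine (measure_mono hsub).trans ((measure_union_le _ _).trans ?_)
  gcongr
  refine hw.trans ?_
  rw [mul_assoc]
  gcongr
  have hVm : Measurable (fun x => VV t (fun i => d i x)) :=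
    H.measurable_of_fiber n _ (fun x y hxy => by
      congr 1; ext i
      by_cases hi : i < n
      · exact D.adapted_lt H hi hxy
      · rw [hn i (by omega), hn i (by omega)])
  have hset : MeasurableSet {x | (lam : ℝ≥0∞) < VV t (fun i => d i x)} :=
    measurableSet_lt measurable_const hVm
  rw [← setLIntegral_const, ← lintegral_indicator hset]
  refine lintegral_mono fun x => ?_
  have : ∀ m, ∑ i ∈ Finset.range m, ‖c i x * d i x‖ₑ ^ r ≤
      {x | (lam : ℝ≥0∞) < VV t (fun i => d i x)}.indicator (fun _ => (ε : ℝ≥0∞) ^ r) x := by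
    intro m
    induction m with
    | zero => simp
    | succ m ih =>
      by_cases hh : (lam : ℝ≥0∞) < VV t (trunc m (fun j => d j x)) ∧
          ∑ j ∈ Finset.range (m + 1), ‖d j x‖ₑ ^ r ≤ e ^ r
      · have hlx : (lam : ℝ≥0∞) < VV t (fun i => d i x) := by
          refine lt_of_lt_of_le hh.1 ((VV_trunc_mono t _ (le_max_left m n)).trans (le_of_eq ?_))
          rw [trunc_eq_self]
          intro i hi; exact hn i (le_trans (le_max_right _ _) hi) x
        rw [Set.indicator_of_mem (show x ∈ {x | (lam : ℝ≥0∞) < VV t (fun i => d i x)} from hlx)]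
        calc _ ≤ ∑ i ∈ Finset.range (m + 1), ((lam⁻¹ : ℝ≥0) : ℝ≥0∞) ^ r * ‖d i x‖ₑ ^ r := by
              gcongr with i hi
              rw [← ENNReal.mul_rpow_of_nonneg _ _ hr.le, enorm_mul]
              gcongr
              simp only [hc]
              split_ifs
              · exact hnc.le
              · simp
          _ ≤ ((lam⁻¹ : ℝ≥0) : ℝ≥0∞) ^ r * e ^ r := by
              rw [← Finset.mul_sum]; gcongr; exact hh.2
          _ = (ε : ℝ≥0∞) ^ r := by
              rw [← ENNReal.mul_rpow_of_nonneg _ _ hr.le, he, ENNReal.coe_mul, mul_left_comm, hli,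
                mul_one]
      · rw [Finset.sum_range_succ]
        have : c m x = 0 := by simp only [hc]; rw [if_neg hh]
        rw [this]
        simpa [hr] using ih
  exact this n

lemma good_lambda {r t p : ℝ} (h : Adm r t) (hp : 0 < p) : ∃ C : ℝ≥0, ∀ (q : ℕ → ℝ → ℤ)
    (σ : ℕ → ℝ → ℝ) (d : ℕ → ℝ → ℂ), Dy q σ → Df q σ d → ∀ n, (∀ i, n ≤ i → ∀ x, d i x = 0) →
    ∫⁻ x, (VV t (fun i => d i x)) ^ p
      ≤ C * ∫⁻ x, ((∑ i ∈ Finset.range n, ‖d i x‖ₑ ^ r) ^ (1 / r)) ^ p := by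
  obtain ⟨C, hC⟩ := good_sets h
  have ht : 1 ≤ t := by rcases h with ⟨_, (⟨h, _⟩ | ⟨h, _⟩)⟩ <;> linarith
  have hr : 0 < r := by linarith [h.1]
  obtain ⟨ε, hε0, hε1, hεK⟩ : ∃ ε : ℝ≥0, 0 < ε ∧ ε ≤ 1 ∧
      (C * (ε : ℝ≥0∞) ^ r) * ENNReal.ofReal (3 ^ p) ≤ 1 / 2 := by
    set B : ℝ := 2 * (C + 1) * 3 ^ p with hB
    have h3 : (1 : ℝ) ≤ 3 ^ p := Real.one_le_rpow (by norm_num) hp.le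
    have hB1 : 1 ≤ B := by
      have : (0 : ℝ) ≤ C := C.2
      rw [hB]; nlinarith
    refine ⟨Real.toNNReal (B⁻¹ ^ (1 / r)), ?_, ?_, ?_⟩
    · rw [Real.toNNReal_pos]; positivity
    · rw [Real.toNNReal_le_one]
      exact Real.rpow_le_one (by positivity) (inv_le_one_of_one_le₀ hB1) (by positivity)
    · have e1 : ((Real.toNNReal (B⁻¹ ^ (1 / r)) : ℝ≥0) : ℝ≥0∞) ^ r = ENNReal.ofReal (B⁻¹) := by
        change (ENNReal.ofReal (B⁻¹ ^ (1 / r))) ^ r = _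
        rw [ENNReal.ofReal_rpow_of_nonneg (by positivity) hr.le, ← Real.rpow_mul (by positivity),
          one_div, inv_mul_cancel₀ hr.ne', Real.rpow_one]
      rw [e1, ← ENNReal.ofReal_coe_nnreal (p := C), ← ENNReal.ofReal_mul (NNReal.coe_nonneg C),
        ← ENNReal.ofReal_mul (by positivity)]
      have : (1 / 2 : ℝ≥0∞) = ENNReal.ofReal (1 / 2) := by
        rw [ENNReal.ofReal_div_of_pos (by norm_num)]; simp
      rw [this]
      apply ENNReal.ofReal_le_ofReal
      have hC0 : (0 : ℝ) ≤ C := C.2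
      rw [mul_assoc, inv_mul_eq_div, ← mul_div_assoc, div_le_iff₀ (by positivity), hB]
      nlinarith
  refine ⟨2 * Real.toNNReal ((3 / ε) ^ p) + 1, fun q σ d H D n hn => ?_⟩
  have hSm : Measurable (fun x => (∑ i ∈ Finset.range n, ‖d i x‖ₑ ^ r) ^ (1 / r)) :=
    (Finset.measurable_sum _ (fun i _ => (D.measurable H i).enorm.pow_const r)).pow_const _
  have hVm : Measurable (fun x => VV t (fun i => d i x)) :=
    H.measurable_of_fiber n _ (fun x y hxy => by
      congr 1; ext i
      by_cases hi : i < n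
      · exact D.adapted_lt H hi hxy
      · rw [hn i (by omega), hn i (by omega)])
  have hsum : ∀ x, ∑' i, ‖d i x‖ₑ = ∑ i ∈ Finset.range n, ‖d i x‖ₑ := fun x =>
    tsum_eq_sum (fun i hi => by rw [hn i (by simpa using hi) x]; simp)
  have hVle : ∀ x, VV t (fun i => d i x) ≤ n * (∑ i ∈ Finset.range n, ‖d i x‖ₑ ^ r) ^ (1 / r) := by
    intro x
    refine (VV_le_sum ht _).trans ?_
    rw [hsum]
    calc _ ≤ ∑ i ∈ Finset.range n, (∑ i ∈ Finset.range n, ‖d i x‖ₑ ^ r) ^ (1 / r) := by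
          refine Finset.sum_le_sum fun i hi => ?_
          have : ‖d i x‖ₑ = (‖d i x‖ₑ ^ r) ^ (1 / r) := by
            rw [← ENNReal.rpow_mul, mul_one_div_cancel hr.ne', ENNReal.rpow_one]
          rw [this]
          gcongr
          exact Finset.single_le_sum (f := fun i => ‖d i x‖ₑ ^ r) (fun _ _ => zero_le) hi
      _ = _ := by simp
  have hVfin : ∀ x, VV t (fun i => d i x) ≠ ∞ := fun x =>
    ne_top_of_le_ne_top (by rw [hsum]; exact ENNReal.sum_ne_top.2 (fun i _ => by simp)) (VV_le_sum ht _)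
  have hSfin : ∀ x, (∑ i ∈ Finset.range n, ‖d i x‖ₑ ^ r) ^ (1 / r) ≠ ∞ := fun x =>
    ENNReal.rpow_ne_top_of_nonneg (by positivity) (ENNReal.sum_ne_top.2 (fun i _ =>
      ENNReal.rpow_ne_top_of_nonneg hr.le (by simp)))
  have conv : ∀ z : ℝ≥0∞, z ≠ ∞ → z ^ p = ENNReal.ofReal (z.toReal ^ p) := by
    intro z hz
    rw [← ENNReal.ofReal_rpow_of_nonneg ENNReal.toReal_nonneg hp.le, ENNReal.ofReal_toReal hz]
  by_cases hI : ∫⁻ x, ((∑ i ∈ Finset.range n, ‖d i x‖ₑ ^ r) ^ (1 / r)) ^ p = ∞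
  · rw [hI, ENNReal.mul_top]
    · exact le_top
    · exact_mod_cast (by positivity : (2 * Real.toNNReal ((3 / ε) ^ p) + 1 : ℝ≥0) ≠ 0)
  have hIV : ∫⁻ x, (VV t (fun i => d i x)) ^ p ≠ ∞ := by
    refine ne_top_of_le_ne_top ?_ (lintegral_mono fun x => ENNReal.rpow_le_rpow (hVle x) hp.le)
    simp_rw [ENNReal.mul_rpow_of_nonneg _ _ hp.le]
    rw [lintegral_const_mul' _ _ (ENNReal.rpow_ne_top_of_nonneg hp.le (by simp))]
    exact ENNReal.mul_ne_top (ENNReal.rpow_ne_top_of_nonneg hp.le (by simp)) hI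
  have e1 : ∀ x, (VV t (fun i => d i x)) ^ p = _ := fun x => conv _ (hVfin x)
  have e2 : ∀ x, ((∑ i ∈ Finset.range n, ‖d i x‖ₑ ^ r) ^ (1 / r)) ^ p = _ := fun x => conv _ (hSfin x)
  simp_rw [e1] at hIV ⊢
  simp_rw [e2]
  refine (good_lambda_int (fun _ => ENNReal.toReal_nonneg) (fun _ => ENNReal.toReal_nonneg)
    hVm.ennreal_toReal hSm.ennreal_toReal hp (ε := ε) hε0 (C * (ε : ℝ≥0∞) ^ r) hεK ?_ hIV).trans ?_
  · intro lam hlam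
    have := hC q σ d H D n hn ε (Real.toNNReal lam) hε1 (Real.toNNReal_pos.2 hlam)
    have cv : ∀ (s : ℝ) (z : ℝ≥0∞), 0 ≤ s → z ≠ ∞ → (s < z.toReal ↔ ENNReal.ofReal s < z) :=
      fun s z hs hz => (ENNReal.ofReal_lt_iff_lt_toReal hs hz).symm
    have a1 : ENNReal.ofReal (3 * lam) = 3 * ((Real.toNNReal lam : ℝ≥0) : ℝ≥0∞) := by
      rw [ENNReal.ofReal_mul (by norm_num)]; simp [ENNReal.ofReal]
    have a2 : ENNReal.ofReal (ε * lam) = ((ε * Real.toNNReal lam : ℝ≥0) : ℝ≥0∞) := by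
      rw [ENNReal.ofReal_mul (by positivity)]; simp [ENNReal.ofReal]
    simp only [cv _ _ (by positivity : (0 : ℝ) ≤ 3 * lam) (hVfin _),
      cv _ _ (by positivity : (0 : ℝ) ≤ ε * lam) (hSfin _), cv _ _ hlam.le (hVfin _), a1, a2]
    exact this
  · gcongr
    push_cast
    exact le_self_add

end LPX

namespace LPX

/-! ### The dyadic structure -/

/-- index of the dyadic interval of level `j` containing `x` -/
def dq (j : ℤ) (x : ℝ) : ℤ := ⌊x * (2 : ℝ) ^ j⌋
/-- swaps the two halves of each dyadic interval of level `j` -/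
def sig (j : ℤ) (x : ℝ) : ℝ :=
  if Even (dq (j + 1) x) then x + (2 : ℝ) ^ (-(j + 1)) else x - (2 : ℝ) ^ (-(j + 1))

lemma dq_div (j : ℤ) (x : ℝ) : dq j x = dq (j + 1) x / 2 := by
  unfold dq
  have h : x * (2 : ℝ) ^ j = (x * (2 : ℝ) ^ (j + 1)) / (2 : ℕ) := by
    rw [zpow_add₀ (by norm_num)]; push_cast; ring
  rw [h, Int.floor_div_natCast]
  simp

lemma dq_add (j : ℤ) (x : ℝ) : dq j (x + (2 : ℝ) ^ (-j)) = dq j x + 1 := by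
  unfold dq
  rw [add_mul, ← zpow_add₀ (by norm_num)]
  simp

lemma dq_sub (j : ℤ) (x : ℝ) : dq j (x - (2 : ℝ) ^ (-j)) = dq j x - 1 := by
  unfold dq
  rw [sub_mul, ← zpow_add₀ (by norm_num)]
  simp

lemma dq_measurable (j : ℤ) : Measurable (dq j) :=
  (measurable_id.mul_const _).floor

lemma dq_sig_even {j : ℤ} {x : ℝ} (h : Even (dq (j + 1) x)) :
    dq (j + 1) (sig j x) = dq (j + 1) x + 1 := by
  unfold sig; rw [if_pos h, dq_add]

lemma dq_sig_odd {j : ℤ} {x : ℝ} (h : ¬ Even (dq (j + 1) x)) :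
    dq (j + 1) (sig j x) = dq (j + 1) x - 1 := by
  unfold sig; rw [if_neg h, dq_sub]

lemma dq_sig (j : ℤ) (x : ℝ) : dq j (sig j x) = dq j x := by
  rw [dq_div, dq_div j x]
  by_cases h : Even (dq (j + 1) x)
  · rw [dq_sig_even h]
    obtain ⟨k, hk⟩ := h
    omega
  · rw [dq_sig_odd h]
    obtain ⟨k, hk⟩ := Int.not_even_iff_odd.1 h
    omega

lemma sig_inv (j : ℤ) (h : ℝ → ℝ≥0∞) (hh : Measurable h) : ∫⁻ x, h (sig j x) = ∫⁻ x, h x := by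
  set E : Set ℝ := {x | Even (dq (j + 1) x)} with hE
  have hEm : MeasurableSet E := dq_measurable (j + 1) (MeasurableSet.of_discrete (s := {k : ℤ | Even k}))
  have key : ∀ x, h (sig j x) = (Eᶜ.indicator h) (x + (2 : ℝ) ^ (-(j + 1)))
      + (E.indicator h) (x - (2 : ℝ) ^ (-(j + 1))) := by
    intro x
    by_cases hx : Even (dq (j + 1) x)
    · rw [Set.indicator_of_mem, Set.indicator_of_notMem, add_zero]
      · unfold sig; rw [if_pos hx]
      · change ¬ Even _
        rw [dq_sub]
        rw [Int.not_even_iff_odd]; exact hx.sub_odd (by decide)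
      · change ¬ Even _
        rw [dq_add, Int.not_even_iff_odd]; exact hx.add_one
    · rw [Set.indicator_of_notMem, Set.indicator_of_mem, zero_add]
      · unfold sig; rw [if_neg hx]
      · change Even _
        rw [dq_sub]
        exact (Int.not_even_iff_odd.1 hx).sub_odd (by decide)
      · change ¬ ¬ Even _
        rw [dq_add, not_not]; exact (Int.not_even_iff_odd.1 hx).add_one
  simp_rw [key]
  have m1 : Measurable (Eᶜ.indicator h) := hh.indicator hEm.compl
  have m2 : Measurable (E.indicator h) := hh.indicator hEm
  have m3 : Measurable (fun x => Eᶜ.indicator h (x + (2 : ℝ) ^ (-(j + 1)))) :=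
    m1.comp (measurable_id.add_const _)
  rw [lintegral_add_left m3,
    lintegral_add_right_eq_self (μ := volume) (Eᶜ.indicator h) _,
    lintegral_sub_right_eq_self (μ := volume) (E.indicator h) _, ← lintegral_add_left m1]
  congr 1; ext x
  by_cases hx : x ∈ E <;> simp [hx]

lemma Dy_dq (j0 : ℤ) : Dy (fun n : ℕ => dq (n + j0)) (fun n : ℕ => sig (n + j0)) where
  meas n := dq_measurable _
  nest n x y h := by
    have e : ((n + 1 : ℕ) : ℤ) + j0 = (n + j0) + 1 := by push_cast; ring
    simp only [e] at h
    rw [dq_div, dq_div _ y, h]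
  inv n h hh := sig_inv _ h hh
  q_σ n x := dq_sig _ x

/-- martingale difference of the derivative of `G` at level `j` -/
def DD (j : ℤ) (G : ℝ → ℂ) (x : ℝ) : ℂ :=
  (if Even (dq (j + 1) x) then 1 else -1) * ((2 : ℂ) ^ j *
    (2 * G ((2 * dq j x + 1) * (2 : ℝ) ^ (-(j + 1))) - G (dq j x * (2 : ℝ) ^ (-j))
      - G ((dq j x + 1) * (2 : ℝ) ^ (-j))))

/-- average of the derivative of `G` at level `j` -/
def EE (j : ℤ) (G : ℝ → ℂ) (x : ℝ) : ℂ :=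
  (2 : ℂ) ^ j * (G ((dq j x + 1) * (2 : ℝ) ^ (-j)) - G (dq j x * (2 : ℝ) ^ (-j)))

lemma DD_eq (j : ℤ) (G : ℝ → ℂ) (x : ℝ) : DD j G x = EE (j + 1) G x - EE j G x := by
  unfold DD EE
  have e2 : (2 : ℂ) ^ (j + 1) = 2 * 2 ^ j := by rw [zpow_add₀ (by norm_num)]; ring
  have e3 : (2 : ℝ) ^ (-j) = 2 * (2 : ℝ) ^ (-(j + 1)) := by
    rw [neg_add, zpow_add₀ (by norm_num)]; norm_num; ring
  have hd := dq_div j x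
  split_ifs with h
  · obtain ⟨k, hk⟩ := h
    have h1 : dq j x = k := by omega
    rw [h1, hk, e2, e3]
    push_cast
    rw [show ((k : ℝ) + k + 1) = 2 * k + 1 by ring, show ((k : ℝ) + k) * 2 ^ (-(j + 1))
      = k * (2 * 2 ^ (-(j + 1))) by ring]
    ring
  · obtain ⟨k, hk⟩ := Int.not_even_iff_odd.1 h
    have h1 : dq j x = k := by omega
    rw [h1, hk, e2, e3]
    push_cast
    rw [show ((2 : ℝ) * k + 1 + 1) * 2 ^ (-(j + 1)) = (k + 1) * (2 * 2 ^ (-(j + 1))) by ring]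
    ring

lemma Df_DD (j0 : ℤ) (G : ℕ → ℝ → ℂ) : Df (fun n : ℕ => dq (n + j0)) (fun n : ℕ => sig (n + j0))
    (fun n => DD (n + j0) (G n)) where
  adapted n x y h := by
    have e : ((n + 1 : ℕ) : ℤ) + j0 = (n + j0) + 1 := by push_cast; ring
    simp only [e] at h
    have h2 : dq (n + j0) x = dq (n + j0) y := by rw [dq_div, dq_div _ y, h]
    simp only [DD, h, h2]
  anti n x := by
    simp only [DD, dq_sig]
    by_cases h : Even (dq (n + j0 + 1) x)
    · rw [dq_sig_even h, if_pos h, if_neg]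
      · ring
      · rw [Int.not_even_iff_odd]; exact h.add_one
    · rw [dq_sig_odd h, if_neg h, if_pos]
      · ring
      · exact (Int.not_even_iff_odd.1 h).sub_odd (by decide)
  pred n x y h := by
    simp only [DD, norm_mul, h]
    congr 1
    split_ifs <;> simp

lemma dq_le (j : ℤ) (x : ℝ) : dq j x * (2 : ℝ) ^ (-j) ≤ x := by
  rw [zpow_neg, ← div_eq_mul_inv, div_le_iff₀ (by positivity)]
  exact Int.floor_le _

lemma lt_dq (j : ℤ) (x : ℝ) : x < (dq j x + 1) * (2 : ℝ) ^ (-j) := by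
  rw [zpow_neg, ← div_eq_mul_inv, lt_div_iff₀ (by positivity)]
  exact Int.lt_floor_add_one _

lemma dq_abs (j : ℤ) (x z : ℝ) (h1 : dq j x * (2 : ℝ) ^ (-j) ≤ z)
    (h2 : z ≤ (dq j x + 1) * (2 : ℝ) ^ (-j)) : |z - x| ≤ (2 : ℝ) ^ (-j) := by
  have := dq_le j x
  have := lt_dq j x
  rw [abs_le]; constructor <;> nlinarith

lemma DD_mid (j : ℤ) (x : ℝ) : (2 * dq j x + 1 : ℝ) * (2 : ℝ) ^ (-(j + 1))
    = dq j x * (2 : ℝ) ^ (-j) + (2 : ℝ) ^ (-(j + 1)) ∧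
    ((dq j x : ℝ) + 1) * (2 : ℝ) ^ (-j)
    = dq j x * (2 : ℝ) ^ (-j) + (2 : ℝ) ^ (-(j + 1)) + (2 : ℝ) ^ (-(j + 1)) := by
  have e3 : (2 : ℝ) ^ (-j) = 2 * (2 : ℝ) ^ (-(j + 1)) := by
    rw [neg_add, zpow_add₀ (by norm_num)]; norm_num; ring
  rw [e3]; constructor <;> ring

lemma norm_DD (j : ℤ) (G : ℝ → ℂ) (x : ℝ) : ‖DD j G x‖ = (2 : ℝ) ^ j *
    ‖2 * G ((2 * dq j x + 1) * (2 : ℝ) ^ (-(j + 1))) - G (dq j x * (2 : ℝ) ^ (-j))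
      - G ((dq j x + 1) * (2 : ℝ) ^ (-j))‖ := by
  unfold DD
  rw [norm_mul, norm_mul]
  have : ‖(if Even (dq (j + 1) x) then (1 : ℂ) else -1)‖ = 1 := by split_ifs <;> simp
  rw [this, one_mul, norm_zpow]
  simp

lemma norm_DD_le_sup (j : ℤ) (G : ℝ → ℂ) (x M : ℝ)
    (hM : ∀ z, |z - x| ≤ (2 : ℝ) ^ (-j) → ‖G z‖ ≤ M) : ‖DD j G x‖ ≤ (2 : ℝ) ^ j * (4 * M) := by
  rw [norm_DD]
  gcongr
  have hp : (0 : ℝ) < (2 : ℝ) ^ (-(j + 1)) := by positivity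
  obtain ⟨e1, e2⟩ := DD_mid j x
  rw [e1, e2]
  have h1 := hM _ (dq_abs j x (dq j x * (2 : ℝ) ^ (-j)) le_rfl (by rw [e2]; linarith))
  have h2 := hM _ (dq_abs j x (dq j x * (2 : ℝ) ^ (-j) + (2 : ℝ) ^ (-(j + 1))) (by linarith) (by rw [e2]; linarith))
  have h3 := hM _ (dq_abs j x (dq j x * (2 : ℝ) ^ (-j) + (2 : ℝ) ^ (-(j + 1)) + (2 : ℝ) ^ (-(j + 1))) (by linarith) (by rw [e2]))
  refine (norm_sub_le _ _).trans ?_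
  refine (add_le_add (norm_sub_le _ _) le_rfl).trans ?_
  rw [norm_mul]
  simp only [Complex.norm_ofNat]
  linarith

lemma norm_DD_le_deriv (j : ℤ) (G f f' : ℝ → ℂ) (hG : ∀ z, HasDerivAt G (f z) z)
    (hf : ∀ z, HasDerivAt f (f' z) z) (x M : ℝ)
    (hM : ∀ z, |z - x| ≤ (2 : ℝ) ^ (-j) → ‖f' z‖ ≤ M) : ‖DD j G x‖ ≤ (2 : ℝ) ^ (-j) * M := by
  rw [norm_DD]
  have hp : (0 : ℝ) < (2 : ℝ) ^ (-(j + 1)) := by positivity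
  obtain ⟨e1, e2⟩ := DD_mid j x
  set h := (2 : ℝ) ^ (-(j + 1)) with hh
  set a := dq j x * (2 : ℝ) ^ (-j) with ha
  rw [e1, e2]
  have hM0 : 0 ≤ M := (norm_nonneg _).trans (hM x (by rw [sub_self, abs_zero]; positivity))
  have step1 : ∀ y ∈ Set.Icc a (a + h), ‖f (y + h) - f y‖ ≤ M * h := by
    intro y hy
    have := norm_image_sub_le_of_norm_deriv_le_segment' (f := f) (f' := f') (a := y) (b := y + h) (C := M)
      (fun z _ => (hf z).hasDerivWithinAt) (fun z hz => hM z (dq_abs j x z (hy.1.trans hz.1)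
        (by rw [e2]; linarith [hz.2, hy.2]))) (y + h) ⟨by linarith, le_rfl⟩
    simpa using this
  have step2 := norm_image_sub_le_of_norm_deriv_le_segment' (f := fun y => G (y + h) - G y)
    (f' := fun y => f (y + h) - f y) (a := a) (b := a + h) (C := M * h)
      (fun z _ => (((hG (z + h)).comp_add_const z h).sub (hG z)).hasDerivWithinAt)
      (fun z hz => step1 z ⟨hz.1, hz.2.le⟩) (a + h) ⟨by linarith, le_rfl⟩
  have e4 : 2 * G (a + h) - G a - G (a + h + h) = -((G (a + h + h) - G (a + h)) - (G (a + h) - G a)) := by ring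
  rw [e4, norm_neg]
  have e5 : (2 : ℝ) ^ j * (M * h * h) ≤ (2 : ℝ) ^ (-j) * M := by
    have e3 : h = (2 : ℝ) ^ (-j) / 2 := by
      rw [hh, neg_add, zpow_add₀ (by norm_num)]; norm_num; ring
    have e6 : (2 : ℝ) ^ j * (2 : ℝ) ^ (-j) = 1 := by rw [← zpow_add₀ (by norm_num)]; simp
    calc (2 : ℝ) ^ j * (M * h * h) = ((2 : ℝ) ^ j * (2 : ℝ) ^ (-j)) * ((2 : ℝ) ^ (-j) * M) / 4 := by
          rw [e3]; ring
      _ = ((2 : ℝ) ^ (-j) * M) / 4 := by rw [e6, one_mul]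
      _ ≤ _ := by
          have : 0 ≤ (2 : ℝ) ^ (-j) * M := by positivity
          linarith
  refine le_trans ?_ e5
  gcongr
  simpa using step2

open Filter Topology in
lemma two_zpow_tendsto : Tendsto (fun J : ℤ => (2 : ℝ) ^ (-J)) atTop (𝓝 0) := by
  have h := (tendsto_rpow_atTop_of_base_lt_one (1 / 2 : ℝ) (by norm_num) (by norm_num)).comp
    (tendsto_intCast_atTop_atTop (R := ℝ))
  refine h.congr fun J => ?_
  simp only [Function.comp]
  rw [Real.rpow_intCast, zpow_neg, one_div, inv_zpow]

open Filter Topology in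
lemma EE_tendsto (G : ℝ → ℂ) (x : ℝ) (f : ℂ) (hG : HasDerivAt G f x) :
    Tendsto (fun J : ℤ => EE J G x) atTop (𝓝 f) := by
  rw [Metric.tendsto_nhds]
  intro ε hε
  have ho := hG.isLittleO
  have h1 := ho.def (c := ε / 4) (by positivity)
  rw [Metric.eventually_nhds_iff] at h1
  obtain ⟨δ, hδ, h1⟩ := h1
  have hlim : Tendsto (fun J : ℤ => (2 : ℝ) ^ (-J)) atTop (𝓝 0) := by
    exact two_zpow_tendsto
  filter_upwards [hlim.eventually (gt_mem_nhds hδ)] with J hJ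
  have A : ∀ z, |z - x| ≤ (2 : ℝ) ^ (-J) → ‖G z - G x - (z - x : ℝ) * f‖ ≤ ε / 4 * (2 : ℝ) ^ (-J) := by
    intro z hz
    have := @h1 z (by rw [Real.dist_eq]; linarith)
    rw [Complex.real_smul] at this
    refine this.trans ?_
    rw [Real.norm_eq_abs]
    gcongr
  have hp : (0 : ℝ) < (2 : ℝ) ^ (-J) := by positivity
  set a := dq J x * (2 : ℝ) ^ (-J) with ha
  have e2 : ((dq J x : ℝ) + 1) * (2 : ℝ) ^ (-J) = a + (2 : ℝ) ^ (-J) := by rw [ha]; ring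
  have B1 := A a (dq_abs J x a le_rfl (by rw [e2]; linarith))
  have B2 := A (a + (2 : ℝ) ^ (-J)) (dq_abs J x _ (by linarith) (by rw [e2]))
  rw [dist_eq_norm]
  have e6 : (2 : ℂ) ^ J * ((2 : ℝ) ^ (-J) : ℝ) = 1 := by
    push_cast
    rw [← zpow_add₀ (by norm_num)]; simp
  have e7 : EE J G x - f = (2 : ℂ) ^ J * ((G (a + (2 : ℝ) ^ (-J)) - G x - (a + (2 : ℝ) ^ (-J) - x : ℝ) * f)
      - (G a - G x - (a - x : ℝ) * f)) := by
    unfold EE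
    rw [e2]
    have : f = ((2 : ℂ) ^ J * ((2 : ℝ) ^ (-J) : ℝ)) * f := by rw [e6, one_mul]
    conv_lhs => rw [this]
    push_cast
    ring
  rw [e7, norm_mul, norm_zpow]
  simp only [Complex.norm_ofNat]
  have e8 : (2 : ℝ) ^ J * (2 : ℝ) ^ (-J) = 1 := by rw [← zpow_add₀ (by norm_num)]; simp
  calc _ ≤ (2 : ℝ) ^ J * (ε / 4 * (2 : ℝ) ^ (-J) + ε / 4 * (2 : ℝ) ^ (-J)) := by
        gcongr
        exact (norm_sub_le _ _).trans (add_le_add B2 B1)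
    _ = ((2 : ℝ) ^ J * (2 : ℝ) ^ (-J)) * (ε / 2) := by ring
    _ < ε := by rw [e8]; linarith

open Filter Topology in
lemma EE_tendsto_bot (G : ℝ → ℂ) (x : ℝ) (B : ℝ) (hB : ∀ z, ‖G z‖ ≤ B) :
    Tendsto (fun J : ℤ => EE (-J) G x) atTop (𝓝 0) := by
  have hlim : Tendsto (fun J : ℤ => (2 : ℝ) ^ (-J) * (B + B)) atTop (𝓝 0) := by
    have h2 : Tendsto (fun J : ℤ => (2 : ℝ) ^ (-J)) atTop (𝓝 0) := by
      exact two_zpow_tendsto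
    simpa using h2.mul_const (B + B)
  refine squeeze_zero_norm (fun J => ?_) hlim
  unfold EE
  rw [norm_mul, norm_zpow]
  simp only [Complex.norm_ofNat]
  gcongr
  exact (norm_sub_le _ _).trans (add_le_add (hB _) (hB _))

lemma sum_DD (i : ℤ) (J : ℕ) (G : ℝ → ℂ) (x : ℝ) :
    ∑ m ∈ Finset.Ico (-(J : ℤ)) J, DD (i + m) G x = EE (i + J) G x - EE (i - J) G x := by
  induction J with
  | zero => simp
  | succ J ih =>
    have e : Finset.Ico (-((J + 1 : ℕ) : ℤ)) ((J + 1 : ℕ) : ℤ)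
        = insert (-(J : ℤ) - 1) (insert (J : ℤ) (Finset.Ico (-(J : ℤ)) J)) := by
      ext m; simp only [Finset.mem_Ico, Finset.mem_insert]; push_cast; omega
    rw [e, Finset.sum_insert, Finset.sum_insert, ih, DD_eq, DD_eq]
    · push_cast
      rw [show i + (-(J : ℤ) - 1) + 1 = i - J by ring, show i + (-(J : ℤ) - 1) = i - (J + 1) by ring,
        add_assoc i (J : ℤ) 1]
      ring
    · simp
    · simp only [Finset.mem_insert, Finset.mem_Ico]; omega

open Filter Topology in
/-- The pointwise decomposition. -/
lemma enorm_sum_le_tsum (s : Finset ℤ) (G f : ℤ → ℝ → ℂ) (x : ℝ) (hG : ∀ i, HasDerivAt (G i) (f i x) x)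
    (hB : ∀ i, ∃ B, ∀ z, ‖G i z‖ ≤ B) :
    ‖∑ i ∈ s, f i x‖ₑ ≤ ∑' m : ℤ, ‖∑ i ∈ s, DD (i + m) (G i) x‖ₑ := by
  have h1 : Tendsto (fun J : ℕ => ∑ i ∈ s, ∑ m ∈ Finset.Ico (-(J : ℤ)) J, DD (i + m) (G i) x) atTop
      (𝓝 (∑ i ∈ s, f i x)) := by
    refine tendsto_finsetSum _ fun i _ => ?_
    simp_rw [sum_DD]
    obtain ⟨B, hB⟩ := hB i
    have t1 : Tendsto (fun J : ℕ => i + (J : ℤ)) atTop atTop :=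
      tendsto_atTop_add_const_left _ _ tendsto_natCast_atTop_atTop
    have t2 : Tendsto (fun J : ℕ => -i + (J : ℤ)) atTop atTop :=
      tendsto_atTop_add_const_left _ _ tendsto_natCast_atTop_atTop
    have l1 := (EE_tendsto (G i) x (f i x) (hG i)).comp t1
    have l2 := (EE_tendsto_bot (G i) x B hB).comp t2
    have := l1.sub l2
    simp only [sub_zero] at this
    refine this.congr fun J => ?_
    simp only [Function.comp]
    congr 2
    ring
  refine le_of_tendsto h1.enorm (Eventually.of_forall fun J => ?_)
  rw [Finset.sum_comm]
  exact (enorm_sum_le _ _).trans (ENNReal.sum_le_tsum _)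

end LPX

namespace LPX

/-! ### The Hardy-Littlewood maximal function -/

/-- maximal function over balls of dyadic radius -/
def MM (g : ℝ → ℝ≥0∞) (x : ℝ) : ℝ≥0∞ :=
  ⨆ k : ℤ, ENNReal.ofReal ((2 : ℝ) ^ (-k)) * ∫⁻ y in Metric.closedBall x ((2 : ℝ) ^ k), g y

lemma MM_measurable {g : ℝ → ℝ≥0∞} (hg : Measurable g) : Measurable (MM g) := by
  refine Measurable.iSup fun k => Measurable.const_mul ?_ _
  have h : ∀ x, ∫⁻ y in Metric.closedBall x ((2 : ℝ) ^ k), g y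
      = ∫⁻ y, ({z : ℝ × ℝ | dist z.2 z.1 ≤ (2 : ℝ) ^ k}.indicator (fun z => g z.2)) (x, y) := by
    intro x
    rw [← lintegral_indicator Metric.isClosed_closedBall.measurableSet]
    rfl
  simp_rw [h]
  refine Measurable.lintegral_prod_right' ?_
  refine (hg.comp measurable_snd).indicator ?_
  exact measurableSet_le (measurable_snd.dist measurable_fst) measurable_const

lemma two_zpow_mul (k : ℤ) : ENNReal.ofReal ((2 : ℝ) ^ (-k)) * ENNReal.ofReal ((2 : ℝ) ^ k) = 1 := by
  rw [← ENNReal.ofReal_mul (by positivity), ← zpow_add₀ (by norm_num)]; simp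

lemma MM_weak (g : ℝ → ℝ≥0∞) {lam : ℝ} (hlam : 0 < lam) :
    ENNReal.ofReal lam * volume {x | ENNReal.ofReal lam < MM g x} ≤ 10 * ∫⁻ x, g x := by
  by_cases hI : ∫⁻ x, g x = ∞
  · rw [hI]; simp
  set t := {x | ENNReal.ofReal lam < MM g x} with ht
  have hk : ∀ x, ∃ k : ℤ, x ∈ t → ENNReal.ofReal lam <
      ENNReal.ofReal ((2 : ℝ) ^ (-k)) * ∫⁻ y in Metric.closedBall x ((2 : ℝ) ^ k), g y := by
    intro x
    by_cases hx : x ∈ t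
    · obtain ⟨k, hk⟩ := lt_iSup_iff.1 (show ENNReal.ofReal lam < MM g x from hx)
      exact ⟨k, fun _ => hk⟩
    · exact ⟨0, fun h => absurd h hx⟩
  choose k hk using hk
  have hk2 : ∀ x ∈ t, ENNReal.ofReal lam * ENNReal.ofReal ((2 : ℝ) ^ (k x)) ≤
      ∫⁻ y in Metric.closedBall x ((2 : ℝ) ^ (k x)), g y := by
    intro x hx
    calc _ ≤ (ENNReal.ofReal ((2 : ℝ) ^ (-(k x))) * ∫⁻ y in Metric.closedBall x ((2 : ℝ) ^ (k x)), g y)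
            * ENNReal.ofReal ((2 : ℝ) ^ (k x)) := by gcongr; exact (hk x hx).le
      _ = (ENNReal.ofReal ((2 : ℝ) ^ (-(k x))) * ENNReal.ofReal ((2 : ℝ) ^ (k x))) *
          ∫⁻ y in Metric.closedBall x ((2 : ℝ) ^ (k x)), g y := by ring
      _ = _ := by rw [two_zpow_mul, one_mul]
  have hR : ∀ x ∈ t, (2 : ℝ) ^ (k x) ≤ (∫⁻ x, g x).toReal / lam := by
    intro x hx
    rw [le_div_iff₀ hlam]
    have h1 := (hk2 x hx).trans (setLIntegral_le_lintegral _ _)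
    rw [← ENNReal.ofReal_mul hlam.le] at h1
    have := (ENNReal.ofReal_le_iff_le_toReal hI).1 h1
    linarith
  obtain ⟨u, hut, hdis, hcov⟩ := Vitali.exists_disjoint_subfamily_covering_enlargement_closedBall t
    (fun x : ℝ => x) (fun x => (2 : ℝ) ^ (k x)) _ hR 5 (by norm_num)
  have huc : u.Countable := by
    refine hdis.countable_of_nonempty_interior fun x hx => ?_
    refine ⟨x, ?_⟩
    rw [interior_closedBall _ (by positivity)]
    exact Metric.mem_ball_self (by positivity)
  have hsub : t ⊆ ⋃ b ∈ u, Metric.closedBall b (5 * (2 : ℝ) ^ (k b)) := by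
    intro x hx
    obtain ⟨b, hb, hbs⟩ := hcov x hx
    exact Set.mem_biUnion hb (hbs (Metric.mem_closedBall_self (by positivity)))
  calc ENNReal.ofReal lam * volume t
      ≤ ENNReal.ofReal lam * ∑' b : u, volume (Metric.closedBall (b : ℝ) (5 * (2 : ℝ) ^ (k b))) := by
        gcongr
        exact (measure_mono hsub).trans (measure_biUnion_le _ huc _)
    _ = ∑' b : u, 10 * (ENNReal.ofReal lam * ENNReal.ofReal ((2 : ℝ) ^ (k b))) := by
        rw [← ENNReal.tsum_mul_left]
        congr 1; ext b
        rw [Real.volume_closedBall, show 2 * (5 * (2 : ℝ) ^ (k b)) = 10 * 2 ^ (k b) by ring,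
          ENNReal.ofReal_mul (by norm_num)]
        simp only [ENNReal.ofReal_ofNat]
        ring
    _ ≤ ∑' b : u, 10 * ∫⁻ y in Metric.closedBall (b : ℝ) ((2 : ℝ) ^ (k b)), g y := by
        gcongr with b
        exact hk2 b (hut b.2)
    _ = 10 * ∫⁻ y in ⋃ b ∈ u, Metric.closedBall (b : ℝ) ((2 : ℝ) ^ (k b)), g y := by
        rw [ENNReal.tsum_mul_left, lintegral_biUnion huc
          (fun b _ => Metric.isClosed_closedBall.measurableSet) hdis]
    _ ≤ _ := mul_le_mul' le_rfl (setLIntegral_le_lintegral _ _)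

lemma MM_weak' {g : ℝ → ℝ≥0∞} {lam : ℝ} (hlam : 0 < lam) :
    ENNReal.ofReal lam * volume {x | ENNReal.ofReal (3 * lam) < MM g x}
      ≤ 10 * ∫⁻ x, {x | ENNReal.ofReal lam < g x}.indicator g x := by
  set g1 := {x | ENNReal.ofReal lam < g x}.indicator g with hg1
  refine le_trans ?_ (MM_weak g1 hlam)
  refine mul_le_mul' le_rfl (measure_mono fun x hx => ?_)
  have hle : MM g x ≤ 2 * ENNReal.ofReal lam + MM g1 x := by
    refine iSup_le fun k => ?_
    have h1 : ∀ y, g y ≤ ENNReal.ofReal lam + g1 y := by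
      intro y
      by_cases hy : ENNReal.ofReal lam < g y
      · rw [hg1, Set.indicator_of_mem (show y ∈ {x | ENNReal.ofReal lam < g x} from hy)]
        exact le_add_self
      · exact (not_lt.1 hy).trans le_self_add
    calc _ ≤ ENNReal.ofReal ((2 : ℝ) ^ (-k)) * ∫⁻ y in Metric.closedBall x ((2 : ℝ) ^ k),
            (ENNReal.ofReal lam + g1 y) := by gcongr with y; exact h1 y
      _ = (ENNReal.ofReal ((2 : ℝ) ^ (-k)) * ENNReal.ofReal ((2 : ℝ) ^ k)) * (2 * ENNReal.ofReal lam)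
          + ENNReal.ofReal ((2 : ℝ) ^ (-k)) * ∫⁻ y in Metric.closedBall x ((2 : ℝ) ^ k), g1 y := by
          rw [lintegral_add_left measurable_const, setLIntegral_const, Real.volume_closedBall,
            ENNReal.ofReal_mul (by norm_num), mul_add]
          simp only [ENNReal.ofReal_ofNat]
          ring
      _ ≤ _ := by
          rw [two_zpow_mul, one_mul]
          gcongr
          exact le_iSup (fun k : ℤ => ENNReal.ofReal ((2 : ℝ) ^ (-k)) *
            ∫⁻ y in Metric.closedBall x ((2 : ℝ) ^ k), g1 y) k
  change ENNReal.ofReal lam < MM g1 x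
  by_contra hcon
  push Not at hcon
  refine absurd (show ENNReal.ofReal (3 * lam) < MM g x from hx) (not_lt.2 (hle.trans ?_))
  rw [ENNReal.ofReal_mul (by norm_num)]
  simp only [ENNReal.ofReal_ofNat]
  calc _ ≤ 2 * ENNReal.ofReal lam + ENNReal.ofReal lam := by gcongr
    _ = _ := by ring

lemma layer_cake {F : ℝ → ℝ≥0∞} (hF : Measurable F) {s : ℝ} (hs : 0 < s) :
    ∫⁻ x, F x ^ s ≤ ENNReal.ofReal s *
      ∫⁻ t in Set.Ioi (0 : ℝ), volume {x | ENNReal.ofReal t < F x} * ENNReal.ofReal (t ^ (s - 1)) := by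
  have h1 : ∀ x, F x ^ s = ⨆ n : ℕ, (min (F x) n) ^ s := by
    intro x
    rw [← iSup_rpow _ hs]
    congr 1
    have : ⨆ n : ℕ, min (F x) (n : ℝ≥0∞) = min (F x) (⨆ n : ℕ, (n : ℝ≥0∞)) := (inf_iSup_eq ..).symm
    rw [this, ENNReal.iSup_natCast]; simp
  simp_rw [h1]
  rw [lintegral_iSup (fun n => (hF.min measurable_const).pow_const s)
    (fun n m hnm x => by simp only; gcongr)]
  refine iSup_le fun n => ?_
  have hfin : ∀ x, min (F x) n ≠ ∞ := fun x => ne_top_of_le_ne_top (by simp) (min_le_right _ _)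
  have e : ∀ x, (min (F x) n) ^ s = ENNReal.ofReal ((min (F x) n).toReal ^ s) := fun x => by
    rw [← ENNReal.ofReal_rpow_of_nonneg ENNReal.toReal_nonneg hs.le, ENNReal.ofReal_toReal (hfin x)]
  simp_rw [e]
  rw [lintegral_rpow_eq_lintegral_meas_lt_mul volume
    (Filter.Eventually.of_forall fun x => ENNReal.toReal_nonneg)
    (hF.min measurable_const).ennreal_toReal.aemeasurable hs]
  gcongr _ * ?_
  refine setLIntegral_mono' measurableSet_Ioi fun t ht => ?_
  refine mul_le_mul' (measure_mono fun x hx => ?_) le_rfl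
  have := (ENNReal.ofReal_lt_iff_lt_toReal (le_of_lt ht) (hfin x)).2 hx
  exact this.trans_le (min_le_left _ _)

lemma lintegral_rpow_Ioo {a s : ℝ} (ha : 0 ≤ a) (hs : 1 < s) :
    ∫⁻ t in Set.Ioc 0 a, ENNReal.ofReal (t ^ (s - 2)) = ENNReal.ofReal (a ^ (s - 1) / (s - 1)) := by
  have hintg : IntervalIntegrable (fun t : ℝ => t ^ (s - 2)) volume 0 a :=
    intervalIntegral.intervalIntegrable_rpow' (by linarith)
  rw [← ofReal_integral_eq_lintegral_ofReal ((intervalIntegrable_iff_integrableOn_Ioc_of_le ha).1 hintg)]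
  · rw [← intervalIntegral.integral_of_le ha, integral_rpow (Or.inl (by linarith))]
    congr 1
    rw [show s - 2 + 1 = s - 1 by ring, Real.zero_rpow (by linarith), sub_zero]
  · refine (ae_restrict_iff' measurableSet_Ioc).2 (Filter.Eventually.of_forall fun t ht => ?_)
    exact Real.rpow_nonneg ht.1.le _

lemma MM_strong {s : ℝ} (hs : 1 < s) : ∃ C : ℝ≥0, ∀ g : ℝ → ℝ≥0∞, Measurable g →
    ∫⁻ x, (MM g x) ^ s ≤ C * ∫⁻ x, g x ^ s := by
  have hs0 : 0 < s := by linarith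
  refine ⟨Real.toNNReal (3 ^ s * (s * (10 * (1 / (s - 1))))), fun g hg => ?_⟩
  have hMm := MM_measurable hg
  have hinner : ∀ x, ∫⁻ t in Set.Ioi (0 : ℝ), ENNReal.ofReal (t ^ (s - 2)) *
      {x | ENNReal.ofReal t < g x}.indicator g x ≤ ENNReal.ofReal (1 / (s - 1)) * g x ^ s := by
    intro x
    by_cases hx : g x = ∞
    · rw [hx, ENNReal.top_rpow_of_pos hs0, ENNReal.mul_top]
      · exact le_top
      · simp; linarith
    calc _ ≤ ∫⁻ t in Set.Ioc (0 : ℝ) (g x).toReal, ENNReal.ofReal (t ^ (s - 2)) * g x := by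
          rw [← lintegral_indicator measurableSet_Ioi, ← lintegral_indicator measurableSet_Ioc]
          refine lintegral_mono fun t => ?_
          by_cases h1 : ENNReal.ofReal t < g x
          · by_cases h2 : 0 < t
            · rw [Set.indicator_of_mem (show t ∈ Set.Ioi (0 : ℝ) from h2),
                Set.indicator_of_mem (show x ∈ {x | ENNReal.ofReal t < g x} from h1),
                Set.indicator_of_mem]
              exact ⟨h2, ((ENNReal.ofReal_lt_iff_lt_toReal h2.le hx).1 h1).le⟩
            · rw [Set.indicator_of_notMem (show t ∉ Set.Ioi (0 : ℝ) from h2)]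
              exact zero_le
          · have : {x | ENNReal.ofReal t < g x}.indicator g x = 0 :=
              Set.indicator_of_notMem (show x ∉ {x | ENNReal.ofReal t < g x} from h1) _
            refine le_trans (le_of_eq ?_) zero_le
            by_cases ht : t ∈ Set.Ioi (0 : ℝ)
            · rw [Set.indicator_of_mem ht, this, mul_zero]
            · rw [Set.indicator_of_notMem ht]
      _ = ENNReal.ofReal ((g x).toReal ^ (s - 1) / (s - 1)) * g x := by
          rw [lintegral_mul_const' _ _ hx, lintegral_rpow_Ioo ENNReal.toReal_nonneg hs]
      _ = _ := by
          rw [div_eq_mul_one_div, mul_comm _ (1 / (s - 1)), ENNReal.ofReal_mul (by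
            have : 0 < s - 1 := by linarith
            positivity), mul_assoc]
          congr 1
          conv_lhs => rw [← ENNReal.ofReal_toReal hx]
          conv_rhs => rw [← ENNReal.ofReal_toReal hx]
          rw [ENNReal.toReal_ofReal ENNReal.toReal_nonneg,
            ENNReal.ofReal_rpow_of_nonneg ENNReal.toReal_nonneg hs0.le,
            ← ENNReal.ofReal_mul (by positivity)]
          congr 1
          rcases (ENNReal.toReal_nonneg (a := g x)).eq_or_lt with h0 | h0
          · rw [← h0]; simp [Real.zero_rpow hs0.ne']
          · conv_lhs => rw [← Real.rpow_one (g x).toReal]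
            rw [← Real.rpow_mul h0.le, one_mul, ← Real.rpow_add h0]; congr 1; ring
  have hF : Measurable (fun x => ENNReal.ofReal (1 / 3) * MM g x) := hMm.const_mul _
  have h13 : ENNReal.ofReal 3 * ENNReal.ofReal (1 / 3) = 1 := by
    rw [← ENNReal.ofReal_mul (by norm_num)]; norm_num
  calc ∫⁻ x, (MM g x) ^ s = ENNReal.ofReal (3 ^ s) * ∫⁻ x, (ENNReal.ofReal (1 / 3) * MM g x) ^ s := by
        rw [← lintegral_const_mul' _ _ ENNReal.ofReal_ne_top]
        congr 1; ext x
        rw [← ENNReal.ofReal_rpow_of_nonneg (by norm_num) hs0.le, ← ENNReal.mul_rpow_of_nonneg _ _ hs0.le,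
          ← mul_assoc, h13, one_mul]
    _ ≤ ENNReal.ofReal (3 ^ s) * (ENNReal.ofReal s * ∫⁻ t in Set.Ioi (0 : ℝ),
          volume {x | ENNReal.ofReal t < ENNReal.ofReal (1 / 3) * MM g x} * ENNReal.ofReal (t ^ (s - 1))) := by
        gcongr; exact layer_cake hF hs0
    _ ≤ ENNReal.ofReal (3 ^ s) * (ENNReal.ofReal s * ∫⁻ t in Set.Ioi (0 : ℝ),
          10 * (ENNReal.ofReal (t ^ (s - 2)) * ∫⁻ x, {x | ENNReal.ofReal t < g x}.indicator g x)) := by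
        gcongr _ * (_ * ?_)
        refine setLIntegral_mono' measurableSet_Ioi fun t ht => ?_
        have ht' : (0 : ℝ) < t := ht
        have e1 : ENNReal.ofReal (t ^ (s - 1)) = ENNReal.ofReal t * ENNReal.ofReal (t ^ (s - 2)) := by
          rw [← ENNReal.ofReal_mul ht'.le]
          congr 1
          conv_rhs => rw [← Real.rpow_one t]
          rw [← Real.rpow_mul ht'.le, one_mul, ← Real.rpow_add ht']; congr 1; ring
        have e2 : {x | ENNReal.ofReal t < ENNReal.ofReal (1 / 3) * MM g x}
            ⊆ {x | ENNReal.ofReal (3 * t) < MM g x} := by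
          intro x hx
          change ENNReal.ofReal (3 * t) < MM g x
          have hx' : ENNReal.ofReal t < ENNReal.ofReal (1 / 3) * MM g x := hx
          have := (ENNReal.mul_lt_mul_iff_right (a := ENNReal.ofReal 3) (by simp) ENNReal.ofReal_ne_top).2 hx'
          rwa [← mul_assoc, h13, one_mul, ← ENNReal.ofReal_mul (by norm_num)] at this
        calc _ ≤ volume {x | ENNReal.ofReal (3 * t) < MM g x} *
              (ENNReal.ofReal t * ENNReal.ofReal (t ^ (s - 2))) := by
              rw [e1]; gcongr
          _ = (ENNReal.ofReal t * volume {x | ENNReal.ofReal (3 * t) < MM g x})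
              * ENNReal.ofReal (t ^ (s - 2)) := by ring
          _ ≤ (10 * ∫⁻ x, {x | ENNReal.ofReal t < g x}.indicator g x) * ENNReal.ofReal (t ^ (s - 2)) := by
              exact mul_le_mul' (MM_weak' ht') le_rfl
          _ = _ := by ring
    _ = ENNReal.ofReal (3 ^ s) * (ENNReal.ofReal s * (10 * ∫⁻ x, ∫⁻ t in Set.Ioi (0 : ℝ),
          ENNReal.ofReal (t ^ (s - 2)) * {x | ENNReal.ofReal t < g x}.indicator g x)) := by
        rw [lintegral_const_mul' _ _ (by simp)]
        congr 3
        rw [lintegral_lintegral_swap]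
        · congr 1; ext t
          rw [lintegral_const_mul' _ _ ENNReal.ofReal_ne_top]
        · refine Measurable.aemeasurable ?_
          have m1 : Measurable (fun z : ℝ × ℝ => ENNReal.ofReal (z.2 ^ (s - 2))) :=
            (measurable_snd.pow_const _).ennreal_ofReal
          have m2 : Measurable ({z : ℝ × ℝ | ENNReal.ofReal z.2 < g z.1}.indicator (fun z => g z.1)) :=
            (hg.comp measurable_fst).indicator (measurableSet_lt measurable_snd.ennreal_ofReal
              (hg.comp measurable_fst))
          exact m1.mul m2
    _ ≤ ENNReal.ofReal (3 ^ s) * (ENNReal.ofReal s * (10 * ∫⁻ x, ENNReal.ofReal (1 / (s - 1)) * g x ^ s)) := by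
        gcongr with x; exact hinner x
    _ = _ := by
        rw [lintegral_const_mul' _ _ ENNReal.ofReal_ne_top]
        have hs1 : 0 < s - 1 := by linarith
        change _ = ENNReal.ofReal _ * _
        rw [ENNReal.ofReal_mul (by positivity), ENNReal.ofReal_mul (by positivity),
          ENNReal.ofReal_mul (by positivity)]
        simp only [ENNReal.ofReal_ofNat]
        ring

end LPX

namespace LPX

def PP (l : ℤ) (u : ℝ) : ℝ≥0∞ := ENNReal.ofReal ((2 : ℝ) ^ l / (1 + ((2 : ℝ) ^ l * u) ^ 2))

def AA (l : ℤ) (h : ℝ → ℝ≥0∞) (x : ℝ) : ℝ≥0∞ := ∫⁻ y, PP l (x - y) * h y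

lemma PP_measurable (l : ℤ) : Measurable (PP l) := by
  unfold PP; fun_prop

lemma PP_symm (l : ℤ) (x y : ℝ) : PP l (x - y) = PP l (y - x) := by
  unfold PP; congr 3; ring

lemma PP2_measurable (l : ℤ) : Measurable (fun z : ℝ × ℝ => PP l (z.1 - z.2)) :=
  (PP_measurable l).comp (measurable_fst.sub measurable_snd)

lemma AA_measurable (l : ℤ) {h : ℝ → ℝ≥0∞} (hh : Measurable h) : Measurable (AA l h) := by
  have : Measurable (fun z : ℝ × ℝ => PP l (z.1 - z.2) * h z.2) :=
    (PP2_measurable l).mul (hh.comp measurable_snd)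
  exact this.lintegral_prod_right'

lemma lintegral_PP (l : ℤ) (x : ℝ) : ∫⁻ y, PP l (x - y) = ENNReal.ofReal Real.pi := by
  have hc : (0 : ℝ) < 2 ^ l := by positivity
  have e1 : ∫⁻ y, PP l (x - y) = ∫⁻ y, PP l y := lintegral_sub_left_eq_self (PP l) x
  rw [e1]
  unfold PP
  have hi0 : Integrable (fun u : ℝ => (1 + ((2 : ℝ) ^ l * u) ^ 2)⁻¹) :=
    (integrable_inv_one_add_sq).comp_mul_left' hc.ne'
  have hi : Integrable (fun u : ℝ => (2 : ℝ) ^ l / (1 + ((2 : ℝ) ^ l * u) ^ 2)) := by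
    simp only [div_eq_mul_inv]; exact hi0.const_mul _
  rw [← ofReal_integral_eq_lintegral_ofReal hi (Filter.Eventually.of_forall fun u => by positivity)]
  congr 1
  simp only [div_eq_mul_inv]
  rw [integral_const_mul, Measure.integral_comp_mul_left (fun v : ℝ => (1 + v ^ 2)⁻¹),
    integral_univ_inv_one_add_sq, abs_of_pos (by positivity), smul_eq_mul, ← mul_assoc,
    mul_inv_cancel₀ hc.ne', one_mul]

lemma AA_symm (l : ℤ) {g h : ℝ → ℝ≥0∞} (hg : Measurable g) (hh : Measurable h) :
    ∫⁻ x, g x * AA l h x = ∫⁻ x, h x * AA l g x := by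
  unfold AA
  have m (g h : ℝ → ℝ≥0∞) (hg : Measurable g) (hh : Measurable h) :
      Measurable (fun z : ℝ × ℝ => g z.1 * (PP l (z.1 - z.2) * h z.2)) :=
    (hg.comp measurable_fst).mul ((PP2_measurable l).mul (hh.comp measurable_snd))
  have e : ∀ (g h : ℝ → ℝ≥0∞), Measurable h → ∀ x, g x * ∫⁻ y, PP l (x - y) * h y
      = ∫⁻ y, g x * (PP l (x - y) * h y) := fun g h hh x => by
    rw [lintegral_const_mul]
    exact ((PP_measurable l).comp (measurable_const.sub measurable_id)).mul hh
  simp_rw [e g h hh, e h g hg]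
  rw [lintegral_lintegral_swap (m g h hg hh).aemeasurable]
  congr 1; ext x; congr 1; ext y
  rw [PP_symm]; ring

lemma PP_le_tsum (l : ℤ) (u : ℝ) : PP l u ≤ ∑' k : ℕ, ENNReal.ofReal ((2 : ℝ) ^ l * 4 * (1 / 4) ^ k) *
    (Metric.closedBall (0 : ℝ) ((2 : ℝ) ^ ((k : ℤ) - l))).indicator 1 u := by
  have hc : (0 : ℝ) < 2 ^ l := by positivity
  set v := (2 : ℝ) ^ l * |u| with hv
  have hv0 : 0 ≤ v := by positivity
  have hex : ∃ k : ℕ, v ≤ 2 ^ k := (pow_unbounded_of_one_lt v (by norm_num)).imp fun _ h => h.le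
  have h4 : ∃ k : ℕ, v ≤ 2 ^ k ∧ (4 : ℝ) ^ k ≤ 4 * (1 + v ^ 2) := by
    classical
    refine ⟨Nat.find hex, Nat.find_spec hex, ?_⟩
    rcases Nat.eq_zero_or_pos (Nat.find hex) with h0 | h0
    · rw [h0]; nlinarith
    · have := Nat.find_min hex (Nat.sub_lt h0 one_pos)
      push Not at this
      obtain ⟨n, hn⟩ : ∃ n, Nat.find hex = n + 1 := ⟨Nat.find hex - 1, by omega⟩
      rw [hn] at this ⊢
      simp only [Nat.add_sub_cancel] at this
      have h2 : (4 : ℝ) ^ n = (2 ^ n) ^ 2 := by rw [← pow_mul, mul_comm, pow_mul]; norm_num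
      rw [pow_succ, h2]
      have : ((2 : ℝ) ^ n) ^ 2 ≤ v ^ 2 := by gcongr
      linarith
  obtain ⟨k, hk1, hk2⟩ := h4
  refine le_trans ?_ (ENNReal.le_tsum k)
  rw [Set.indicator_of_mem, Pi.one_apply, mul_one]
  · refine ENNReal.ofReal_le_ofReal ?_
    have : ((2 : ℝ) ^ l * u) ^ 2 = v ^ 2 := by rw [hv, mul_pow, mul_pow, sq_abs]
    rw [this, div_le_iff₀ (by positivity), one_div, inv_pow]
    rw [mul_assoc, mul_assoc]
    refine le_mul_of_one_le_right hc.le ?_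
    rw [mul_comm, mul_assoc, inv_mul_eq_div, one_le_div (by positivity)]
    linarith
  · rw [mem_closedBall_zero_iff, Real.norm_eq_abs, zpow_sub₀ (by norm_num), zpow_natCast, le_div_iff₀ hc]
    linarith [mul_comm |u| ((2 : ℝ) ^ l)]

lemma AA_le_MM (l : ℤ) {g : ℝ → ℝ≥0∞} (hg : Measurable g) (x : ℝ) : AA l g x ≤ 8 * MM g x := by
  have hc : (0 : ℝ) < 2 ^ l := by positivity
  have hball : ∀ k : ℕ, ∀ y, (Metric.closedBall (0 : ℝ) ((2 : ℝ) ^ ((k : ℤ) - l))).indicator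
      (1 : ℝ → ℝ≥0∞) (x - y) * g y = (Metric.closedBall x ((2 : ℝ) ^ ((k : ℤ) - l))).indicator g y := by
    intro k y
    have : x - y ∈ Metric.closedBall (0 : ℝ) ((2 : ℝ) ^ ((k : ℤ) - l)) ↔
        y ∈ Metric.closedBall x ((2 : ℝ) ^ ((k : ℤ) - l)) := by
      rw [mem_closedBall_zero_iff, Metric.mem_closedBall, dist_comm, Real.dist_eq, Real.norm_eq_abs]
    by_cases hy : y ∈ Metric.closedBall x ((2 : ℝ) ^ ((k : ℤ) - l))
    · rw [Set.indicator_of_mem hy, Set.indicator_of_mem (this.2 hy)]; simp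
    · rw [Set.indicator_of_notMem hy, Set.indicator_of_notMem (fun h => hy (this.1 h))]; simp
  calc AA l g x ≤ ∫⁻ y, ∑' k : ℕ, ENNReal.ofReal ((2 : ℝ) ^ l * 4 * (1 / 4) ^ k) *
        (Metric.closedBall x ((2 : ℝ) ^ ((k : ℤ) - l))).indicator g y := by
        refine lintegral_mono fun y => ?_
        calc _ ≤ _ := mul_le_mul' (PP_le_tsum l (x - y)) le_rfl
          _ = _ := by
            rw [← ENNReal.tsum_mul_right]
            congr 1; ext k
            rw [mul_assoc, hball]
    _ = ∑' k : ℕ, ENNReal.ofReal ((2 : ℝ) ^ l * 4 * (1 / 4) ^ k) *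
        ∫⁻ y in Metric.closedBall x ((2 : ℝ) ^ ((k : ℤ) - l)), g y := by
        rw [lintegral_tsum fun k => ((hg.indicator Metric.isClosed_closedBall.measurableSet).const_mul _).aemeasurable]
        congr 1; ext k
        rw [lintegral_const_mul' _ _ ENNReal.ofReal_ne_top,
          lintegral_indicator Metric.isClosed_closedBall.measurableSet]
    _ ≤ ∑' k : ℕ, ENNReal.ofReal (4 * (1 / 2) ^ k) * MM g x := by
        refine ENNReal.tsum_le_tsum fun k => ?_
        have e : (2 : ℝ) ^ l * 4 * (1 / 4) ^ k = 4 * (1 / 2) ^ k * (2 : ℝ) ^ (-((k : ℤ) - l)) := by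
          rw [neg_sub, zpow_sub₀ (by norm_num), zpow_natCast]
          have : ((1 : ℝ) / 4) ^ k = (1 / 2) ^ k * (1 / 2) ^ k := by rw [← mul_pow]; norm_num
          rw [this]
          have : ((1 : ℝ) / 2) ^ k = 1 / 2 ^ k := by rw [div_pow, one_pow]
          rw [this]; ring
        rw [e, ENNReal.ofReal_mul (by positivity), mul_assoc]
        refine mul_le_mul' le_rfl ?_
        exact le_iSup (fun k : ℤ => ENNReal.ofReal ((2 : ℝ) ^ (-k)) *
          ∫⁻ y in Metric.closedBall x ((2 : ℝ) ^ k), g y) ((k : ℤ) - l)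
    _ = _ := by
        rw [ENNReal.tsum_mul_right, ← ENNReal.ofReal_tsum_of_nonneg (fun k => by positivity)
          (summable_geometric_two.mul_left 4), tsum_mul_left, tsum_geometric_two]
        norm_num

/-- Jensen. -/
lemma AA_jensen (l : ℤ) {h : ℝ → ℝ≥0∞} (hh : Measurable h) {ρ : ℝ} (hρ : 1 ≤ ρ) (x : ℝ) :
    (AA l h x) ^ ρ ≤ ENNReal.ofReal Real.pi ^ (ρ - 1) * AA l (fun y => h y ^ ρ) x := by
  rcases hρ.eq_or_lt with rfl | hρ1
  · simp
  have hρ0 : 0 < ρ := by linarith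
  have hPm : Measurable (fun y => PP l (x - y)) := (PP_measurable l).comp (measurable_const.sub measurable_id)
  have hq := Real.HolderConjugate.conjExponent hρ1
  set q := Real.conjExponent ρ
  have key : AA l h x ≤ (AA l (fun y => h y ^ ρ) x) ^ (1 / ρ) * (ENNReal.ofReal Real.pi) ^ (1 / q) := by
    have := ENNReal.lintegral_mul_le_Lp_mul_Lq volume hq
      (f := fun y => PP l (x - y) ^ (1 / ρ) * h y) (g := fun y => PP l (x - y) ^ (1 / q))
      ((hPm.pow_const _).mul hh).aemeasurable (hPm.pow_const _).aemeasurable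
    refine le_trans (le_of_eq ?_) (this.trans (le_of_eq ?_))
    · unfold AA
      congr 1; ext y
      simp only [Pi.mul_apply]
      rw [mul_right_comm, ← ENNReal.rpow_add_of_nonneg _ _ (by have := hq.pos; positivity) (by have := hq.symm.pos; positivity)]
      rw [one_div, one_div, hq.inv_add_inv_eq_one, ENNReal.rpow_one]
    · congr 2
      · unfold AA
        congr 1; ext y
        rw [ENNReal.mul_rpow_of_nonneg _ _ hρ0.le, ← ENNReal.rpow_mul, one_div_mul_cancel hρ0.ne', ENNReal.rpow_one]
      · rw [← lintegral_PP l x]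
        congr 1; ext y
        rw [← ENNReal.rpow_mul, one_div_mul_cancel hq.symm.pos.ne', ENNReal.rpow_one]
  calc _ ≤ _ := ENNReal.rpow_le_rpow key hρ0.le
    _ = _ := by
      rw [ENNReal.mul_rpow_of_nonneg _ _ hρ0.le, ← ENNReal.rpow_mul, ← ENNReal.rpow_mul, one_div_mul_cancel hρ0.ne',
        ENNReal.rpow_one, mul_comm]
      congr 2
      have := hq.inv_add_inv_eq_one
      have h2 : q⁻¹ = 1 - ρ⁻¹ := by linarith
      rw [one_div, h2, sub_mul, inv_mul_cancel₀ hρ0.ne', one_mul]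

lemma AA_Lp (l : ℤ) {h : ℝ → ℝ≥0∞} (hh : Measurable h) {ρ : ℝ} (hρ : 1 ≤ ρ) :
    ∫⁻ x, (AA l h x) ^ ρ ≤ ENNReal.ofReal Real.pi ^ ρ * ∫⁻ x, h x ^ ρ := by
  have hpi : (0 : ℝ) < Real.pi := Real.pi_pos
  have hne : ENNReal.ofReal Real.pi ≠ 0 := by simpa using hpi
  calc _ ≤ ∫⁻ x, ENNReal.ofReal Real.pi ^ (ρ - 1) * AA l (fun y => h y ^ ρ) x :=
        lintegral_mono fun x => AA_jensen l hh hρ x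
    _ = ENNReal.ofReal Real.pi ^ (ρ - 1) * ∫⁻ x, 1 * AA l (fun y => h y ^ ρ) x := by
        rw [lintegral_const_mul _ (AA_measurable l (hh.pow_const ρ))]; simp
    _ = ENNReal.ofReal Real.pi ^ (ρ - 1) * ∫⁻ x, h x ^ ρ * ENNReal.ofReal Real.pi := by
        rw [AA_symm l (g := fun _ => 1) measurable_const (hh.pow_const ρ)]
        congr 2; ext x; congr 1
        unfold AA; simp only [mul_one]; exact lintegral_PP l x
    _ = _ := by
        rw [lintegral_mul_const _ (hh.pow_const ρ), mul_comm (∫⁻ x, h x ^ ρ), ← mul_assoc]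
        congr 1
        conv_lhs => rw [← ENNReal.rpow_one (ENNReal.ofReal Real.pi)]
        rw [← ENNReal.rpow_mul, one_mul, ← ENNReal.rpow_add _ _ hne ENNReal.ofReal_ne_top]
        congr 1; ring

end LPX

namespace LPX

lemma meas_mul {f g : ℝ → ℝ≥0∞} (hf : Measurable f) (hg : Measurable g) :
    Measurable (fun x => f x * g x) := hf.mul hg

lemma absorb {θ θ' : ℝ} (h : θ.HolderConjugate θ') {B K E : ℝ≥0∞} (hB : B ≠ ∞)
    (hle : B ≤ K * E ^ (1 / θ) * B ^ (1 / θ')) : B ≤ K ^ θ * E := by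
  have h0 := h.pos
  have h0' := h.symm.pos
  rcases eq_or_ne B 0 with hz | hz
  · rw [hz]; exact zero_le
  have e : B = B ^ (1 / θ) * B ^ (1 / θ') := by
    rw [← ENNReal.rpow_add _ _ hz hB, one_div, one_div, h.inv_add_inv_eq_one, ENNReal.rpow_one]
  have hne : B ^ (1 / θ') ≠ 0 := by
    simp [ENNReal.rpow_eq_zero_iff, hz, hB]
  have hnt : B ^ (1 / θ') ≠ ∞ := ENNReal.rpow_ne_top_of_nonneg (by positivity) hB
  have h1 : B ^ (1 / θ) ≤ K * E ^ (1 / θ) := by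
    have : B ^ (1 / θ) * B ^ (1 / θ') ≤ K * E ^ (1 / θ) * B ^ (1 / θ') := by rw [← e]; exact hle
    exact (ENNReal.mul_le_mul_iff_left hne hnt).1 this
  have h2 := ENNReal.rpow_le_rpow h1 h0.le
  rwa [ENNReal.mul_rpow_of_nonneg _ _ h0.le, ← ENNReal.rpow_mul, ← ENNReal.rpow_mul,
    one_div_mul_cancel h0.ne', ENNReal.rpow_one, ENNReal.rpow_one] at h2

lemma propD1 {θ : ℝ} (hθ : 1 ≤ θ) : ∃ C : ℝ≥0, ∀ (s : Finset ℤ) (l : ℤ → ℤ) (H : ℤ → ℝ → ℝ≥0∞),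
    (∀ i, Measurable (H i)) →
    ∫⁻ x, (∑ i ∈ s, AA (l i) (H i) x) ^ θ ≤ C * ∫⁻ x, (∑ i ∈ s, H i x) ^ θ := by
  rcases hθ.eq_or_lt with rfl | hθ1
  · refine ⟨Real.toNNReal Real.pi, fun s l H hH => ?_⟩
    simp only [ENNReal.rpow_one]
    rw [lintegral_finsetSum _ fun i _ => AA_measurable _ (hH i), lintegral_finsetSum _ fun i _ => hH i,
      Finset.mul_sum]
    refine Finset.sum_le_sum fun i _ => ?_
    have := AA_Lp (l i) (hH i) (le_refl (1 : ℝ))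
    simp only [ENNReal.rpow_one] at this
    exact this
  have h0 : 0 < θ := by linarith
  have hc := Real.HolderConjugate.conjExponent hθ1
  set θ' := Real.conjExponent θ with hθ'
  obtain ⟨C1, hC1⟩ := MM_strong hc.symm.lt
  have h0' := hc.symm.pos
  refine ⟨(8 * C1 ^ (1 / θ')) ^ θ + 1, fun s l H hH => ?_⟩
  set Y : ℝ → ℝ≥0∞ := fun x => ∑ i ∈ s, AA (l i) (H i) x with hY
  have hYm : Measurable Y := Finset.measurable_fun_sum _ fun i _ => AA_measurable _ (hH i)
  set S : ℝ → ℝ≥0∞ := fun x => ∑ i ∈ s, H i x with hS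
  have hSm : Measurable S := Finset.measurable_fun_sum _ fun i _ => hH i
  change ∫⁻ x, Y x ^ θ ≤ _ * ∫⁻ x, S x ^ θ
  by_cases hE : ∫⁻ x, S x ^ θ = ∞
  · rw [hE, ENNReal.mul_top (by simp)]; exact le_top
  have hB : ∫⁻ x, Y x ^ θ ≠ ∞ := by
    have h1 := minkowski_finset (μ := volume) s (g := fun i => AA (l i) (H i)) (fun i => AA_measurable _ (hH i)) hθ
    intro hcon
    change (∫⁻ x, Y x ^ θ) ^ (1 / θ) ≤ _ at h1
    rw [hcon, ENNReal.top_rpow_of_pos (by positivity), top_le_iff, ENNReal.sum_eq_top] at h1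
    obtain ⟨i, hi, hi2⟩ := h1
    refine absurd hi2 (ENNReal.rpow_ne_top_of_nonneg (by positivity) ?_)
    refine ne_top_of_le_ne_top ?_ (AA_Lp (l i) (hH i) hθ)
    refine ENNReal.mul_ne_top (ENNReal.rpow_ne_top_of_nonneg h0.le ENNReal.ofReal_ne_top) ?_
    refine ne_top_of_le_ne_top hE (lintegral_mono fun x => ENNReal.rpow_le_rpow ?_ h0.le)
    exact Finset.single_le_sum (f := fun i => H i x) (fun _ _ => zero_le) hi
  have hW : Measurable (fun x => Y x ^ (θ - 1)) := hYm.pow_const _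
  have key : ∫⁻ x, Y x ^ θ ≤ (8 * (C1 : ℝ≥0∞) ^ (1 / θ')) * (∫⁻ x, S x ^ θ) ^ (1 / θ)
      * (∫⁻ x, Y x ^ θ) ^ (1 / θ') := by
    calc ∫⁻ x, Y x ^ θ = ∫⁻ x, ∑ i ∈ s, Y x ^ (θ - 1) * AA (l i) (H i) x := by
          congr 1; ext x
          rw [← Finset.mul_sum]
          change _ = Y x ^ (θ - 1) * Y x
          conv_rhs => rw [← ENNReal.rpow_one (Y x)]
          rw [← ENNReal.rpow_mul, one_mul, ← ENNReal.rpow_add_of_nonneg _ _ (by linarith) (by norm_num)]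
          congr 1; ring
      _ = ∑ i ∈ s, ∫⁻ x, H i x * AA (l i) (fun x => Y x ^ (θ - 1)) x := by
          rw [lintegral_finsetSum _ fun i _ => meas_mul hW (AA_measurable _ (hH i))]
          refine Finset.sum_congr rfl fun i _ => AA_symm _ hW (hH i)
      _ ≤ ∑ i ∈ s, ∫⁻ x, H i x * (8 * MM (fun x => Y x ^ (θ - 1)) x) := by
          gcongr with i hi x
          exact AA_le_MM _ hW x
      _ = 8 * ∫⁻ x, S x * MM (fun x => Y x ^ (θ - 1)) x := by
          rw [← lintegral_finsetSum _ fun i _ => meas_mul (hH i) ((MM_measurable hW).const_mul 8),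
            ← lintegral_const_mul' _ _ (by simp)]
          congr 1; ext x
          rw [← Finset.sum_mul]; ring
      _ ≤ 8 * ((∫⁻ x, S x ^ θ) ^ (1 / θ) * (∫⁻ x, (MM (fun x => Y x ^ (θ - 1)) x) ^ θ') ^ (1 / θ')) := by
          refine mul_le_mul' le_rfl ?_
          exact ENNReal.lintegral_mul_le_Lp_mul_Lq volume hc hSm.aemeasurable (MM_measurable hW).aemeasurable
      _ ≤ 8 * ((∫⁻ x, S x ^ θ) ^ (1 / θ) * (C1 * ∫⁻ x, (Y x ^ (θ - 1)) ^ θ') ^ (1 / θ')) := by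
          refine mul_le_mul' le_rfl (mul_le_mul' le_rfl (ENNReal.rpow_le_rpow (hC1 _ hW) (by positivity)))
      _ = _ := by
          rw [ENNReal.mul_rpow_of_nonneg _ _ (by positivity)]
          have : ∀ x, (Y x ^ (θ - 1)) ^ θ' = Y x ^ θ := fun x => by
            rw [← ENNReal.rpow_mul, hc.sub_one_mul_conj]
          simp_rw [this]
          ring
  refine (absorb hc hB key).trans ?_
  gcongr
  rw [ENNReal.coe_add, ENNReal.coe_rpow_of_nonneg _ h0.le, ENNReal.coe_mul,
    ENNReal.coe_rpow_of_nonneg _ (by positivity)]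
  exact le_self_add

lemma propD2 {ρ q : ℝ} (hρ : 1 < ρ) (hq : ρ ≤ q) : ∃ C : ℝ≥0, ∀ (s : Finset ℤ) (l : ℤ → ℤ)
    (h : ℤ → ℝ → ℝ≥0∞), (∀ i, Measurable (h i)) →
    ∫⁻ x, (∑ i ∈ s, (AA (l i) (h i) x) ^ ρ) ^ (q / ρ) ≤ C * ∫⁻ x, (∑ i ∈ s, h i x ^ ρ) ^ (q / ρ) := by
  have hρ0 : 0 < ρ := by linarith
  have hθ : 1 ≤ q / ρ := by rw [one_le_div hρ0]; exact hq
  obtain ⟨C, hC⟩ := propD1 hθ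
  refine ⟨((Real.toNNReal Real.pi) ^ (ρ - 1)) ^ (q / ρ) * C, fun s l h hh => ?_⟩
  have hD := hC s l (fun i x => h i x ^ ρ) (fun i => (hh i).pow_const ρ)
  have hθ0 : 0 ≤ q / ρ := by linarith
  set c : ℝ≥0∞ := (ENNReal.ofReal Real.pi) ^ (ρ - 1) with hc
  have hcc : (((Real.toNNReal Real.pi) ^ (ρ - 1) : ℝ≥0) : ℝ≥0∞) = c := by
    rw [ENNReal.coe_rpow_of_nonneg _ (by linarith)]; rfl
  calc _ ≤ ∫⁻ x, (c * ∑ i ∈ s, AA (l i) (fun y => h i y ^ ρ) x) ^ (q / ρ) := by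
        refine lintegral_mono fun x => ENNReal.rpow_le_rpow ?_ hθ0
        rw [Finset.mul_sum]
        exact Finset.sum_le_sum fun i _ => AA_jensen _ (hh i) hρ.le x
    _ = c ^ (q / ρ) * ∫⁻ x, (∑ i ∈ s, AA (l i) (fun y => h i y ^ ρ) x) ^ (q / ρ) := by
        simp_rw [ENNReal.mul_rpow_of_nonneg _ _ hθ0]
        rw [lintegral_const_mul]
        exact (Finset.measurable_fun_sum _ fun i _ => AA_measurable _ ((hh i).pow_const _)).pow_const _
    _ ≤ _ := by
        rw [ENNReal.coe_mul, ENNReal.coe_rpow_of_nonneg _ hθ0, hcc, mul_assoc]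
        exact mul_le_mul' le_rfl hD

lemma lp_mono_finset (s : Finset ℤ) (g : ℤ → ℝ≥0∞) {p q : ℝ} (hp : 0 < p) (hpq : p ≤ q) :
    (∑ k ∈ s, (g k) ^ q) ^ (p / q) ≤ ∑ k ∈ s, (g k) ^ p := by
  have := lp_mono (fun k : s => g k) hp hpq
  rw [tsum_fintype, tsum_fintype, Finset.sum_coe_sort s (fun k => g k ^ q),
    Finset.sum_coe_sort s (fun k => g k ^ p)] at this
  have := ENNReal.rpow_le_rpow this hp.le
  rwa [← ENNReal.rpow_mul, ← ENNReal.rpow_mul, one_div_mul_cancel hp.ne', ENNReal.rpow_one,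
    show 1 / q * p = p / q by ring] at this

lemma propD3 {ρ q : ℝ} (hq : 1 < q) (hρ : q < ρ) : ∃ C : ℝ≥0, ∀ (s : Finset ℤ) (l : ℤ → ℤ)
    (h : ℤ → ℝ → ℝ≥0∞), (∀ i, Measurable (h i)) →
    ∫⁻ x, (∑ i ∈ s, (AA (l i) (h i) x) ^ ρ) ^ (q / ρ) ≤ C * ∫⁻ x, (∑ i ∈ s, h i x ^ ρ) ^ (q / ρ) := by
  have hq0 : 0 < q := by linarith
  have hρ0 : 0 < ρ := by linarith
  have hcq := Real.HolderConjugate.conjExponent hq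
  have hcρ := Real.HolderConjugate.conjExponent (hq.trans hρ)
  set q' := Real.conjExponent q with hq'
  set ρ' := Real.conjExponent ρ with hρ'
  have hq0' := hcq.symm.pos
  have hρ0' := hcρ.symm.pos
  have hiq : q'⁻¹ = 1 - q⁻¹ := by linarith [hcq.inv_add_inv_eq_one]
  have hiρ : ρ'⁻¹ = 1 - ρ⁻¹ := by linarith [hcρ.inv_add_inv_eq_one]
  have hle : ρ' ≤ q' := by
    rw [← inv_le_inv₀ hq0' hρ0', hiq, hiρ]
    have := (inv_le_inv₀ hρ0 hq0).2 hρ.le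
    linarith
  obtain ⟨C, hC⟩ := propD2 hcρ.symm.lt hle
  refine ⟨(C ^ (1 / q')) ^ q + 1, fun s l h hh => ?_⟩
  set a : ℤ → ℝ → ℝ≥0∞ := fun i => AA (l i) (h i) with ha
  have ham : ∀ i, Measurable (a i) := fun i => AA_measurable _ (hh i)
  set X : ℝ → ℝ≥0∞ := fun x => ∑ i ∈ s, a i x ^ ρ with hX
  have hXm : Measurable X := Finset.measurable_fun_sum _ fun i _ => (ham i).pow_const _
  set S : ℝ → ℝ≥0∞ := fun x => ∑ i ∈ s, h i x ^ ρ with hS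
  have hSm : Measurable S := Finset.measurable_fun_sum _ fun i _ => (hh i).pow_const _
  change ∫⁻ x, X x ^ (q / ρ) ≤ _ * ∫⁻ x, S x ^ (q / ρ)
  have hqρ : 0 < q / ρ := by positivity
  by_cases hE : ∫⁻ x, S x ^ (q / ρ) = ∞
  · rw [hE, ENNReal.mul_top (by simp)]; exact le_top
  have hB : ∫⁻ x, X x ^ (q / ρ) ≠ ∞ := by
    have h1 : ∫⁻ x, X x ^ (q / ρ) ≤ ∑ i ∈ s, ∫⁻ x, a i x ^ q := by
      rw [← lintegral_finsetSum _ fun i _ => (ham i).pow_const _]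
      exact lintegral_mono fun x => lp_mono_finset s (fun i => a i x) hq0 hρ.le
    refine ne_top_of_le_ne_top ?_ h1
    rw [ENNReal.sum_ne_top]
    intro i hi
    refine ne_top_of_le_ne_top ?_ (AA_Lp (l i) (hh i) hq.le)
    refine ENNReal.mul_ne_top (ENNReal.rpow_ne_top_of_nonneg hq0.le ENNReal.ofReal_ne_top) ?_
    refine ne_top_of_le_ne_top hE (lintegral_mono fun x => ?_)
    calc h i x ^ q = (h i x ^ ρ) ^ (q / ρ) := by rw [← ENNReal.rpow_mul]; congr 1; field_simp
      _ ≤ _ := ENNReal.rpow_le_rpow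
        (Finset.single_le_sum (f := fun i => h i x ^ ρ) (fun _ _ => zero_le) hi) hqρ.le
  have hXfin : ∀ᵐ x, X x < ∞ := by
    filter_upwards [ae_lt_top (hXm.pow_const _) hB] with x hx
    by_contra hcon
    rw [not_lt, top_le_iff] at hcon
    rw [hcon, ENNReal.top_rpow_of_pos hqρ] at hx
    exact lt_irrefl _ hx
  set k : ℤ → ℝ → ℝ≥0∞ := fun i x => a i x ^ (ρ - 1) * X x ^ (q / ρ - 1) with hk
  have hkm : ∀ i, Measurable (k i) := fun i => ((ham i).pow_const _).mul (hXm.pow_const _)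
  have id1 : ∀ᵐ x, X x ^ (q / ρ) = ∑ i ∈ s, k i x * a i x := by
    filter_upwards [hXfin] with x hx
    have : ∀ i, k i x * a i x = a i x ^ ρ * X x ^ (q / ρ - 1) := fun i => by
      rw [hk]; simp only
      rw [mul_right_comm]
      congr 1
      nth_rewrite 2 [← ENNReal.rpow_one (a i x)]
      rw [← ENNReal.rpow_add_of_nonneg _ _ (by linarith) (by norm_num)]
      congr 1; ring
    simp_rw [this, ← Finset.sum_mul]
    change _ = X x * _
    rcases eq_or_ne (X x) 0 with hz | hz
    · rw [hz, ENNReal.zero_rpow_of_pos hqρ, zero_mul]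
    · nth_rewrite 2 [← ENNReal.rpow_one (X x)]
      rw [← ENNReal.rpow_add _ _ hz hx.ne]
      congr 1; ring
  have hneg : q / ρ - 1 < 0 := by
    have : q / ρ < 1 := by rw [div_lt_one hρ0]; exact hρ
    linarith
  have id2 : ∀ x, (∑ i ∈ s, k i x ^ ρ') ^ (q' / ρ') ≤ X x ^ (q / ρ) := by
    intro x
    have : ∀ i, k i x ^ ρ' = a i x ^ ρ * X x ^ ((q / ρ - 1) * ρ') := fun i => by
      rw [hk]; simp only
      rw [ENNReal.mul_rpow_of_nonneg _ _ hρ0'.le, ← ENNReal.rpow_mul, ← ENNReal.rpow_mul,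
        hcρ.sub_one_mul_conj]
    simp_rw [this, ← Finset.sum_mul]
    change (X x * _) ^ _ ≤ _
    rcases eq_or_ne (X x) 0 with hz | hz
    · rw [hz, zero_mul, ENNReal.zero_rpow_of_pos (by positivity)]; exact zero_le
    rcases eq_or_ne (X x) ∞ with ht | ht
    · rw [ht, ENNReal.top_rpow_of_pos hqρ]; exact le_top
    refine le_of_eq ?_
    nth_rewrite 1 [← ENNReal.rpow_one (X x)]
    rw [← ENNReal.rpow_add _ _ hz ht, ← ENNReal.rpow_mul]
    congr 1
    have e1 : (1 + (q / ρ - 1) * ρ') * (q' / ρ') = q' * (ρ'⁻¹ + q / ρ - 1) := by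
      field_simp; ring
    rw [e1, hiρ]
    have e2 : q' = q / (q - 1) := by rw [hq', Real.conjExponent]
    rw [e2]
    have : q - 1 ≠ 0 := by linarith
    field_simp; ring
  have key : ∫⁻ x, X x ^ (q / ρ) ≤ ((C : ℝ≥0∞) ^ (1 / q')) * (∫⁻ x, S x ^ (q / ρ)) ^ (1 / q)
      * (∫⁻ x, X x ^ (q / ρ)) ^ (1 / q') := by
    have hTm : Measurable (fun x => ∑ i ∈ s, (AA (l i) (k i) x) ^ ρ') :=
      Finset.measurable_fun_sum _ fun i _ => (AA_measurable _ (hkm i)).pow_const _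
    calc ∫⁻ x, X x ^ (q / ρ) = ∫⁻ x, ∑ i ∈ s, k i x * a i x := lintegral_congr_ae id1
      _ = ∑ i ∈ s, ∫⁻ x, h i x * AA (l i) (k i) x := by
          rw [lintegral_finsetSum _ fun i _ => meas_mul (hkm i) (ham i)]
          exact Finset.sum_congr rfl fun i _ => AA_symm _ (hkm i) (hh i)
      _ = ∫⁻ x, ∑ i ∈ s, h i x * AA (l i) (k i) x := by
          rw [lintegral_finsetSum _ fun i _ => meas_mul (hh i) (AA_measurable _ (hkm i))]
      _ ≤ ∫⁻ x, S x ^ (1 / ρ) * (∑ i ∈ s, (AA (l i) (k i) x) ^ ρ') ^ (1 / ρ') :=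
          lintegral_mono fun x => ENNReal.inner_le_Lp_mul_Lq s _ _ hcρ
      _ ≤ (∫⁻ x, (S x ^ (1 / ρ)) ^ q) ^ (1 / q) *
          (∫⁻ x, ((∑ i ∈ s, (AA (l i) (k i) x) ^ ρ') ^ (1 / ρ')) ^ q') ^ (1 / q') :=
          ENNReal.lintegral_mul_le_Lp_mul_Lq volume hcq (hSm.pow_const _).aemeasurable
            (hTm.pow_const _).aemeasurable
      _ = (∫⁻ x, S x ^ (q / ρ)) ^ (1 / q) *
          (∫⁻ x, (∑ i ∈ s, (AA (l i) (k i) x) ^ ρ') ^ (q' / ρ')) ^ (1 / q') := by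
          simp_rw [← ENNReal.rpow_mul, one_div_mul_eq_div]
      _ ≤ (∫⁻ x, S x ^ (q / ρ)) ^ (1 / q) * (C * ∫⁻ x, X x ^ (q / ρ)) ^ (1 / q') := by
          refine mul_le_mul' le_rfl (ENNReal.rpow_le_rpow ((hC s l k hkm).trans ?_) (by positivity))
          exact mul_le_mul' le_rfl (lintegral_mono id2)
      _ = _ := by
          rw [ENNReal.mul_rpow_of_nonneg _ _ (by positivity)]; ring
  refine (absorb hcq hB key).trans ?_
  gcongr
  rw [ENNReal.coe_add, ENNReal.coe_rpow_of_nonneg _ hq0.le,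
    ENNReal.coe_rpow_of_nonneg _ (by positivity)]
  exact le_self_add

lemma propD {ρ q : ℝ} (hρ : 1 < ρ) (hq : 1 < q) : ∃ C : ℝ≥0, ∀ (s : Finset ℤ) (l : ℤ → ℤ)
    (h : ℤ → ℝ → ℝ≥0∞), (∀ i, Measurable (h i)) →
    ∫⁻ x, (∑ i ∈ s, (AA (l i) (h i) x) ^ ρ) ^ (q / ρ) ≤ C * ∫⁻ x, (∑ i ∈ s, h i x ^ ρ) ^ (q / ρ) := by
  rcases le_or_gt ρ q with h | h
  · exact propD2 hρ h
  · exact propD3 hq h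

end LPX

namespace LPX

open ContinuousLinearMap in
lemma conv_bound (K : SchwartzMap ℝ ℂ) : ∃ C : ℝ≥0, ∀ (F : SchwartzMap ℝ ℂ) (x : ℝ),
    ‖SchwartzMap.convolution (mul ℂ ℂ) K F x‖ₑ ≤ C * AA 0 (fun y => ‖F y‖ₑ) x := by
  obtain ⟨C0, hC0⟩ := K.decay 0 0
  obtain ⟨C2, hC2⟩ := K.decay 2 0
  have hK : ∀ u, ‖K u‖ₑ ≤ (Real.toNNReal (C0 + C2) : ℝ≥0∞) * PP 0 u := by
    intro u
    unfold PP
    have h0 := hC0.2 u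
    have h2 := hC2.2 u
    simp only [norm_iteratedFDeriv_zero, pow_zero, one_mul] at h0 h2
    rw [Real.norm_eq_abs, sq_abs] at h2
    have hC : 0 < C0 + C2 := by linarith [hC0.1, hC2.1]
    change _ ≤ ENNReal.ofReal (C0 + C2) * _
    rw [← ENNReal.ofReal_mul hC.le, ← ofReal_norm]
    refine ENNReal.ofReal_le_ofReal ?_
    rw [zpow_zero, one_mul, mul_one_div, le_div_iff₀ (by positivity)]
    linarith
  refine ⟨Real.toNNReal (C0 + C2), fun F x => ?_⟩
  rw [SchwartzMap.convolution_apply]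
  unfold MeasureTheory.convolution
  refine (enorm_integral_le_lintegral_enorm _).trans ?_
  have e : ∫⁻ t, ‖(mul ℂ ℂ) (K t) (F (x - t))‖ₑ = ∫⁻ y, ‖K (x - y)‖ₑ * ‖F y‖ₑ := by
    rw [← lintegral_sub_left_eq_self _ x]
    congr 1; ext y
    rw [mul_apply', enorm_mul, show x - (x - y) = y by ring]
  rw [e]
  unfold AA
  rw [← lintegral_const_mul' _ _ ENNReal.coe_ne_top]
  refine lintegral_mono fun y => ?_
  rw [← mul_assoc]
  exact mul_le_mul' (hK _) le_rfl

lemma fourier_deriv_schwartz (F : SchwartzMap ℝ ℂ) (ξ : ℝ) :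
    𝓕 (SchwartzMap.derivCLM ℂ ℂ F) ξ = (2 * Real.pi * Complex.I * ξ) * 𝓕 F ξ := by
  have h := Real.fourier_deriv F.integrable F.differentiable (SchwartzMap.derivCLM ℂ ℂ F).integrable
  have := congrFun h ξ
  rw [SchwartzMap.fourier_coe, SchwartzMap.fourier_coe]
  exact this

lemma schwartz_ext_fourier {F G : SchwartzMap ℝ ℂ} (h : ∀ ξ, 𝓕 F ξ = 𝓕 G ξ) : F = G := by
  have h1 : 𝓕 F = 𝓕 G := SchwartzMap.ext h
  have h2 : 𝓕⁻ (𝓕 F) = F := FourierTransform.fourierInv_fourier_eq F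
  have h3 : 𝓕⁻ (𝓕 G) = G := FourierTransform.fourierInv_fourier_eq G
  rw [← h2, h1, h3]

open ContinuousLinearMap in
lemma fourier_conv_inv (m F : SchwartzMap ℝ ℂ) (ξ : ℝ) :
    𝓕 (SchwartzMap.convolution (mul ℂ ℂ) (𝓕⁻ m) F) ξ = m ξ * 𝓕 F ξ := by
  rw [SchwartzMap.fourier_convolution, FourierTransform.fourier_fourierInv_eq]
  rfl

lemma exists_mult (Nb : ℝ) : ∃ m1 m2 : SchwartzMap ℝ ℂ, ∀ ξ : ℝ,
    (2 : ℝ) ^ (-Nb) < |ξ| → |ξ| < (2 : ℝ) ^ Nb →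
    m1 ξ = 2 * Real.pi * Complex.I * ξ ∧ (2 * Real.pi * Complex.I * ξ) * m2 ξ = 1 := by
  have ha : (0 : ℝ) < 2 ^ Nb := by positivity
  have hb : (0 : ℝ) < 2 ^ (-Nb) := by positivity
  let φ1 : ContDiffBump (0 : ℝ) := ⟨2 ^ Nb, 2 * 2 ^ Nb, ha, by linarith⟩
  let φ2 : ContDiffBump (0 : ℝ) := ⟨2 ^ (-Nb) / 2, 2 ^ (-Nb), by linarith, by linarith⟩
  let χ : ℝ → ℂ := fun ξ => ((φ1 ξ - φ2 ξ : ℝ) : ℂ)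
  have hχ : ContDiff ℝ (⊤ : ℕ∞) χ := Complex.ofRealCLM.contDiff.comp (φ1.contDiff.sub φ2.contDiff)
  have hχs : HasCompactSupport χ := by
    have : HasCompactSupport (fun ξ => φ1 ξ - φ2 ξ) := by
      refine HasCompactSupport.sub φ1.hasCompactSupport φ2.hasCompactSupport
    exact this.comp_left (g := ((↑) : ℝ → ℂ)) (by simp)
  have h1 : ∀ ξ : ℝ, (2 : ℝ) ^ (-Nb) < |ξ| → |ξ| < (2 : ℝ) ^ Nb → χ ξ = 1 := by
    intro ξ h1 h2
    have e1 : φ1 ξ = 1 := φ1.one_of_mem_closedBall (by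
      rw [mem_closedBall_zero_iff, Real.norm_eq_abs]; exact h2.le)
    have e2 : φ2 ξ = 0 := φ2.zero_of_le_dist (by
      rw [dist_zero_right, Real.norm_eq_abs]; exact h1.le)
    simp [χ, e1, e2]
  have h0 : ∀ᶠ ξ in nhds (0 : ℝ), χ ξ = 0 := by
    filter_upwards [φ1.eventuallyEq_one, φ2.eventuallyEq_one] with ξ e1 e2
    simp [χ, e1, e2]
  have hid : ContDiff ℝ (⊤ : ℕ∞) (fun ξ : ℝ => 2 * (Real.pi : ℂ) * Complex.I * (ξ : ℂ)) :=
    contDiff_const.mul Complex.ofRealCLM.contDiff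
  have hm1 : ContDiff ℝ (⊤ : ℕ∞) (fun ξ : ℝ => 2 * (Real.pi : ℂ) * Complex.I * (ξ : ℂ) * χ ξ) := hid.mul hχ
  have hpi : (Real.pi : ℂ) ≠ 0 := by exact_mod_cast Real.pi_ne_zero
  have hm2 : ContDiff ℝ (⊤ : ℕ∞) (fun ξ : ℝ => (2 * (Real.pi : ℂ) * Complex.I * (ξ : ℂ))⁻¹ * χ ξ) := by
    rw [contDiff_iff_contDiffAt]
    intro ξ
    by_cases hξ : ξ = 0
    · subst hξ
      refine ContDiffAt.congr_of_eventuallyEq (f := fun _ => (0 : ℂ)) contDiffAt_const ?_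
      filter_upwards [h0] with ξ e
      rw [e, mul_zero]
    · refine ContDiffAt.mul (ContDiffAt.inv hid.contDiffAt ?_) hχ.contDiffAt
      simp [hξ]
  refine ⟨HasCompactSupport.toSchwartzMap (hχs.mul_left) hm1,
    HasCompactSupport.toSchwartzMap (hχs.mul_left) hm2, fun ξ h2 h3 => ?_⟩
  have hξ : ξ ≠ 0 := by
    intro h; rw [h, abs_zero] at h2; linarith
  have hne : (2 * (Real.pi : ℂ) * Complex.I * (ξ : ℂ)) ≠ 0 := by simp [hξ]
  constructor
  · change 2 * (Real.pi : ℂ) * Complex.I * (ξ : ℂ) * χ ξ = _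
    rw [h1 ξ h2 h3, mul_one]
  · change _ * ((2 * (Real.pi : ℂ) * Complex.I * (ξ : ℂ))⁻¹ * χ ξ) = 1
    rw [h1 ξ h2 h3, mul_one, mul_inv_cancel₀ hne]

lemma base_case (Nb : ℝ) : ∃ C : ℝ≥0, ∀ F : SchwartzMap ℝ ℂ,
    (∀ ξ : ℝ, 𝓕 (⇑F) ξ ≠ 0 → (2 : ℝ) ^ (-Nb) < |ξ| ∧ |ξ| < (2 : ℝ) ^ Nb) →
    (∀ x, ‖deriv F x‖ₑ ≤ C * AA 0 (fun y => ‖F y‖ₑ) x) ∧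
    ∃ G : SchwartzMap ℝ ℂ, (∀ x, deriv G x = F x) ∧ ∀ x, ‖G x‖ₑ ≤ C * AA 0 (fun y => ‖F y‖ₑ) x := by
  obtain ⟨m1, m2, hm⟩ := exists_mult Nb
  obtain ⟨C1, hC1⟩ := conv_bound (𝓕⁻ m1)
  obtain ⟨C2, hC2⟩ := conv_bound (𝓕⁻ m2)
  refine ⟨C1 + C2, fun F hF => ⟨fun x => ?_, ?_⟩⟩
  · have e : SchwartzMap.derivCLM ℂ ℂ F = SchwartzMap.convolution (ContinuousLinearMap.mul ℂ ℂ) (𝓕⁻ m1) F := by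
      refine schwartz_ext_fourier fun ξ => ?_
      rw [fourier_deriv_schwartz, fourier_conv_inv]
      by_cases h : 𝓕 F ξ = 0
      · rw [h, mul_zero, mul_zero]
      · obtain ⟨h1, h2⟩ := hF ξ (by rw [SchwartzMap.fourier_coe] at h; exact h)
        rw [(hm ξ h1 h2).1]
    have e2 : deriv F x = SchwartzMap.derivCLM ℂ ℂ F x := rfl
    rw [e2, e]
    refine (hC1 F x).trans ?_
    gcongr
    exact_mod_cast le_self_add
  · refine ⟨SchwartzMap.convolution (ContinuousLinearMap.mul ℂ ℂ) (𝓕⁻ m2) F, fun x => ?_, fun x => ?_⟩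
    · have e : SchwartzMap.derivCLM ℂ ℂ (SchwartzMap.convolution (ContinuousLinearMap.mul ℂ ℂ) (𝓕⁻ m2) F) = F := by
        refine schwartz_ext_fourier fun ξ => ?_
        rw [fourier_deriv_schwartz, fourier_conv_inv]
        by_cases h : 𝓕 F ξ = 0
        · rw [h, mul_zero, mul_zero]
        · obtain ⟨h1, h2⟩ := hF ξ (by rw [SchwartzMap.fourier_coe] at h; exact h)
          rw [← mul_assoc, (hm ξ h1 h2).2, one_mul]
      conv_rhs => rw [← e]
      rfl
    · refine (hC2 F x).trans ?_
      gcongr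
      exact_mod_cast le_add_self

lemma lintegral_scale (g : ℝ → ℝ≥0∞) {a : ℝ} (ha : 0 < a) :
    ∫⁻ y, g y = ENNReal.ofReal a * ∫⁻ x, g (a * x) := by
  conv_lhs => rw [← Real.smul_map_volume_mul_left ha.ne']
  rw [lintegral_smul_measure, abs_of_pos ha, smul_eq_mul]
  congr 1
  exact (Homeomorph.mulLeft₀ a ha.ne').measurableEmbedding.lintegral_map _

lemma AA_scale (i : ℤ) (h : ℝ → ℝ≥0∞) (x : ℝ) :
    AA 0 (fun y => h ((2 : ℝ) ^ (-i) * y)) ((2 : ℝ) ^ i * x) = AA i h x := by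
  have hc : (0 : ℝ) < 2 ^ i := by positivity
  unfold AA
  rw [lintegral_scale _ hc, ← lintegral_const_mul' _ _ ENNReal.ofReal_ne_top]
  congr 1; ext y
  dsimp only
  rw [← mul_assoc (2 ^ (-i) : ℝ), ← zpow_add₀ (by norm_num), neg_add_cancel, zpow_zero, one_mul, ← mul_assoc]
  congr 1
  unfold PP
  rw [← ENNReal.ofReal_mul hc.le]
  congr 1
  rw [zpow_zero, one_mul, mul_one_div, mul_sub]

lemma scaled_case (Nb : ℝ) : ∃ C : ℝ≥0, ∀ (i : ℤ) (f : SchwartzMap ℝ ℂ),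
    (∀ ξ : ℝ, 𝓕 (⇑f) ξ ≠ 0 → (2 : ℝ) ^ ((i : ℝ) - Nb) < |ξ| ∧ |ξ| < (2 : ℝ) ^ ((i : ℝ) + Nb)) →
    (∀ x, ‖deriv f x‖ₑ ≤ C * ENNReal.ofReal (2 ^ i) * AA i (fun y => ‖f y‖ₑ) x) ∧
    ∃ G : ℝ → ℂ, (∀ x, HasDerivAt G (f x) x) ∧ (∃ B, ∀ z, ‖G z‖ ≤ B) ∧
      ∀ x, ‖G x‖ₑ ≤ C * ENNReal.ofReal (2 ^ (-i)) * AA i (fun y => ‖f y‖ₑ) x := by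
  obtain ⟨C, hC⟩ := base_case Nb
  refine ⟨C, fun i f hf => ?_⟩
  have hc : (0 : ℝ) < 2 ^ i := by positivity
  have hc' : (0 : ℝ) < 2 ^ (-i) := by positivity
  have hcc : (2 : ℝ) ^ (-i) * 2 ^ i = 1 := by rw [← zpow_add₀ (by norm_num)]; simp
  let e : ℝ ≃L[ℝ] ℝ := ContinuousLinearEquiv.smulLeft (Units.mk0 ((2 : ℝ) ^ (-i)) hc'.ne')
  let F : SchwartzMap ℝ ℂ := SchwartzMap.compCLMOfContinuousLinearEquiv ℂ e f
  have hFx : ∀ y, F y = f ((2 : ℝ) ^ (-i) * y) := fun y => rfl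
  have hFour : ∀ ξ, 𝓕 (⇑F) ξ ≠ 0 → 𝓕 (⇑f) (2 ^ i * ξ) ≠ 0 := by
    intro ξ h hcon
    apply h
    have : (⇑F) = fun y => f ((2 : ℝ) ^ (-i) * y) := funext hFx
    rw [Real.fourier_eq', this]
    rw [Real.fourier_eq'] at hcon
    have h2 := Measure.integral_comp_mul_left
      (fun v : ℝ => Complex.exp (↑(-2 * Real.pi * inner ℝ v (2 ^ i * ξ)) * Complex.I) • f v) ((2 : ℝ) ^ (-i))
    rw [hcon, smul_zero] at h2
    rw [← h2]
    congr 1; ext v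
    congr 4
    simp only [RCLike.inner_apply, conj_trivial]
    linear_combination (2 * Real.pi * ξ * v) * hcc
  obtain ⟨h1, G, hG1, hG2⟩ := hC F (by
    intro ξ h
    have := hf _ (hFour ξ h)
    rw [abs_mul, abs_of_pos hc, Real.rpow_sub (by norm_num), Real.rpow_add (by norm_num),
      Real.rpow_intCast] at this
    rw [Real.rpow_neg (by norm_num)]
    constructor
    · have := this.1
      rw [div_eq_mul_inv] at this
      exact lt_of_mul_lt_mul_left this hc.le
    · exact lt_of_mul_lt_mul_left this.2 hc.le)
  have hA : ∀ x, AA 0 (fun y => ‖F y‖ₑ) (2 ^ i * x) = AA i (fun y => ‖f y‖ₑ) x := fun x =>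
    AA_scale i (fun y => ‖f y‖ₑ) x
  have hfF : ∀ x, f x = F (2 ^ i * x) := fun x => by
    rw [hFx, ← mul_assoc, hcc, one_mul]
  refine ⟨fun x => ?_, fun x => ((2 ^ (-i) : ℝ) : ℂ) * G (2 ^ i * x), fun x => ?_, ?_, fun x => ?_⟩
  · have e1 : deriv f x = ((2 : ℝ) ^ i) • deriv F (2 ^ i * x) := by
      have : (⇑f) = fun x => F (2 ^ i * x) := funext hfF
      rw [this]
      exact deriv_comp_mul_left ((2 : ℝ) ^ i) (⇑F) x
    rw [e1, enorm_smul, Real.enorm_of_nonneg hc.le, ← hA x]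
    calc _ ≤ ENNReal.ofReal (2 ^ i) * (C * AA 0 (fun y => ‖F y‖ₑ) (2 ^ i * x)) :=
          mul_le_mul' le_rfl (h1 _)
      _ = _ := by ring
  · have hd : HasDerivAt G (F (2 ^ i * x)) (2 ^ i * x) := by
      rw [← hG1]; exact G.differentiableAt.hasDerivAt
    have h3 := (hd.scomp x ((hasDerivAt_id x).const_mul ((2 : ℝ) ^ i))).const_mul (((2 ^ (-i) : ℝ)) : ℂ)
    refine h3.congr_deriv ?_
    rw [hfF x, Complex.real_smul, ← mul_assoc, ← Complex.ofReal_mul, mul_one, hcc, Complex.ofReal_one, one_mul]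
  · obtain ⟨B, hB⟩ := G.decay 0 0
    have h0 := hB.2
    simp only [norm_iteratedFDeriv_zero, pow_zero, one_mul] at h0
    refine ⟨2 ^ (-i) * B, fun z => ?_⟩
    rw [norm_mul, Complex.norm_real, Real.norm_of_nonneg hc'.le]
    gcongr
    exact h0 _
  · rw [enorm_mul, ← ofReal_norm ((2 ^ (-i) : ℝ) : ℂ), Complex.norm_real, Real.norm_of_nonneg hc'.le, ← hA x]
    calc _ ≤ ENNReal.ofReal (2 ^ (-i)) * (C * AA 0 (fun y => ‖F y‖ₑ) (2 ^ i * x)) :=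
          mul_le_mul' le_rfl (hG2 _)
      _ = _ := by ring

end LPX

namespace LPX

lemma PP_shift {l i : ℤ} (hli : l ≤ i) {x z : ℝ} (hz : |z - x| ≤ (2 : ℝ) ^ (-l)) (y : ℝ) :
    PP i (z - y) ≤ ENNReal.ofReal (3 * 2 ^ (i - l)) * PP l (x - y) := by
  unfold PP
  rw [← ENNReal.ofReal_mul (by positivity)]
  refine ENNReal.ofReal_le_ofReal ?_
  have hl : (0 : ℝ) < 2 ^ l := by positivity
  have hmono : (2 : ℝ) ^ l ≤ 2 ^ i := zpow_le_zpow_right₀ (by norm_num) hli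
  have e : (2 : ℝ) ^ (i - l) * 2 ^ l = 2 ^ i := by rw [← zpow_add₀ (by norm_num)]; simp
  have h1 : (2 ^ l * (x - y)) ^ 2 + 1 ≤ 3 * (1 + (2 ^ l * (z - y)) ^ 2) := by
    have hb : |2 ^ l * (x - z)| ≤ 1 := by
      rw [abs_mul, abs_of_pos hl, abs_sub_comm]
      calc _ ≤ (2 : ℝ) ^ l * 2 ^ (-l) := by gcongr
        _ = 1 := by rw [← zpow_add₀ (by norm_num)]; simp
    have hb2 : (2 ^ l * (x - z)) ^ 2 ≤ 1 := by
      rw [← sq_abs]; exact pow_le_one₀ (abs_nonneg _) hb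
    have : (2 : ℝ) ^ l * (x - y) = 2 ^ l * (x - z) + 2 ^ l * (z - y) := by ring
    rw [this]
    nlinarith [sq_nonneg (2 ^ l * (x - z) - 2 ^ l * (z - y))]
  have h2 : (2 ^ l * (z - y)) ^ 2 ≤ (2 ^ i * (z - y)) ^ 2 := by
    rw [mul_pow, mul_pow]; gcongr
  rw [mul_div_assoc', mul_assoc, e, div_le_div_iff₀ (by positivity) (by positivity)]
  have h3 : (1 + (2 ^ l * (x - y)) ^ 2) ≤ 3 * (1 + (2 ^ i * (z - y)) ^ 2) := by linarith
  have := mul_le_mul_of_nonneg_left h3 (show (0 : ℝ) ≤ 2 ^ i by positivity)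
  linarith

lemma AA_shift {l i : ℤ} (hli : l ≤ i) {x z : ℝ} (hz : |z - x| ≤ (2 : ℝ) ^ (-l)) (H : ℝ → ℝ≥0∞) :
    AA i H z ≤ ENNReal.ofReal (3 * 2 ^ (i - l)) * AA l H x := by
  unfold AA
  rw [← lintegral_const_mul' _ _ ENNReal.ofReal_ne_top]
  refine lintegral_mono fun y => ?_
  rw [← mul_assoc]
  exact mul_le_mul' (PP_shift hli hz y) le_rfl

lemma AA_main {s : ℝ} (hs : 1 < s) : ∃ K : ℝ≥0, ∀ (l i : ℤ), l ≤ i → ∀ (x z : ℝ), |z - x| ≤ (2 : ℝ) ^ (-l) →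
    ∀ h : ℝ → ℝ≥0∞, Measurable h →
    AA i h z ≤ K * ENNReal.ofReal ((2 : ℝ) ^ (((i : ℝ) - l) / s)) * (AA l (fun y => h y ^ s) x) ^ (1 / s) := by
  have hs0 : 0 < s := by linarith
  refine ⟨(Real.toNNReal Real.pi ^ (s - 1) * 3) ^ (1 / s), fun l i hli x z hz h hh => ?_⟩
  have hK : (((Real.toNNReal Real.pi ^ (s - 1) * 3) ^ (1 / s) : ℝ≥0) : ℝ≥0∞)
      = (ENNReal.ofReal Real.pi ^ (s - 1) * 3) ^ (1 / s) := by
    rw [ENNReal.coe_rpow_of_nonneg _ (by positivity), ENNReal.coe_mul,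
      ENNReal.coe_rpow_of_nonneg _ (by linarith)]
    rfl
  rw [hK]
  have e : ENNReal.ofReal ((2 : ℝ) ^ (((i : ℝ) - l) / s)) = ENNReal.ofReal (2 ^ (i - l)) ^ (1 / s) := by
    rw [ENNReal.ofReal_rpow_of_pos (by positivity), ← Real.rpow_intCast, ← Real.rpow_mul (by norm_num)]
    congr 2; push_cast; ring
  rw [e, ← ENNReal.mul_rpow_of_nonneg _ _ (by positivity), ← ENNReal.mul_rpow_of_nonneg _ _ (by positivity)]
  calc AA i h z = (AA i h z ^ s) ^ (1 / s) := by
        rw [← ENNReal.rpow_mul, mul_one_div_cancel hs0.ne', ENNReal.rpow_one]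
    _ ≤ _ := by
        refine ENNReal.rpow_le_rpow ?_ (by positivity)
        calc _ ≤ _ := AA_jensen i hh hs.le z
          _ ≤ ENNReal.ofReal Real.pi ^ (s - 1) * (ENNReal.ofReal (3 * 2 ^ (i - l)) * AA l (fun y => h y ^ s) x) :=
            mul_le_mul' le_rfl (AA_shift hli hz _)
          _ = _ := by
            rw [ENNReal.ofReal_mul (by norm_num)]
            simp only [ENNReal.ofReal_ofNat]
            ring

def gam (δ : ℝ) (m : ℤ) : ℝ≥0∞ := ENNReal.ofReal ((2 : ℝ) ^ (-(δ * |(m : ℝ)|)))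

lemma enorm_le_of_toReal {a : ℂ} {E : ℝ≥0∞} (hE : E ≠ ∞) (h : ‖a‖ₑ ≤ E) : ‖a‖ ≤ E.toReal := by
  rw [← toReal_enorm]; exact ENNReal.toReal_mono hE h

lemma DD_main (Nb : ℝ) {s : ℝ} (hs : 1 < s) : ∃ K : ℝ≥0, ∀ (i : ℤ) (f : SchwartzMap ℝ ℂ),
    (∀ ξ : ℝ, 𝓕 (⇑f) ξ ≠ 0 → (2 : ℝ) ^ ((i : ℝ) - Nb) < |ξ| ∧ |ξ| < (2 : ℝ) ^ ((i : ℝ) + Nb)) →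
    ∃ G : ℝ → ℂ, (∀ x, HasDerivAt G (f x) x) ∧ (∃ B, ∀ z, ‖G z‖ ≤ B) ∧
      ∀ (m : ℤ) x, ‖DD (i + m) G x‖ₑ ≤ K * gam (1 - 1 / s) m *
        (AA (i + min m 0) (fun y => ‖f y‖ₑ ^ s) x) ^ (1 / s) := by
  have hs0 : 0 < s := by linarith
  obtain ⟨C, hC⟩ := scaled_case Nb
  obtain ⟨K, hK⟩ := AA_main hs
  refine ⟨4 * C * K + 1, fun i f hf => ?_⟩
  obtain ⟨h1, G, hG1, hG2, hG3⟩ := hC i f hf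
  refine ⟨G, hG1, hG2, fun m x => ?_⟩
  have hfm : Measurable (fun y => ‖f y‖ₑ) := f.continuous.measurable.enorm
  set l := i + min m 0 with hl
  set W := (AA l (fun y => ‖f y‖ₑ ^ s) x) ^ (1 / s) with hW
  have hgam : gam (1 - 1 / s) m ≠ 0 := by unfold gam; simp; positivity
  by_cases hWt : W = ∞
  · rw [hWt, ENNReal.mul_top]
    · exact le_top
    · exact mul_ne_zero (by simp) hgam
  have hli : l ≤ i := by rw [hl]; have := min_le_right m 0; omega
  have hz : ∀ z, |z - x| ≤ (2 : ℝ) ^ (-(i + m)) → |z - x| ≤ (2 : ℝ) ^ (-l) := fun z h => by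
    refine h.trans (zpow_le_zpow_right₀ (by norm_num) ?_)
    have := min_le_left m 0; omega
  have hA : ∀ z, |z - x| ≤ (2 : ℝ) ^ (-(i + m)) → AA i (fun y => ‖f y‖ₑ) z
      ≤ K * ENNReal.ofReal ((2 : ℝ) ^ (((i : ℝ) - l) / s)) * W := fun z h =>
    hK l i hli x z (hz z h) _ hfm
  have hMt : (K : ℝ≥0∞) * ENNReal.ofReal ((2 : ℝ) ^ (((i : ℝ) - l) / s)) * W ≠ ∞ :=
    ENNReal.mul_ne_top (ENNReal.mul_ne_top ENNReal.coe_ne_top ENNReal.ofReal_ne_top) hWt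
  have hd0 : 0 < 1 / s := by positivity
  have hd1 : 1 / s < 1 := by rw [div_lt_one hs0]; exact hs
  rcases le_or_gt 0 m with hm | hm
  · have hle : l = i := by rw [hl, min_eq_right hm, add_zero]
    set E : ℝ≥0∞ := C * ENNReal.ofReal (2 ^ i) * (K * ENNReal.ofReal ((2 : ℝ) ^ (((i : ℝ) - l) / s)) * W)
    have hEt : E ≠ ∞ := ENNReal.mul_ne_top (ENNReal.mul_ne_top ENNReal.coe_ne_top ENNReal.ofReal_ne_top) hMt
    have h := norm_DD_le_deriv (i + m) G f (deriv f) hG1 (fun z => f.differentiableAt.hasDerivAt) x E.toReal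
      (fun z hz => enorm_le_of_toReal hEt ((h1 z).trans (mul_le_mul' le_rfl (hA z hz))))
    have h' : ‖DD (i + m) G x‖ₑ ≤ ENNReal.ofReal (2 ^ (-(i + m))) * E := by
      rw [← ofReal_norm]
      refine (ENNReal.ofReal_le_ofReal h).trans ?_
      rw [ENNReal.ofReal_mul (by positivity), ENNReal.ofReal_toReal hEt]
    refine h'.trans ?_
    have e1 : ENNReal.ofReal (2 ^ (-(i + m))) * ENNReal.ofReal (2 ^ i) * ENNReal.ofReal ((2 : ℝ) ^ (((i : ℝ) - l) / s))
        ≤ gam (1 - 1 / s) m := by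
      unfold gam
      rw [← ENNReal.ofReal_mul (by positivity), ← ENNReal.ofReal_mul (by positivity)]
      refine ENNReal.ofReal_le_ofReal ?_
      rw [hle, sub_self, zero_div, Real.rpow_zero, mul_one, ← zpow_add₀ (by norm_num), ← Real.rpow_intCast]
      refine Real.rpow_le_rpow_of_exponent_le (by norm_num) ?_
      have hm' : (0 : ℝ) ≤ m := by exact_mod_cast hm
      rw [abs_of_nonneg hm']
      push_cast
      nlinarith
    calc _ = (C * K : ℝ≥0∞) * (ENNReal.ofReal (2 ^ (-(i + m))) * ENNReal.ofReal (2 ^ i) *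
          ENNReal.ofReal ((2 : ℝ) ^ (((i : ℝ) - l) / s))) * W := by ring
      _ ≤ (C * K : ℝ≥0∞) * gam (1 - 1 / s) m * W := by gcongr
      _ ≤ _ := by
        gcongr
        push_cast
        calc (C : ℝ≥0∞) * K = 1 * (C * K) := by ring
          _ ≤ 4 * (C * K) := by gcongr; norm_num
          _ = 4 * C * K := by ring
          _ ≤ _ := le_self_add
  · have hle : l = i + m := by rw [hl, min_eq_left hm.le]
    set E : ℝ≥0∞ := C * ENNReal.ofReal (2 ^ (-i)) * (K * ENNReal.ofReal ((2 : ℝ) ^ (((i : ℝ) - l) / s)) * W)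
    have hEt : E ≠ ∞ := ENNReal.mul_ne_top (ENNReal.mul_ne_top ENNReal.coe_ne_top ENNReal.ofReal_ne_top) hMt
    have h := norm_DD_le_sup (i + m) G x E.toReal
      (fun z hz => enorm_le_of_toReal hEt ((hG3 z).trans (mul_le_mul' le_rfl (hA z hz))))
    have h' : ‖DD (i + m) G x‖ₑ ≤ ENNReal.ofReal (2 ^ (i + m)) * (4 * E) := by
      rw [← ofReal_norm]
      refine (ENNReal.ofReal_le_ofReal h).trans ?_
      rw [ENNReal.ofReal_mul (by positivity), ENNReal.ofReal_mul (by positivity), ENNReal.ofReal_toReal hEt]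
      simp
    refine h'.trans ?_
    have e1 : ENNReal.ofReal (2 ^ (i + m)) * ENNReal.ofReal (2 ^ (-i)) * ENNReal.ofReal ((2 : ℝ) ^ (((i : ℝ) - l) / s))
        ≤ gam (1 - 1 / s) m := by
      unfold gam
      rw [← ENNReal.ofReal_mul (by positivity), ← ENNReal.ofReal_mul (by positivity)]
      refine ENNReal.ofReal_le_ofReal ?_
      rw [← zpow_add₀ (by norm_num), ← Real.rpow_intCast, ← Real.rpow_add (by norm_num)]
      refine Real.rpow_le_rpow_of_exponent_le (by norm_num) ?_
      have hm' : (m : ℝ) ≤ 0 := by exact_mod_cast hm.le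
      rw [abs_of_nonpos hm', hle]
      push_cast
      apply le_of_eq
      ring
    calc _ = (4 * C * K : ℝ≥0∞) * (ENNReal.ofReal (2 ^ (i + m)) * ENNReal.ofReal (2 ^ (-i)) *
          ENNReal.ofReal ((2 : ℝ) ^ (((i : ℝ) - l) / s))) * W := by ring
      _ ≤ (4 * C * K : ℝ≥0∞) * gam (1 - 1 / s) m * W := by gcongr
      _ ≤ _ := by
        gcongr
        push_cast
        exact le_self_add

lemma gam_sum {δ : ℝ} (hδ : 0 < δ) : ∑' m : ℤ, gam δ m ≠ ∞ := by
  have h0 : ∀ m : ℤ, 0 ≤ (2 : ℝ) ^ (-(δ * |(m : ℝ)|)) := fun m => by positivity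
  have hn : Summable (fun n : ℕ => (2 : ℝ) ^ (-(δ * (n : ℝ)))) := by
    have : (fun n : ℕ => (2 : ℝ) ^ (-(δ * (n : ℝ)))) = fun n : ℕ => ((2 : ℝ) ^ (-δ)) ^ n := by
      ext n
      rw [← Real.rpow_natCast, ← Real.rpow_mul (by norm_num)]; congr 1; ring
    rw [this]
    exact summable_geometric_of_lt_one (by positivity) (Real.rpow_lt_one_of_one_lt_of_neg (by norm_num) (by linarith))
  have hs : Summable (fun m : ℤ => (2 : ℝ) ^ (-(δ * |(m : ℝ)|))) := by
    refine Summable.of_nat_of_neg ?_ ?_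
    · simpa using hn
    · simpa using hn
  unfold gam
  rw [← ENNReal.ofReal_tsum_of_nonneg h0 hs]
  exact ENNReal.ofReal_ne_top

end LPX

namespace LPX

/-! ### Assembly -/

/-- the window of radius `M` of a two-sided sequence, as a one-sided sequence -/
def wnd (b : ℤ → ℂ) (M : ℕ) : ℕ → ℂ := fun n => if n < 2 * M then b ((n : ℤ) - M) else 0

lemma wnd_sum_le (b : ℤ → ℂ) (M : ℕ) {A B : ℕ} (hB : B ≤ 2 * M) :
    ∑ i ∈ Finset.Ico A B, wnd b M i = ∑ i ∈ Finset.Ico ((A : ℤ) - M) ((B : ℤ) - M), b i := by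
  refine Finset.sum_bij (fun i _ => (i : ℤ) - M) ?_ ?_ ?_ ?_
  · intro i hi; simp only [Finset.mem_Ico] at hi ⊢; omega
  · intro i hi j hj h; simpa using h
  · intro j hj; simp only [Finset.mem_Ico] at hj
    exact ⟨(j + M).toNat, by simp only [Finset.mem_Ico]; omega, by omega⟩
  · intro i hi; simp only [Finset.mem_Ico] at hi
    unfold wnd; rw [if_pos (by omega)]

lemma wnd_sum_min (b : ℤ → ℂ) (M A B : ℕ) :
    ∑ i ∈ Finset.Ico A B, wnd b M i
      = ∑ i ∈ Finset.Ico (min A (2 * M)) (min B (2 * M)), wnd b M i := by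
  symm
  refine Finset.sum_subset_zero_on_sdiff ?_ ?_ (fun _ _ => rfl)
  · intro i hi; simp only [Finset.mem_Ico] at hi ⊢; omega
  · intro i hi; simp only [Finset.mem_sdiff, Finset.mem_Ico] at hi
    unfold wnd; rw [if_neg (by omega)]

lemma VV_wnd_mono (t : ℝ) (b : ℤ → ℂ) {M M' : ℕ} (h : M ≤ M') :
    VV t (wnd b M) ≤ VV t (wnd b M') := by
  refine iSup₂_le fun N hN => ?_
  refine le_trans (le_of_eq ?_) (le_VV t _ (fun k => min (N k) (2 * M) + (M' - M))
    (fun i j hij => Nat.add_le_add_right (min_le_min (hN hij) le_rfl) _))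
  congr 1
  congr 1; ext k; congr 2
  rw [wnd_sum_min, wnd_sum_le _ _ (min_le_right _ _), wnd_sum_le _ _ (by omega)]
  congr 1
  congr 1 <;> push_cast [h] <;> ring

lemma jump_le_wnd {t : ℝ} (ht : 1 ≤ t) (b : ℤ → ℂ) (N : ℕ → ℤ) (hN : Monotone N) :
    (∑' k, ‖∑ i ∈ Finset.Ioc (N k) (N (k + 1)), b i‖ₑ ^ t) ^ (1 / t)
      ≤ ⨆ M, VV t (wnd b M) := by
  have ht0 : 0 < t := by linarith
  rw [ENNReal.tsum_eq_iSup_nat, iSup_rpow _ (by positivity : 0 < 1 / t)]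
  refine iSup_le fun K => ?_
  set M : ℕ := (N 0).natAbs + (N K).natAbs + 1 with hM
  refine le_trans ?_ (le_iSup _ M)
  have hb : ∀ k, N 0 ≤ N (min k K) ∧ N (min k K) ≤ N K := fun k =>
    ⟨hN (Nat.zero_le _), hN (min_le_right _ _)⟩
  refine le_trans ?_ (le_VV t _ (fun k => (N (min k K) + 1 + M).toNat)
    (fun i j hij => Int.toNat_le_toNat (by
      have := hN (min_le_min hij (le_refl K)); omega)))
  refine ENNReal.rpow_le_rpow ?_ (by positivity)
  refine le_trans (Finset.sum_le_sum fun k hk => ?_) (ENNReal.sum_le_tsum (Finset.range K))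
  have hk := Finset.mem_range.1 hk
  refine le_of_eq ?_
  congr 2
  have h1 := hb k
  have h2 := hb (k + 1)
  rw [wnd_sum_le _ _ (by omega)]
  have e1 : min k K = k := by omega
  have e2 : min (k + 1) K = k + 1 := by omega
  rw [e1] at h1
  rw [e2] at h2
  rw [e1, e2]
  congr 1
  ext i; simp only [Finset.mem_Ioc, Finset.mem_Ico]; omega

/-- one piece of the decomposition -/
def VM (t : ℝ) (G : ℤ → ℝ → ℂ) (m : ℤ) (M : ℕ) (x : ℝ) : ℝ≥0∞ :=
  VV t (wnd (fun i => DD (i + m) (G i) x) M)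

lemma wnd_DD (G : ℤ → ℝ → ℂ) (m : ℤ) (M : ℕ) (n : ℕ) (x : ℝ) :
    wnd (fun i => DD (i + m) (G i) x) M n
      = (if n < 2 * M then (1 : ℂ) else 0) * DD (n + (m - M)) (G ((n : ℤ) - M)) x := by
  unfold wnd
  split_ifs with h
  · have e : (n : ℤ) - M + m = n + (m - M) := by ring
    rw [one_mul, ← e]
  · rw [zero_mul]

lemma wnd_Df (G : ℤ → ℝ → ℂ) (m : ℤ) (M : ℕ) :
    Df (fun n : ℕ => dq (n + (m - M))) (fun n : ℕ => sig (n + (m - M)))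
      (fun n x => wnd (fun i => DD (i + m) (G i) x) M n) := by
  have h := (Df_DD (m - M) (fun n => G ((n : ℤ) - M))).mul_pred (Dy_dq (m - M))
    (fun n _ => if n < 2 * M then (1 : ℂ) else 0) (fun _ _ _ _ => rfl)
  convert h using 3
  exact wnd_DD _ _ _ _ _

lemma VM_measurable (t : ℝ) (G : ℤ → ℝ → ℂ) (m : ℤ) (M : ℕ) : Measurable (VM t G m M) := by
  refine (Dy_dq (m - M)).measurable_of_fiber (2 * M) _ fun x y hxy => ?_
  unfold VM
  congr 1
  ext n
  by_cases h : n < 2 * M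
  · exact (wnd_Df G m M).adapted_lt (Dy_dq (m - M)) h hxy
  · unfold wnd; rw [if_neg h, if_neg h]

lemma VM_mono (t : ℝ) (G : ℤ → ℝ → ℂ) (m : ℤ) : Monotone (VM t G m) :=
  fun _ _ h _ => VV_wnd_mono t _ h

lemma pointwise {t : ℝ} (ht : 1 ≤ t) (f G : ℤ → ℝ → ℂ) (N : ℕ → ℤ) (hN : Monotone N) (x : ℝ)
    (hG : ∀ i, HasDerivAt (G i) (f i x) x) (hB : ∀ i, ∃ B, ∀ z, ‖G i z‖ ≤ B) :
    (∑' k, ‖∑ i ∈ Finset.Ioc (N k) (N (k + 1)), f i x‖ₑ ^ t) ^ (1 / t)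
      ≤ ∑' m : ℤ, ⨆ M, VM t G m M x := by
  have ht0 : 0 < t := by linarith
  calc _ ≤ (∑' k, (∑' m : ℤ, ‖∑ i ∈ Finset.Ioc (N k) (N (k + 1)), DD (i + m) (G i) x‖ₑ) ^ t)
            ^ (1 / t) := by
        refine ENNReal.rpow_le_rpow (ENNReal.tsum_le_tsum fun k => ?_) (by positivity)
        exact ENNReal.rpow_le_rpow (enorm_sum_le_tsum _ G f x hG hB) ht0.le
    _ ≤ ∑' m : ℤ, (∑' k, ‖∑ i ∈ Finset.Ioc (N k) (N (k + 1)), DD (i + m) (G i) x‖ₑ ^ t)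
            ^ (1 / t) := minkowski_lt _ ht
    _ ≤ _ := ENNReal.tsum_le_tsum fun m => jump_le_wnd ht _ N hN

/-- the `L^p` bound for one piece -/
lemma VM_bound {p r t s : ℝ} (hA : Adm r t) (hs : 1 < s) (hsr : s < r) (hsp : s < p) :
    ∃ C : ℝ≥0, ∀ (f : ℤ → ℝ → ℂ) (G : ℤ → ℝ → ℂ) (κ : ℝ≥0∞) (m : ℤ), κ ≠ ∞ →
      (∀ i, Measurable (f i)) →
      (∀ i x, ‖DD (i + m) (G i) x‖ₑ ≤
        κ * (AA (i + min m 0) (fun y => ‖f i y‖ₑ ^ s) x) ^ (1 / s)) →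
      (∫⁻ x, (⨆ M, VM t G m M x) ^ p) ^ (1 / p)
        ≤ C * κ * (∫⁻ x, ((∑' i : ℤ, ‖f i x‖ₑ ^ r) ^ (1 / r)) ^ p) ^ (1 / p) := by
  have hs0 : 0 < s := by linarith
  have hr0 : 0 < r := by linarith
  have hp0 : 0 < p := by linarith
  obtain ⟨C1, hC1⟩ := good_lambda hA hp0
  obtain ⟨C2, hC2⟩ := propD (ρ := r / s) (q := p / s) ((one_lt_div hs0).2 hsr)
    ((one_lt_div hs0).2 hsp)
  have hpr : p / s / (r / s) = p / r := by field_simp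
  refine ⟨(C1 * C2) ^ (1 / p), fun f G κ m hκ hf hD => ?_⟩
  set R := ∫⁻ x, ((∑' i : ℤ, ‖f i x‖ₑ ^ r) ^ (1 / r)) ^ p with hR
  have key : ∀ M, ∫⁻ x, (VM t G m M x) ^ p ≤ C1 * C2 * κ ^ p * R := by
    intro M
    have h1 := hC1 _ _ _ (Dy_dq (m - M)) (wnd_Df G m M) (2 * M)
      (fun i hi x => by unfold wnd; rw [if_neg (by omega)])
    refine h1.trans ?_
    have h2 : ∀ x, ((∑ n ∈ Finset.range (2 * M),
        ‖wnd (fun i => DD (i + m) (G i) x) M n‖ₑ ^ r) ^ (1 / r)) ^ p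
        ≤ κ ^ p * (∑ i ∈ Finset.Ico (-(M : ℤ)) M,
          (AA (i + min m 0) (fun y => ‖f i y‖ₑ ^ s) x) ^ (r / s)) ^ (p / s / (r / s)) := by
      intro x
      have e1 : ∑ n ∈ Finset.range (2 * M), ‖wnd (fun i => DD (i + m) (G i) x) M n‖ₑ ^ r
          = ∑ i ∈ Finset.Ico (-(M : ℤ)) M, ‖DD (i + m) (G i) x‖ₑ ^ r := by
        refine Finset.sum_bij (fun i _ => (i : ℤ) - M) ?_ ?_ ?_ ?_
        · intro i hi; simp only [Finset.mem_range, Finset.mem_Ico] at hi ⊢; omega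
        · intro i hi j hj h; simpa using h
        · intro j hj; simp only [Finset.mem_Ico] at hj
          exact ⟨(j + M).toNat, by simp only [Finset.mem_range]; omega, by omega⟩
        · intro i hi; simp only [Finset.mem_range] at hi
          unfold wnd; rw [if_pos hi]
      have e2 : ∑ i ∈ Finset.Ico (-(M : ℤ)) M, ‖DD (i + m) (G i) x‖ₑ ^ r
          ≤ κ ^ r * ∑ i ∈ Finset.Ico (-(M : ℤ)) M,
            (AA (i + min m 0) (fun y => ‖f i y‖ₑ ^ s) x) ^ (r / s) := by
        rw [Finset.mul_sum]
        refine Finset.sum_le_sum fun i _ => ?_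
        refine (ENNReal.rpow_le_rpow (hD i x) hr0.le).trans (le_of_eq ?_)
        rw [ENNReal.mul_rpow_of_nonneg _ _ hr0.le, ← ENNReal.rpow_mul]
        congr 2; field_simp
      rw [e1, hpr, ← ENNReal.rpow_mul]
      refine (ENNReal.rpow_le_rpow e2 (by positivity)).trans (le_of_eq ?_)
      rw [ENNReal.mul_rpow_of_nonneg _ _ (by positivity), ← ENNReal.rpow_mul]
      congr 2
      · field_simp
      · field_simp
    have h3 := hC2 (Finset.Ico (-(M : ℤ)) M) (fun i => i + min m 0)
      (fun i y => ‖f i y‖ₑ ^ s) (fun i => (hf i).enorm.pow_const s)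
    have h4 : ∫⁻ x, (∑ i ∈ Finset.Ico (-(M : ℤ)) M, (‖f i x‖ₑ ^ s) ^ (r / s))
        ^ (p / s / (r / s)) ≤ R := by
      refine lintegral_mono fun x => ?_
      rw [hpr, ← ENNReal.rpow_mul, one_div_mul_eq_div]
      refine ENNReal.rpow_le_rpow ?_ (by positivity)
      refine le_trans (le_of_eq ?_) (ENNReal.sum_le_tsum (Finset.Ico (-(M : ℤ)) M))
      refine Finset.sum_congr rfl fun i _ => ?_
      rw [← ENNReal.rpow_mul]; congr 1; field_simp
    calc _ ≤ (C1 : ℝ≥0∞) * ∫⁻ x, κ ^ p * (∑ i ∈ Finset.Ico (-(M : ℤ)) M,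
          (AA (i + min m 0) (fun y => ‖f i y‖ₑ ^ s) x) ^ (r / s)) ^ (p / s / (r / s)) :=
          mul_le_mul' le_rfl (lintegral_mono h2)
      _ = C1 * (κ ^ p * ∫⁻ x, (∑ i ∈ Finset.Ico (-(M : ℤ)) M,
          (AA (i + min m 0) (fun y => ‖f i y‖ₑ ^ s) x) ^ (r / s)) ^ (p / s / (r / s))) := by
          rw [lintegral_const_mul' _ _ (ENNReal.rpow_ne_top_of_nonneg hp0.le hκ)]
      _ ≤ C1 * (κ ^ p * (C2 * R)) :=
          mul_le_mul' le_rfl (mul_le_mul' le_rfl (h3.trans (mul_le_mul' le_rfl h4)))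
      _ = _ := by ring
  have h5 : ∫⁻ x, (⨆ M, VM t G m M x) ^ p ≤ C1 * C2 * κ ^ p * R := by
    simp_rw [iSup_rpow _ hp0]
    rw [lintegral_iSup (fun M => (VM_measurable t G m M).pow_const p)
      (fun M M' h x => ENNReal.rpow_le_rpow (VM_mono t G m h x) hp0.le)]
    exact iSup_le key
  refine (ENNReal.rpow_le_rpow h5 (by positivity : 0 ≤ 1 / p)).trans (le_of_eq ?_)
  rw [ENNReal.mul_rpow_of_nonneg _ _ (by positivity), ENNReal.mul_rpow_of_nonneg _ _ (by positivity),
    ← ENNReal.rpow_mul κ, mul_one_div_cancel hp0.ne', ENNReal.rpow_one,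
    ENNReal.coe_rpow_of_nonneg _ (by positivity)]
  push_cast
  rfl

lemma main_adm {p r t : ℝ} (Nb : ℝ) (hp : 1 < p) (hA : Adm r t) (ht : 1 ≤ t) :
    ∃ C : ℝ≥0, ∀ (f : ℤ → SchwartzMap ℝ ℂ),
      (∀ i : ℤ, ∀ ξ : ℝ, 𝓕 (⇑(f i)) ξ ≠ 0 →
        (2 : ℝ) ^ ((i : ℝ) - Nb) < |ξ| ∧ |ξ| < (2 : ℝ) ^ ((i : ℝ) + Nb)) →
      ∀ (Nk : ℕ → ℝ → ℤ), (∀ k x, Nk k x ≤ Nk (k + 1) x) →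
      (∫⁻ x, ((∑' k : ℕ, ‖∑ i ∈ Finset.Ioc (Nk k x) (Nk (k + 1) x), f i x‖ₑ ^ t) ^ (1 / t)) ^ p)
          ^ (1 / p)
        ≤ C * (∫⁻ x, ((∑' i : ℤ, ‖f i x‖ₑ ^ r) ^ (1 / r)) ^ p) ^ (1 / p) := by
  have hr : 1 < r := hA.1
  have hp0 : 0 < p := by linarith
  obtain ⟨s, hs, hs2⟩ := exists_between (lt_min hp hr)
  have hsp := hs2.trans_le (min_le_left _ _)
  have hsr := hs2.trans_le (min_le_right _ _)
  obtain ⟨C, hC⟩ := VM_bound hA hs hsr hsp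
  obtain ⟨K, hK⟩ := DD_main Nb hs
  have hδ : 0 < 1 - 1 / s := by
    have := (div_lt_one (by linarith : 0 < s)).2 hs; linarith
  have hΓ := gam_sum hδ
  refine ⟨C * K * (∑' m : ℤ, gam (1 - 1 / s) m).toNNReal, fun f hf Nk hNk => ?_⟩
  choose G hG hB hD using fun i => hK i (f i) (hf i)
  set R := (∫⁻ x, ((∑' i : ℤ, ‖f i x‖ₑ ^ r) ^ (1 / r)) ^ p) ^ (1 / p) with hR
  have hm : ∀ m : ℤ, Measurable (fun x => ⨆ M, VM t G m M x) :=
    fun m => Measurable.iSup (fun M => VM_measurable t G m M)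
  calc _ ≤ (∫⁻ x, (∑' m : ℤ, ⨆ M, VM t G m M x) ^ p) ^ (1 / p) := by
        refine ENNReal.rpow_le_rpow (lintegral_mono fun x => ?_) (by positivity)
        refine ENNReal.rpow_le_rpow ?_ hp0.le
        exact pointwise ht (fun i => f i) G (fun k => Nk k x)
          (monotone_nat_of_le_succ fun k => hNk k x) x (fun i => hG i x) hB
    _ ≤ ∑' m : ℤ, (∫⁻ x, (⨆ M, VM t G m M x) ^ p) ^ (1 / p) := minkowski_tsum hm hp.le
    _ ≤ ∑' m : ℤ, (C * K * R) * gam (1 - 1 / s) m := by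
        refine ENNReal.tsum_le_tsum fun m => ?_
        refine (hC (fun i => f i) G (K * gam (1 - 1 / s) m) m
          (ENNReal.mul_ne_top ENNReal.coe_ne_top ENNReal.ofReal_ne_top)
          (fun i => (f i).continuous.measurable) (fun i x => hD i m x)).trans (le_of_eq ?_)
        ring
    _ = _ := by
        rw [ENNReal.tsum_mul_left]
        push_cast
        rw [ENNReal.coe_toNNReal hΓ]
        ring

lemma triv_case {t : ℝ} (ht : 1 ≤ t) (a : ℤ → ℂ) (N : ℕ → ℤ) (hN : Monotone N) :
    (∑' k, ‖∑ i ∈ Finset.Ioc (N k) (N (k + 1)), a i‖ₑ ^ t) ^ (1 / t) ≤ ∑' i, ‖a i‖ₑ := by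
  refine (l1_le _ ht).trans ?_
  rw [ENNReal.tsum_eq_iSup_nat]
  refine iSup_le fun K => ?_
  have h : ∑ k ∈ Finset.range K, ∑ i ∈ Finset.Ioc (N k) (N (k + 1)), ‖a i‖ₑ
      = ∑ i ∈ Finset.Ioc (N 0) (N K), ‖a i‖ₑ := by
    induction K with
    | zero => simp
    | succ K ih =>
      rw [Finset.sum_range_succ, ih, ← Finset.sum_union]
      · congr 1
        rw [Finset.Ioc_union_Ioc_eq_Ioc (hN (Nat.zero_le _)) (hN (Nat.le_succ _))]
      · rw [Finset.disjoint_left]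
        intro i h1 h2
        simp only [Finset.mem_Ioc] at h1 h2; omega
  refine (Finset.sum_le_sum fun k _ => enorm_sum_le _ _).trans ?_
  rw [h]
  exact ENNReal.sum_le_tsum _

end LPX

/-- Lépingle / Pisier–Xu variational inequality, continuous case. -/
theorem continuous_lepingle_pisier_xu
    (p r t Nb : ℝ) (hp : 1 < p) (hr1 : 1 ≤ r) (hr2 : r ≤ 2)
    (hrt : r ≤ t) (hcase : r < 2 ∨ r < t) (hNb : 0 < Nb) :
    ∃ C : ℝ≥0, 0 < C ∧
      ∀ (f : ℤ → SchwartzMap ℝ ℂ), IsContLPFamily Nb f →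
      ∀ (Nk : ℕ → ℝ → ℤ), IsJumpCollection Nk →
      (∫⁻ x : ℝ,
          ((∑' k : ℕ, (ENNReal.ofReal (norm
              (∑ i ∈ Finset.Ioc (Nk k x) (Nk (k + 1) x), f i x))) ^ t) ^ (1 / t)) ^ p) ^ (1 / p)
        ≤ (C : ℝ≥0∞) *
      (∫⁻ x : ℝ,
          ((∑' i : ℤ, (ENNReal.ofReal (norm (f i x))) ^ r) ^ (1 / r)) ^ p) ^ (1 / p) := by
  have hmono : ∀ (Nk : ℕ → ℝ → ℤ), IsJumpCollection Nk → ∀ x, Monotone (fun k => Nk k x) :=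
    fun Nk hNk x => monotone_nat_of_le_succ fun k => hNk.2 k x
  have hp0 : 0 < p := by linarith
  have ht1 : 1 ≤ t := hr1.trans hrt
  simp only [ofReal_norm]
  rcases hr1.eq_or_lt with h1 | h1
  · subst h1
    refine ⟨1, one_pos, fun f _ Nk hNk => ?_⟩
    rw [ENNReal.coe_one, one_mul]
    refine ENNReal.rpow_le_rpow (lintegral_mono fun x => ?_) (by positivity)
    refine ENNReal.rpow_le_rpow ?_ hp0.le
    simpa using LPX.triv_case ht1 (fun i => f i x) (fun k => Nk k x) (hmono Nk hNk x)
  · obtain ⟨t', hA, ht', ht't⟩ : ∃ t', LPX.Adm r t' ∧ 1 ≤ t' ∧ t' ≤ t := by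
      rcases lt_or_eq_of_le hr2 with h2 | h2
      · exact ⟨r, ⟨h1, Or.inl ⟨h2, rfl⟩⟩, hr1, hrt⟩
      · refine ⟨t, ⟨h1, Or.inr ⟨h2, ?_⟩⟩, ht1, le_rfl⟩
        rcases hcase with h | h <;> linarith
    obtain ⟨C, hC⟩ := LPX.main_adm Nb hp hA ht'
    refine ⟨C + 1, by positivity, fun f hf Nk hNk => ?_⟩
    refine le_trans ?_ ((hC f hf Nk hNk.2).trans (mul_le_mul' ?_ le_rfl))
    · refine ENNReal.rpow_le_rpow (lintegral_mono fun x => ?_) (by positivity)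
      exact ENNReal.rpow_le_rpow (LPX.lp_mono _ (by linarith) ht't) hp0.le
    · push_cast
      exact le_self_add

end
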